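/- Let n ≥ 3. There exists ε > 0 with the following property: if K ⊂ ℝⁿ is a convex body with support function h_K ∈ C²(S^{n−1}) such that Π²K = cK for some constant c > 0, and there exists φ ∈ GL_n(ℝ) with ‖h_{φK} − 1‖_{C²} ≤ ε, then K is an ellipsoid centered at the origin. -/

import Mathlib

/-!
Write `n = m + 1` and describe convex bodies by their support functions `h`, that is, by sublinear
functions (`Subl`), with `Wb h` the body of `h`. Up to a scalar, the projection body operator
becomes `Pop h w = (vol (Wb h + [0, w]) - vol (Wb h)) / ω_m`. It fixes the Euclidean norm and is
equivariant under linear maps (`Pop_comp`), so the hypothesis `Π²K = cK` becomes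
`Pop (Pop h) = c' h` and is inherited by every `h ∘ A`.

Semiconvexity. The `C²` hypothesis implies that `h - (1 - ε)‖·‖` is sublinear (`C2_close`). This
property, unlike `C²` bounds, is easily seen to survive `Pop`: if `h - ρ‖·‖` is sublinear, so is
`Pop h - ρ^m ‖·‖` (`Pop_semiconvex`). For the proof the ball is approximated by zonotopes, for
which the claim is an induction over dimension.

Linearization. If `h - (1 - η)‖·‖` is sublinear and `|h - 1| ≤ δ ≤ η` on the sphere, the body of `h`
and its projections are star-shaped with radial function `h + O(ηδ)`, hence
`Pop h = 1 + m R (h - 1) + O(ηδ)` on the sphere, where `R` is the spherical Radon transform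
(`Pop_linear`), and `Pop (Pop h) = 1 + m² R² (h - 1) + O(ηδ)` (`Pop_Pop_linear`).

Spectrum. `m R` is symmetric and triangular on the even polynomials filtered by degree, and its
diagonal entries in degree at least four have absolute value at most `q = m · avg θ₁⁴ < 1`. On
quadratic forms `(m R)²` is the identity modulo constants. Moreover `R²` has an integrable kernel,
so that `L²` estimates can be upgraded to sup-norm estimates (`kernel_bound`). Therefore an even
`φ` with `φ - m² R² φ = const + O(e)` is within `O(e)` of a quadratic form
(`spectral_stability`).

Conclusion. For a solution `h`, the function `h - 1` is within `O(ηδ)` of a quadratic form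
`⟪u, M u⟫` on the sphere, and the substitution `x ↦ x - M x` at least halves the sup-distance `δ`
to the norm (`improve`). Choosing `A` to minimize `sup |h ∘ A - 1|` over a compact set of linear
maps forces this minimum to be zero (`rigidity`), so `h ∘ A` is the norm and `K` is an ellipsoid.
-/

open MeasureTheory Metric Set Filter
open scoped RealInnerProductSpace Topology Pointwise NNReal ENNReal

noncomputable section

/-- `Euc n` is Euclidean space `ℝⁿ`. -/
abbrev Euc (n : ℕ) : Type := EuclideanSpace ℝ (Fin n)

/-- `uball k` is `ω_k`, the volume of the unit ball of `ℝ^k`. -/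
def uball (k : ℕ) : ℝ := (volume (closedBall (0 : Euc k) 1)).toReal

/-- The spherical Lebesgue measure on `S^{n-1} ⊂ ℝⁿ`:
the `(n-1)`-dimensional Hausdorff measure. -/
def sphMeas (n : ℕ) : Measure (Euc n) := Measure.hausdorffMeasure ((n : ℝ) - 1)

/-- The support function of a set `K ⊆ ℝⁿ`. -/
def suppFn {n : ℕ} (K : Set (Euc n)) (x : Euc n) : ℝ :=
  sSup ((fun y => ⟪y, x⟫) '' K)

/-- `K` is a convex body: compact, convex, with nonempty interior. -/
def IsConvexBody {n : ℕ} (K : Set (Euc n)) : Prop :=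
  IsCompact K ∧ Convex ℝ K ∧ (interior K).Nonempty

/-- Lebesgue volume of a subset of `ℝⁿ`, as a real number. -/
def vol {n : ℕ} (K : Set (Euc n)) : ℝ := (volume K).toReal

/-- `projSupp K u` is the `(n-1)`-dimensional measure of the orthogonal projection of
`K` onto the hyperplane `u^⊥` (for a unit vector `u`); this is the support function
of the projection body `ΠK`. -/
def projSupp {n : ℕ} (K : Set (Euc n)) (u : Euc n) : ℝ :=
  (Measure.hausdorffMeasure ((n : ℝ) - 1)
    ((fun x : Euc n => x - ⟪x, u⟫ • u) '' K)).toReal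

/-- The projection body `ΠK` of `K`: the convex body whose support function is
`u ↦ V_{n-1}(K | u^⊥)`. -/
def projBody {n : ℕ} (K : Set (Euc n)) : Set (Euc n) :=
  {x | ∀ u ∈ sphere (0 : Euc n) 1, ⟪x, u⟫ ≤ projSupp K u}

/-- The convex body determined by a function `f` on the sphere (the Wulff shape /
intersection of halfspaces); if `f` is a support function this body has support function `f`. -/
def bodyOf {n : ℕ} (f : Euc n → ℝ) : Set (Euc n) :=
  {x | ∀ u ∈ sphere (0 : Euc n) 1, ⟪x, u⟫ ≤ f u}

/-- The 1-homogeneous extension of a function on the unit sphere. -/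
def homExt {n : ℕ} (f : Euc n → ℝ) (x : Euc n) : ℝ := ‖x‖ * f (‖x‖⁻¹ • x)

/-- The Euclidean Laplacian of `F : ℝⁿ → ℝ`. -/
def lapl {n : ℕ} (F : Euc n → ℝ) (x : Euc n) : ℝ :=
  ∑ i : Fin n, fderiv ℝ (fun y => fderiv ℝ F y (EuclideanSpace.single i 1)) x
    (EuclideanSpace.single i 1)

/-- The operator `□f = Δ_{S^{n-1}} f + (n-1) f` on functions on the sphere, realized as the
Euclidean Laplacian of the 1-homogeneous extension (restricted to the sphere). -/
def boxOp {n : ℕ} (f : Euc n → ℝ) (x : Euc n) : ℝ := lapl (homExt f) x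

/-- The cosine transform `Cf(u) = ∫_{S^{n-1}} |u·x| f(x) dx`. -/
def cosT {n : ℕ} (f : Euc n → ℝ) (u : Euc n) : ℝ :=
  ∫ x in sphere (0 : Euc n) 1, |⟪u, x⟫| * f x ∂(sphMeas n)

/-- The spherical Radon (Funk) transform
`Rf(u) = (1/((n-1)ω_{n-1})) ∫_{S^{n-1} ∩ u^⊥} f`, normalized so that `R1 = 1`. -/
def radon {n : ℕ} (f : Euc n → ℝ) (u : Euc n) : ℝ :=
  (1 / (((n : ℝ) - 1) * uball (n - 1))) *
    ∫ x in sphere (0 : Euc n) 1 ∩ {x : Euc n | ⟪x, u⟫ = 0}, f x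
      ∂(Measure.hausdorffMeasure ((n : ℝ) - 2))

/-- The `C²(S^{n-1})` norm of a function on the sphere (computed through its
1-homogeneous extension, which only depends on the values of `f` on the sphere). -/
def C2Norm {n : ℕ} (f : Euc n → ℝ) : ℝ :=
  ⨆ x : sphere (0 : Euc n) 1,
    (|homExt f (x : Euc n)| + ‖fderiv ℝ (homExt f) (x : Euc n)‖ +
      ‖iteratedFDeriv ℝ 2 (homExt f) (x : Euc n)‖)

/-- The sup (`C`) norm of a function on the sphere. -/
def CNorm {n : ℕ} (f : Euc n → ℝ) : ℝ := ⨆ x : sphere (0 : Euc n) 1, |f (x : Euc n)|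

/-- `f` is of class `C²` as a function on the sphere: its 1-homogeneous extension is
`C²` away from the origin. -/
def C2Sph {n : ℕ} (f : Euc n → ℝ) : Prop :=
  ContDiffOn ℝ 2 (homExt f) {(0 : Euc n)}ᶜ

/-- `f` is even on the sphere. -/
def EvenSph {n : ℕ} (f : Euc n → ℝ) : Prop := ∀ x ∈ sphere (0 : Euc n) 1, f (-x) = f x

/-- `f` is the curvature function of `K`: for every convex body `L`, the first variation of
volume satisfies `nV₁(K,L) = ∫_{S^{n-1}} h_L f dx`, i.e. the surface area measure of `K`
has density `f` with respect to spherical Lebesgue measure. -/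
def HasCurvFn {n : ℕ} (K : Set (Euc n)) (f : Euc n → ℝ) : Prop :=
  ∀ L : Set (Euc n), IsConvexBody L →
    Tendsto (fun t : ℝ => (vol (K + t • L) - vol K) / t) (𝓝[>] (0 : ℝ))
      (𝓝 (∫ x in sphere (0 : Euc n) 1, suppFn L x * f x ∂(sphMeas n)))

/-- `K` is a convex body of class `C²₊`: its support function is `C²` and it has a positive
continuous curvature function. -/
def IsC2Plus {n : ℕ} (K : Set (Euc n)) : Prop :=
  IsConvexBody K ∧ C2Sph (suppFn K) ∧
    ∃ f : Euc n → ℝ, ContinuousOn f (sphere (0 : Euc n) 1) ∧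
      (∀ x ∈ sphere (0 : Euc n) 1, 0 < f x) ∧ HasCurvFn K f

/-- `f` is a spherical harmonic of degree `k` on `S^{n-1}`: the restriction to the sphere of a
harmonic polynomial that is homogeneous of degree `k` (equivalently, an eigenfunction of the
Laplace–Beltrami operator with eigenvalue `-k(k+n-2)`; the zero function is allowed). -/
def IsSphHarm {n : ℕ} (k : ℕ) (f : Euc n → ℝ) : Prop :=
  ∃ P : MvPolynomial (Fin n) ℝ, P.IsHomogeneous k ∧
    (∑ i : Fin n, MvPolynomial.pderiv i (MvPolynomial.pderiv i P)) = 0 ∧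
    ∀ x ∈ sphere (0 : Euc n) 1, f x = MvPolynomial.eval (fun i => x i) P

/-- `π_k f = 0`: `f` is `L²(S^{n-1})`-orthogonal to all spherical harmonics of degree `k`. -/
def ProjZero {n : ℕ} (k : ℕ) (f : Euc n → ℝ) : Prop :=
  ∀ Y : Euc n → ℝ, IsSphHarm k Y →
    ∫ x in sphere (0 : Euc n) 1, f x * Y x ∂(sphMeas n) = 0

/-- The multipliers `v_{k,n}` of the spherical Radon transform:
`v_{k,n} = (1·3⋯(k-1)) / ((n-1)(n+1)⋯(n+k-3))` for even `k`, `v_{0,n} = 1`, and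
`v_{k,n} = 0` for odd `k`. -/
def vkn (n k : ℕ) : ℝ :=
  if k % 2 = 0 then ∏ i ∈ Finset.range (k / 2), (2 * (i : ℝ) + 1) / ((n : ℝ) + 2 * i - 1)
  else 0

/-- `D` is the derivative at `t = 0`, in the `C²(S^{n-1})`-norm, of a curve `t ↦ F t` of
functions on the sphere. -/
def HasC2DerivAt {n : ℕ} (F : ℝ → Euc n → ℝ) (D : Euc n → ℝ) : Prop :=
  Tendsto (fun t : ℝ => C2Norm (fun x => (F t x - F 0 x) / t - D x)) (𝓝[≠] (0 : ℝ)) (𝓝 0)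

/-! ### Hyperplane coordinates and projections -/

theorem exists_frame {m : ℕ} (u : Euc (m + 1)) (hu : ‖u‖ = 1) :
    ∃ F : WithLp 2 (ℝ × Euc m) ≃ₗᵢ[ℝ] Euc (m + 1), F (WithLp.toLp 2 (1, 0)) = u := by
  have hd : Module.finrank ℝ (WithLp 2 (ℝ × Euc m)) = m + 1 := by
    rw [(WithLp.linearEquiv 2 ℝ (ℝ × Euc m)).finrank_eq]
    simp [Module.finrank_prod, add_comm]
  let F0 : WithLp 2 (ℝ × Euc m) ≃ₗᵢ[ℝ] Euc (m + 1) :=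
    ((stdOrthonormalBasis ℝ (WithLp 2 (ℝ × Euc m))).reindex (finCongr hd)).repr
  have h1 : ‖F0 (WithLp.toLp 2 (1, 0))‖ = ‖u‖ := by
    rw [F0.norm_map, hu, WithLp.prod_norm_eq_of_L2]
    simp
  refine ⟨F0.trans (Submodule.reflection (ℝ ∙ (F0 (WithLp.toLp 2 (1, 0)) - u))ᗮ), ?_⟩
  simp only [LinearIsometryEquiv.trans_apply]
  exact Submodule.reflection_sub h1

/-- An isometry `ℝ × ℝᵐ → ℝᵐ⁺¹` sending `(1, 0)` to `u`, chosen arbitrarily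
(meaningful only for unit vectors `u`). -/
def frame {m : ℕ} (u : Euc (m + 1)) : WithLp 2 (ℝ × Euc m) ≃ₗᵢ[ℝ] Euc (m + 1) :=
  if hu : ‖u‖ = 1 then (exists_frame u hu).choose
  else (exists_frame (EuclideanSpace.single 0 1) (by simp)).choose

theorem frame_one {m : ℕ} {u : Euc (m + 1)} (hu : ‖u‖ = 1) :
    frame u (WithLp.toLp 2 (1, 0)) = u := by
  simp only [frame, hu, dif_pos]
  exact (exists_frame u hu).choose_spec

/-- Isometric embedding of `ℝᵐ` onto the hyperplane `u^⊥`. -/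
def emb {m : ℕ} (u : Euc (m + 1)) : Euc m →ₗ[ℝ] Euc (m + 1) where
  toFun y := frame u (WithLp.toLp 2 (0, y))
  map_add' x y := by
    have h : ((0 : ℝ), x + y) = (0, x) + (0, y) := by simp
    rw [← map_add, h, WithLp.toLp_add]
  map_smul' c x := by
    have h : ((0 : ℝ), c • x) = c • (0, x) := by simp
    rw [RingHom.id_apply, ← map_smul, h, WithLp.toLp_smul]

/-- Orthogonal projection onto `u^⊥`, in the coordinates of `emb u`. -/
def pr {m : ℕ} (u : Euc (m + 1)) : Euc (m + 1) →ₗ[ℝ] Euc m where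
  toFun x := ((frame u).symm x).snd
  map_add' x y := by simp
  map_smul' c x := by simp

theorem frame_apply {m : ℕ} {u : Euc (m + 1)} (hu : ‖u‖ = 1) (s : ℝ) (y : Euc m) :
    frame u (WithLp.toLp 2 (s, y)) = s • u + emb u y := by
  have h : (s • u : Euc (m + 1)) = frame u (s • WithLp.toLp 2 (1, 0)) := by
    rw [map_smul, frame_one hu]
  rw [h]
  show _ = _ + frame u (WithLp.toLp 2 (0, y))
  rw [← map_add, ← WithLp.toLp_smul, ← WithLp.toLp_add]
  simp

theorem norm_emb {m : ℕ} (u : Euc (m + 1)) (y : Euc m) : ‖emb u y‖ = ‖y‖ := by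
  show ‖frame u (WithLp.toLp 2 (0, y))‖ = _
  rw [LinearIsometryEquiv.norm_map, WithLp.prod_norm_eq_of_L2]
  simp

theorem inner_emb_emb {m : ℕ} (u : Euc (m + 1)) (y z : Euc m) :
    ⟪emb u y, emb u z⟫ = ⟪y, z⟫ := by
  show ⟪frame u (WithLp.toLp 2 (0, y)), frame u (WithLp.toLp 2 (0, z))⟫ = _
  rw [LinearIsometryEquiv.inner_map_map, WithLp.prod_inner_apply]
  simp

theorem inner_emb_left {m : ℕ} {u : Euc (m + 1)} (hu : ‖u‖ = 1) (y : Euc m) :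
    ⟪u, emb u y⟫ = 0 := by
  have : ⟪frame u (WithLp.toLp 2 (1, 0)), frame u (WithLp.toLp 2 (0, y))⟫ = 0 := by
    rw [LinearIsometryEquiv.inner_map_map, WithLp.prod_inner_apply]
    simp
  rwa [frame_one hu] at this

theorem inner_emb_right {m : ℕ} {u : Euc (m + 1)} (hu : ‖u‖ = 1) (y : Euc m) :
    ⟪emb u y, u⟫ = 0 := by
  rw [real_inner_comm, inner_emb_left hu]

theorem pr_emb {m : ℕ} (u : Euc (m + 1)) (y : Euc m) : pr u (emb u y) = y := by
  show ((frame u).symm (frame u (WithLp.toLp 2 (0, y)))).snd = y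
  simp

theorem pr_self {m : ℕ} {u : Euc (m + 1)} (hu : ‖u‖ = 1) : pr u u = 0 := by
  show ((frame u).symm u).snd = 0
  have : (frame u).symm u = WithLp.toLp 2 (1, 0) := by
    rw [LinearIsometryEquiv.symm_apply_eq, frame_one hu]
  rw [this]
  rfl

theorem decomp {m : ℕ} {u : Euc (m + 1)} (hu : ‖u‖ = 1) (x : Euc (m + 1)) :
    x = ⟪x, u⟫ • u + emb u (pr u x) := by
  have h1 : x = ((frame u).symm x).fst • u + emb u (pr u x) := by
    rw [← frame_apply hu]
    show x = frame u ((frame u).symm x)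
    simp
  have h2 : ⟪x, u⟫ = ((frame u).symm x).fst := by
    conv_lhs => rw [h1]
    rw [inner_add_left, inner_emb_right hu, inner_smul_left, real_inner_self_eq_norm_sq, hu]
    simp
  rw [h2]; exact h1

theorem emb_pr {m : ℕ} {u : Euc (m + 1)} (hu : ‖u‖ = 1) (x : Euc (m + 1)) :
    emb u (pr u x) = x - ⟪x, u⟫ • u := by
  exact eq_sub_of_add_eq' (decomp hu x).symm

theorem inner_emb_pr {m : ℕ} {u : Euc (m + 1)} (hu : ‖u‖ = 1) (x : Euc (m + 1)) (y : Euc m) :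
    ⟪x, emb u y⟫ = ⟪pr u x, y⟫ := by
  conv_lhs => rw [decomp hu x]
  rw [inner_add_left, inner_smul_left, inner_emb_left hu, inner_emb_emb]; simp

theorem norm_sq_decomp {m : ℕ} {u : Euc (m + 1)} (hu : ‖u‖ = 1) (x : Euc (m + 1)) :
    ‖x‖ ^ 2 = ⟪x, u⟫ ^ 2 + ‖pr u x‖ ^ 2 := by
  have := norm_add_sq_real (⟪x, u⟫ • u) (emb u (pr u x))
  rw [← decomp hu x, inner_smul_left, inner_emb_left hu, norm_smul, hu, norm_emb] at this
  simpa using this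

theorem norm_pr_le {m : ℕ} {u : Euc (m + 1)} (hu : ‖u‖ = 1) (x : Euc (m + 1)) :
    ‖pr u x‖ ≤ ‖x‖ := by
  have := norm_sq_decomp hu x
  exact abs_le_of_sq_le_sq' (by nlinarith [sq_nonneg ⟪x, u⟫]) (norm_nonneg _) |>.2

theorem continuous_pr {m : ℕ} (u : Euc (m + 1)) : Continuous (pr u) :=
  (pr u).continuous_of_finiteDimensional

theorem continuous_emb {m : ℕ} (u : Euc (m + 1)) : Continuous (emb u) :=
  (emb u).continuous_of_finiteDimensional

theorem isometry_emb {m : ℕ} (u : Euc (m + 1)) : Isometry (emb u) :=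
  AddMonoidHomClass.isometry_of_norm _ (norm_emb u)

theorem mp_frame {m : ℕ} {u : Euc (m + 1)} (hu : ‖u‖ = 1) :
    MeasurePreserving (fun p : ℝ × Euc m => p.1 • u + emb u p.2)
      ((volume : Measure ℝ).prod (volume : Measure (Euc m))) volume := by
  have h := (frame u).measurePreserving.comp (WithLp.volume_preserving_toLp ℝ (Euc m))
  have h2 : (fun p : ℝ × Euc m => p.1 • u + emb u p.2) = frame u ∘ WithLp.toLp 2 :=
    funext fun p => (frame_apply hu p.1 p.2).symm
  rw [h2]
  exact h

theorem meas_frame {m : ℕ} {u : Euc (m + 1)} (hu : ‖u‖ = 1) {S : Set (Euc (m + 1))}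
    (hS : MeasurableSet S) :
    volume S = ∫⁻ y : Euc m, volume {s : ℝ | s • u + emb u y ∈ S} := by
  rw [← (mp_frame hu).measure_preimage hS.nullMeasurableSet,
    Measure.prod_apply_symm ((mp_frame hu).measurable hS)]
  rfl

/-- Ratio of the Hausdorff measure `μH[m]` to Lebesgue measure on `ℝᵐ`. -/
def hcon (m : ℕ) : ℝ := ((μH[(m : ℝ)] : Measure (Euc m)).addHaarScalarFactor volume : ℝ≥0)

theorem hcon_pos (m : ℕ) : 0 < hcon m := by
  unfold hcon
  have : (μH[(m : ℝ)] : Measure (Euc m)).IsAddHaarMeasure := by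
    have := MeasureTheory.isAddHaarMeasure_hausdorffMeasure (E := Euc m)
    simpa using this
  have := Measure.addHaarScalarFactor_pos_of_isAddHaarMeasure (μH[(m : ℝ)] : Measure (Euc m)) volume
  exact_mod_cast this

/-- The Hausdorff measure of the projection is a fixed multiple of its volume in hyperplane
coordinates. -/
theorem projSupp_eq {m : ℕ} (K : Set (Euc (m + 1))) {u : Euc (m + 1)} (hu : ‖u‖ = 1) :
    projSupp K u = hcon m * vol (pr u '' K) := by
  have h1 : (fun x : Euc (m + 1) => x - ⟪x, u⟫ • u) '' K = emb u '' (pr u '' K) := by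
    rw [image_image]
    exact image_congr fun x _ => (emb_pr hu x).symm
  have : (μH[(m : ℝ)] : Measure (Euc m)).IsAddHaarMeasure := by
    have := MeasureTheory.isAddHaarMeasure_hausdorffMeasure (E := Euc m)
    simpa using this
  have h2 := Measure.isAddLeftInvariant_eq_smul (μH[(m : ℝ)] : Measure (Euc m)) volume
  have hc : ((m + 1 : ℕ) : ℝ) - 1 = (m : ℝ) := by push_cast; ring
  rw [projSupp, h1, hc, (isometry_emb u).hausdorffMeasure_image (Or.inl (by positivity)), h2]
  rw [Measure.smul_apply, ENNReal.smul_def, smul_eq_mul, ENNReal.toReal_mul]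
  rfl

/-! ### Adding segments and projection volumes -/

/-- The segment from `0` to `w`. -/
def seg {n : ℕ} (w : Euc n) : Set (Euc n) := segment ℝ 0 w

/-- Nonempty compact convex sets. -/
structure CC {n : ℕ} (K : Set (Euc n)) : Prop where
  cpt : IsCompact K
  cvx : Convex ℝ K
  ne : K.Nonempty

theorem mem_seg {n : ℕ} {w x : Euc n} : x ∈ seg w ↔ ∃ θ ∈ Icc (0 : ℝ) 1, θ • w = x := by
  rw [seg, segment_eq_image]; simp

theorem CC.add {n : ℕ} {K L : Set (Euc n)} (hK : CC K) (hL : CC L) : CC (K + L) :=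
  ⟨hK.cpt.add hL.cpt, hK.cvx.add hL.cvx, hK.ne.add hL.ne⟩

theorem CC.seg {n : ℕ} (w : Euc n) : CC (seg w) := by
  refine ⟨?_, convex_segment _ _, ⟨0, left_mem_segment _ _ _⟩⟩
  rw [_root_.seg, segment_eq_image]
  exact isCompact_Icc.image (by fun_prop)

theorem CC.image {n k : ℕ} {K : Set (Euc n)} (hK : CC K) (f : Euc n →ₗ[ℝ] Euc k) :
    CC (f '' K) :=
  ⟨hK.cpt.image f.continuous_of_finiteDimensional, hK.cvx.linear_image f, hK.ne.image f⟩

theorem CC.smul {n : ℕ} {K : Set (Euc n)} (hK : CC K) (a : ℝ) : CC (a • K) :=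
  ⟨hK.cpt.smul a, hK.cvx.smul a, hK.ne.smul_set⟩

theorem CC.singleton {n : ℕ} (x : Euc n) : CC ({x} : Set (Euc n)) :=
  ⟨isCompact_singleton, convex_singleton x, singleton_nonempty x⟩

theorem CC.ball {n : ℕ} (r : ℝ) (hr : 0 ≤ r) : CC (closedBall (0 : Euc n) r) :=
  ⟨isCompact_closedBall _ _, convex_closedBall _ _, ⟨0, by simpa⟩⟩

theorem CC.lt_top {n : ℕ} {K : Set (Euc n)} (hK : CC K) : volume K < ⊤ := hK.cpt.measure_lt_top

theorem vol_mono {n : ℕ} {K L : Set (Euc n)} (h : K ⊆ L) (hL : CC L) : vol K ≤ vol L :=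
  ENNReal.toReal_mono hL.lt_top.ne (measure_mono h)

theorem seg_zero {n : ℕ} : seg (0 : Euc n) = {0} := by simp [seg]

theorem image_seg {n k : ℕ} (f : Euc n →ₗ[ℝ] Euc k) (w : Euc n) : f '' seg w = seg (f w) := by
  ext x
  simp only [mem_image, mem_seg]
  constructor
  · rintro ⟨_, ⟨θ, hθ, rfl⟩, rfl⟩; exact ⟨θ, hθ, by simp⟩
  · rintro ⟨θ, hθ, rfl⟩; exact ⟨_, ⟨θ, hθ, rfl⟩, by simp⟩

theorem seg_neg {n : ℕ} (w : Euc n) : seg (-w) = {-w} + seg w := by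
  ext x
  simp only [singleton_add, mem_image, mem_seg]
  constructor
  · rintro ⟨θ, hθ, rfl⟩
    refine ⟨_, ⟨1 - θ, ⟨by linarith [hθ.2], by linarith [hθ.1]⟩, rfl⟩, ?_⟩
    module
  · rintro ⟨_, ⟨θ, hθ, rfl⟩, rfl⟩
    refine ⟨1 - θ, ⟨by linarith [hθ.2], by linarith [hθ.1]⟩, ?_⟩
    module

theorem vol_translate {n : ℕ} (x : Euc n) (K : Set (Euc n)) : vol ({x} + K) = vol K := by
  simp only [vol, singleton_add]
  have : (fun y => x + y) '' K = (fun y => -x + y) ⁻¹' K := by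
    simp [image_add_left]
  rw [this, measure_preimage_add]

theorem fiber_meas {I : Set ℝ} (hI : IsCompact I) (hc : Convex ℝ I) (hne : I.Nonempty) {t : ℝ}
    (ht : 0 ≤ t) :
    volume {s : ℝ | ∃ θ ∈ Icc (0 : ℝ) 1, s - θ * t ∈ I} = volume I + ENNReal.ofReal t := by
  have h1 : I = Icc (sInf I) (sSup I) :=
    eq_Icc_of_connected_compact ⟨hne, hc.isPreconnected⟩ hI
  have hab : sInf I ≤ sSup I := Real.sInf_le_sSup _ hI.bddBelow hI.bddAbove
  generalize sInf I = a at *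
  generalize sSup I = b at *
  subst h1
  have h2 : {s : ℝ | ∃ θ ∈ Icc (0 : ℝ) 1, s - θ * t ∈ Icc a b} = Icc a (b + t) := by
    ext s
    simp only [mem_ofPred_eq, mem_Icc]
    constructor
    · rintro ⟨θ, ⟨h0, h1⟩, h2, h3⟩
      constructor <;> nlinarith
    · rintro ⟨h2, h3⟩
      rcases le_or_gt s b with h | h
      · exact ⟨0, by simp, by simpa using h2, by simpa using h⟩
      · have htp : 0 < t := by linarith
        refine ⟨(s - b) / t, ⟨by apply div_nonneg <;> linarith, ?_⟩, ?_⟩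
        · rw [div_le_one htp]; linarith
        · rw [div_mul_cancel₀ _ htp.ne']; constructor <;> linarith
  rw [h2, Real.volume_Icc, Real.volume_Icc, ← ENNReal.ofReal_add (by linarith) ht]
  congr 1; ring

/-- The Cavalieri principle for `K + [0, t u]`: each nonempty fiber of `K` in direction `u` is an
interval, and it is lengthened by `t`. -/
theorem volume_add_seg {m : ℕ} {K : Set (Euc (m + 1))} (hK : CC K) {u : Euc (m + 1)}
    (hu : ‖u‖ = 1) {t : ℝ} (ht : 0 ≤ t) :
    volume (K + seg (t • u)) = volume K + ENNReal.ofReal t * volume (pr u '' K) := by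
  have hcL := hK.add (CC.seg (t • u))
  rw [meas_frame hu hcL.cpt.measurableSet, meas_frame hu hK.cpt.measurableSet]
  have hpm : MeasurableSet (pr u '' K) := (hK.image (pr u)).cpt.measurableSet
  rw [← lintegral_indicator_const hpm, ← lintegral_add_right _ (measurable_const.indicator hpm)]
  refine lintegral_congr fun y => ?_
  have hcl : Continuous fun s : ℝ => s • u + emb u y := by fun_prop
  set I : Set ℝ := {s | s • u + emb u y ∈ K} with hI
  have h1 : {s : ℝ | s • u + emb u y ∈ K + seg (t • u)}
      = {s : ℝ | ∃ θ ∈ Icc (0 : ℝ) 1, s - θ * t ∈ I} := by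
    ext s
    simp only [mem_ofPred_eq, Set.mem_add, mem_seg, hI]
    constructor
    · rintro ⟨k, hk, _, ⟨θ, hθ, rfl⟩, h⟩
      refine ⟨θ, hθ, ?_⟩
      convert hk using 1
      rw [← sub_eq_of_eq_add h.symm]
      module
    · rintro ⟨θ, hθ, h⟩
      refine ⟨_, h, _, ⟨θ, hθ, rfl⟩, ?_⟩
      module
  rw [h1]
  by_cases hne : I.Nonempty
  · have hy : y ∈ pr u '' K := by
      obtain ⟨s, hs⟩ := hne
      exact ⟨_, hs, by simp [pr_emb, pr_self hu]⟩
    have hcx : Convex ℝ I := by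
      intro s hs s' hs' a b ha hb hab
      have := hK.cvx hs hs' ha hb hab
      show (a • s + b • s') • u + emb u y ∈ K
      convert this using 1
      have hb' : b = 1 - a := by linarith
      subst hb'
      simp only [smul_eq_mul]
      module
    have hcpt : IsCompact I := by
      refine Metric.isCompact_of_isClosed_isBounded (hK.cpt.isClosed.preimage hcl) ?_
      obtain ⟨R, hR⟩ := hK.cpt.isBounded.exists_norm_le
      refine (Metric.isBounded_iff_subset_closedBall (0 : ℝ)).2 ⟨R, fun s hs => ?_⟩
      have h3 := hR _ hs
      have h4 : s = ⟪s • u + emb u y, u⟫ := by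
        rw [inner_add_left, inner_emb_right hu, inner_smul_left, real_inner_self_eq_norm_sq, hu]
        simp
      rw [mem_closedBall_zero_iff, h4, Real.norm_eq_abs]
      refine (abs_real_inner_le_norm _ _).trans ?_
      rw [hu, mul_one]; exact h3
    rw [fiber_meas hcpt hcx hne ht, indicator_of_mem hy]
  · have hy : y ∉ pr u '' K := by
      rintro ⟨x, hx, rfl⟩
      exact hne ⟨⟪x, u⟫, by rw [hI, mem_ofPred_eq, ← decomp hu]; exact hx⟩
    rw [not_nonempty_iff_eq_empty.1 hne, indicator_of_notMem hy]
    simp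

theorem vol_add_seg {m : ℕ} {K : Set (Euc (m + 1))} (hK : CC K) {u : Euc (m + 1)}
    (hu : ‖u‖ = 1) {t : ℝ} (ht : 0 ≤ t) :
    vol (K + seg (t • u)) = vol K + t * vol (pr u '' K) := by
  rw [vol, volume_add_seg hK hu ht, ENNReal.toReal_add hK.lt_top.ne
    (ENNReal.mul_ne_top ENNReal.ofReal_ne_top (hK.image (pr u)).lt_top.ne), ENNReal.toReal_mul,
    ENNReal.toReal_ofReal ht]
  rfl

/-- `pf K w = ‖w‖ · vol(K | w^⊥)`, the 1-homogeneous support function of the projection body,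
encoded as the volume gained by adding the segment `[0, w]`. -/
def pf {n : ℕ} (K : Set (Euc n)) (w : Euc n) : ℝ := vol (K + seg w) - vol K

theorem vol_add_seg_eq {n : ℕ} (K : Set (Euc n)) (w : Euc n) : vol (K + seg w) = vol K + pf K w := by
  simp [pf]

theorem pf_zero {n : ℕ} (K : Set (Euc n)) : pf K 0 = 0 := by simp [pf, seg_zero]

theorem pf_unit {m : ℕ} {K : Set (Euc (m + 1))} (hK : CC K) {u : Euc (m + 1)} (hu : ‖u‖ = 1) :
    pf K u = vol (pr u '' K) := by
  have := vol_add_seg hK hu zero_le_one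
  rw [one_smul] at this
  simp [pf, this]

theorem eq_smul_unit {n : ℕ} {w : Euc n} (hw : w ≠ 0) :
    ∃ u : Euc n, ‖u‖ = 1 ∧ w = ‖w‖ • u :=
  ⟨‖w‖⁻¹ • w, norm_smul_inv_norm hw, by rw [smul_inv_smul₀ (norm_ne_zero_iff.2 hw)]⟩

theorem pf_smul_unit {m : ℕ} {K : Set (Euc (m + 1))} (hK : CC K) {u : Euc (m + 1)} (hu : ‖u‖ = 1)
    {t : ℝ} (ht : 0 ≤ t) : pf K (t • u) = t * vol (pr u '' K) := by
  simp [pf, vol_add_seg hK hu ht]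

theorem pf_smul {n : ℕ} {K : Set (Euc n)} (hK : CC K) {t : ℝ} (ht : 0 ≤ t) (w : Euc n) :
    pf K (t • w) = t * pf K w := by
  by_cases hw : w = 0
  · simp [hw, pf_zero]
  obtain _ | m := n
  · exact absurd (Subsingleton.elim _ _) hw
  obtain ⟨u, hu, h⟩ := eq_smul_unit hw
  rw [h, smul_smul, pf_smul_unit hK hu (by positivity), pf_smul_unit hK hu (by positivity)]
  ring

theorem pf_nonneg {n : ℕ} {K : Set (Euc n)} (hK : CC K) (w : Euc n) : 0 ≤ pf K w := by
  rw [pf, sub_nonneg]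
  refine vol_mono (fun x hx => ?_) (hK.add (CC.seg w))
  exact ⟨x, hx, 0, left_mem_segment _ _ _, by simp⟩

theorem pf_neg {n : ℕ} (K : Set (Euc n)) (w : Euc n) : pf K (-w) = pf K w := by
  rw [pf, pf, seg_neg, add_left_comm, vol_translate]

theorem pf_translate {n : ℕ} (x : Euc n) (K : Set (Euc n)) (w : Euc n) :
    pf ({x} + K) w = pf K w := by
  rw [pf, pf, add_assoc, vol_translate, vol_translate]

theorem pf_mono {n : ℕ} {K L : Set (Euc n)} (hK : CC K) (hL : CC L) (h : K ⊆ L) (w : Euc n) :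
    pf K w ≤ pf L w := by
  by_cases hw : w = 0
  · simp [hw, pf_zero]
  obtain _ | m := n
  · exact absurd (Subsingleton.elim _ _) hw
  obtain ⟨u, hu, hh⟩ := eq_smul_unit hw
  rw [hh, pf_smul_unit hK hu (by positivity), pf_smul_unit hL hu (by positivity)]
  exact mul_le_mul_of_nonneg_left (vol_mono (image_mono h) (hL.image _)) (norm_nonneg _)

/-- Both orders of adding the two segments give the same volume. -/
theorem pf_add_seg {n : ℕ} (K : Set (Euc n)) (u v : Euc n) :
    pf (K + seg u) v = pf K v + pf (K + seg v) u - pf K u := by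
  simp only [pf, add_right_comm K (seg u) (seg v)]
  ring

theorem seg_add_subset {n : ℕ} (u v : Euc n) : seg (u + v) ⊆ seg u + seg v := by
  intro x hx
  obtain ⟨θ, hθ, rfl⟩ := mem_seg.1 hx
  exact ⟨θ • u, mem_seg.2 ⟨θ, hθ, rfl⟩, θ • v, mem_seg.2 ⟨θ, hθ, rfl⟩, (smul_add _ _ _).symm⟩

theorem pf_subadd {n : ℕ} {K : Set (Euc n)} (hK : CC K) (u v : Euc n) :
    pf K (u + v) ≤ pf K u + pf K v := by
  have key : ∀ t : ℝ, 0 < t →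
      pf K (u + v) ≤ pf K u + pf K v + t * (pf (K + seg v) u - pf K u) := by
    intro t ht
    have h1 : vol (K + seg (t • (u + v))) ≤ vol (K + seg (t • u) + seg (t • v)) := by
      refine vol_mono ?_ ((hK.add (CC.seg _)).add (CC.seg _))
      rw [add_assoc, smul_add]
      exact add_subset_add_left (seg_add_subset _ _)
    rw [vol_add_seg_eq, vol_add_seg_eq, vol_add_seg_eq, pf_smul hK ht.le, pf_smul hK ht.le,
      pf_smul (hK.add (CC.seg _)) ht.le, pf_add_seg, pf_smul hK ht.le,
      pf_smul (hK.add (CC.seg _)) ht.le] at h1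
    have h2 : t * pf K (u + v) ≤
        t * (pf K u + pf K v + t * (pf (K + seg v) u - pf K u)) := by linarith
    exact le_of_mul_le_mul_left h2 ht
  have hlim : Tendsto (fun t : ℝ => pf K u + pf K v + t * (pf (K + seg v) u - pf K u))
      (𝓝[>] 0) (𝓝 (pf K u + pf K v + 0 * (pf (K + seg v) u - pf K u))) := by
    refine Tendsto.mono_left ?_ nhdsWithin_le_nhds
    exact Continuous.tendsto (by fun_prop) 0
  rw [zero_mul, add_zero] at hlim
  exact ge_of_tendsto hlim (eventually_mem_nhdsWithin.mono fun t ht => key t ht)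

theorem vol_smul {n : ℕ} (K : Set (Euc n)) {a : ℝ} (ha : 0 ≤ a) : vol (a • K) = a ^ n * vol K := by
  rw [vol, Measure.addHaar_smul, ENNReal.toReal_mul, finrank_euclideanSpace_fin,
    abs_of_nonneg (by positivity), ENNReal.toReal_ofReal (by positivity)]
  rfl

theorem pf_smul_set {m : ℕ} {K : Set (Euc (m + 1))} (hK : CC K) {a : ℝ} (ha : 0 ≤ a)
    (w : Euc (m + 1)) : pf (a • K) w = a ^ m * pf K w := by
  by_cases hw : w = 0
  · simp [hw, pf_zero]
  obtain ⟨u, hu, hh⟩ := eq_smul_unit hw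
  rw [hh, pf_smul_unit hK hu (by positivity), pf_smul_unit (hK.smul a) hu (by positivity),
    image_smul_set, vol_smul _ ha]
  ring

theorem pf_image {n : ℕ} {K : Set (Euc n)} (φ : Euc n →ₗ[ℝ] Euc n) (w : Euc n) :
    pf (φ '' K) (φ w) = |φ.det| * pf K w := by
  have h : ∀ S : Set (Euc n), vol (φ '' S) = |φ.det| * vol S := by
    intro S
    rw [vol, Measure.addHaar_image_linearMap, ENNReal.toReal_mul,
      ENNReal.toReal_ofReal (abs_nonneg _)]
    rfl
  rw [pf, ← image_seg, ← image_add φ, h, h, pf]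
  ring

theorem pr_closedBall {m : ℕ} {u : Euc (m + 1)} (hu : ‖u‖ = 1) (r : ℝ) :
    pr u '' closedBall 0 r = closedBall 0 r := by
  ext y
  simp only [mem_image, mem_closedBall_zero_iff]
  constructor
  · rintro ⟨x, hx, rfl⟩; exact (norm_pr_le hu x).trans hx
  · intro hy; exact ⟨emb u y, by rwa [norm_emb], pr_emb u y⟩

theorem pf_ball {m : ℕ} (w : Euc (m + 1)) : pf (closedBall 0 1) w = uball m * ‖w‖ := by
  by_cases hw : w = 0
  · simp [hw, pf_zero]
  obtain ⟨u, hu, hh⟩ := eq_smul_unit hw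
  conv_lhs => rw [hh]
  rw [pf_smul_unit (CC.ball 1 zero_le_one) hu (by positivity), pr_closedBall hu]
  rw [mul_comm]; rfl

theorem uball_pos (m : ℕ) : 0 < uball m :=
  ENNReal.toReal_pos (measure_closedBall_pos volume _ one_pos).ne'
    (isCompact_closedBall _ _).measure_lt_top.ne

theorem projSupp_eq_pf {m : ℕ} {K : Set (Euc (m + 1))} (hK : CC K) {u : Euc (m + 1)}
    (hu : ‖u‖ = 1) : projSupp K u = hcon m * pf K u := by
  rw [projSupp_eq K hu, pf_unit hK hu]

/-! ### Support functions and the normalized projection body operator -/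

/-- Sublinear (positively 1-homogeneous and subadditive) functions, i.e. support functions. -/
structure Subl {n : ℕ} (h : Euc n → ℝ) : Prop where
  smul : ∀ t : ℝ, 0 ≤ t → ∀ x, h (t • x) = t * h x
  add : ∀ x y, h (x + y) ≤ h x + h y

/-- The compact convex set with support function `h`. -/
def Wb {n : ℕ} (h : Euc n → ℝ) : Set (Euc n) := {x | ∀ u, ⟪x, u⟫ ≤ h u}

theorem Subl.zero {n : ℕ} {h : Euc n → ℝ} (hh : Subl h) : h 0 = 0 := by
  simpa using hh.smul 0 le_rfl 0

/-- Hahn-Banach: every direction has a supporting point of `Wb h`. -/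
theorem Subl.exists_supp {n : ℕ} {h : Euc n → ℝ} (hh : Subl h) (u : Euc n) :
    ∃ p ∈ Wb h, ⟪p, u⟫ = h u := by
  have H : ∀ c : ℝ, c • u = 0 → (RingHom.id ℝ) c • h u = 0 := by
    intro c hc
    rcases smul_eq_zero.1 hc with h0 | h0
    · simp [h0]
    · simp [h0, hh.zero]
  obtain ⟨g, hg1, hg2⟩ := exists_extension_of_le_sublinear
    (LinearPMap.mkSpanSingleton' u (h u) H) h (fun c hc x => hh.smul c hc.le x) hh.add (by
      rintro ⟨x, hx⟩
      have hx' := hx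
      rw [LinearPMap.domain_mkSpanSingleton, Submodule.mem_span_singleton] at hx'
      obtain ⟨c, rfl⟩ := hx'
      rw [LinearPMap.mkSpanSingleton'_apply]
      simp only [RingHom.id_apply, smul_eq_mul]
      rcases le_total 0 c with hc | hc
      · exact (hh.smul c hc u).ge
      · have h1 := hh.add (c • u) ((-c) • u)
        rw [← add_smul, add_neg_cancel, zero_smul, hh.zero, hh.smul (-c) (by linarith)] at h1
        linarith)
  refine ⟨(InnerProductSpace.toDual ℝ (Euc n)).symm (LinearMap.toContinuousLinearMap g), ?_, ?_⟩
  · intro v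
    rw [InnerProductSpace.toDual_symm_apply]
    exact hg2 v
  · rw [InnerProductSpace.toDual_symm_apply]
    have hu : u ∈ (LinearPMap.mkSpanSingleton' u (h u) H).domain := by
      rw [LinearPMap.domain_mkSpanSingleton]; exact Submodule.mem_span_singleton_self u
    have := hg1 ⟨u, hu⟩
    rw [LinearPMap.mkSpanSingleton'_apply_self] at this
    exact this

theorem Subl.continuous {n : ℕ} {h : Euc n → ℝ} (hh : Subl h) : Continuous h := by
  have : ConvexOn ℝ univ h := by
    refine ⟨convex_univ, fun x _ y _ a b ha hb _ => ?_⟩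
    have := hh.add (a • x) (b • y)
    rwa [hh.smul a ha, hh.smul b hb] at this
  exact this.locallyLipschitz.continuous

theorem Subl.bound {n : ℕ} {h : Euc n → ℝ} (hh : Subl h) {C : ℝ} (hC : ∀ u, ‖u‖ = 1 → h u ≤ C)
    (x : Euc n) : h x ≤ C * ‖x‖ := by
  by_cases hx : x = 0
  · simp [hx, hh.zero]
  obtain ⟨u, hu, h1⟩ := eq_smul_unit hx
  have h2 : h x = ‖x‖ * h u := by conv_lhs => rw [h1, hh.smul _ (norm_nonneg _)]
  rw [h2, mul_comm]
  exact mul_le_mul_of_nonneg_right (hC u hu) (norm_nonneg _)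

theorem Subl.exists_bound {n : ℕ} {h : Euc n → ℝ} (hh : Subl h) :
    ∃ C : ℝ, ∀ x, h x ≤ C * ‖x‖ := by
  obtain ⟨C, hC⟩ := (isCompact_sphere (0 : Euc n) 1).bddAbove_image hh.continuous.continuousOn
  exact ⟨C, hh.bound fun u hu => hC (mem_image_of_mem h (by simpa using hu))⟩

theorem Subl.cc {n : ℕ} {h : Euc n → ℝ} (hh : Subl h) : CC (Wb h) := by
  refine ⟨Metric.isCompact_of_isClosed_isBounded ?_ ?_, ?_, ?_⟩
  · have : Wb h = ⋂ u, {x | ⟪x, u⟫ ≤ h u} := by ext; simp [Wb]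
    rw [this]
    exact isClosed_iInter fun u => isClosed_le (by fun_prop) continuous_const
  · obtain ⟨C, hC⟩ := hh.exists_bound
    refine (Metric.isBounded_iff_subset_closedBall (0 : Euc n)).2 ⟨|C|, fun x hx => ?_⟩
    rw [mem_closedBall_zero_iff]
    by_contra hcon
    push Not at hcon
    have h1 := (hx x).trans (hC x)
    rw [real_inner_self_eq_norm_sq] at h1
    nlinarith [le_abs_self C, abs_nonneg C]
  · intro x hx y hy a b ha hb hab u
    rw [inner_add_left, inner_smul_left, inner_smul_left]
    have := hx u
    have := hy u
    simp only [conj_trivial]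
    have hb' : b = 1 - a := by linarith
    subst hb'
    nlinarith
  · obtain ⟨p, hp, _⟩ := hh.exists_supp 0
    exact ⟨p, hp⟩

theorem suppFn_isLUB {n : ℕ} {K : Set (Euc n)} (hK : CC K) (u : Euc n) :
    IsLUB ((fun y => ⟪y, u⟫) '' K) (suppFn K u) := by
  refine isLUB_csSup (hK.ne.image _) (hK.cpt.bddAbove_image (by fun_prop))

theorem le_suppFn {n : ℕ} {K : Set (Euc n)} (hK : CC K) {x : Euc n} (hx : x ∈ K) (u : Euc n) :
    ⟪x, u⟫ ≤ suppFn K u :=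
  (suppFn_isLUB hK u).1 (mem_image_of_mem _ hx)

theorem suppFn_le {n : ℕ} {K : Set (Euc n)} (hK : CC K) {u : Euc n} {c : ℝ}
    (h : ∀ x ∈ K, ⟪x, u⟫ ≤ c) : suppFn K u ≤ c :=
  (suppFn_isLUB hK u).2 (by rintro _ ⟨x, hx, rfl⟩; exact h x hx)

theorem CC.subl {n : ℕ} {K : Set (Euc n)} (hK : CC K) : Subl (suppFn K) := by
  constructor
  · intro t ht x
    rcases ht.eq_or_lt with rfl | ht
    · rw [zero_smul, zero_mul]
      obtain ⟨k, hk⟩ := hK.ne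
      refine le_antisymm (suppFn_le hK fun y _ => by simp) ?_
      have := le_suppFn hK hk 0
      simpa using this
    · refine le_antisymm (suppFn_le hK fun y hy => ?_) ?_
      · rw [inner_smul_right]
        exact mul_le_mul_of_nonneg_left (le_suppFn hK hy x) ht.le
      · rw [← le_div_iff₀' ht]
        refine suppFn_le hK fun y hy => ?_
        rw [le_div_iff₀' ht, ← inner_smul_right]
        exact le_suppFn hK hy _
  · intro x y
    refine suppFn_le hK fun z hz => ?_
    rw [inner_add_right]
    exact add_le_add (le_suppFn hK hz x) (le_suppFn hK hz y)

theorem suppFn_Wb {n : ℕ} {h : Euc n → ℝ} (hh : Subl h) : suppFn (Wb h) = h := by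
  funext u
  refine le_antisymm (suppFn_le hh.cc fun y hy => hy u) ?_
  obtain ⟨p, hp, h1⟩ := hh.exists_supp u
  rw [← h1]
  exact le_suppFn hh.cc hp u

theorem Wb_suppFn {n : ℕ} {K : Set (Euc n)} (hK : CC K) : Wb (suppFn K) = K := by
  refine Subset.antisymm (fun x hx => ?_) fun x hx u => le_suppFn hK hx u
  by_contra hxK
  obtain ⟨f, c, h1, h2⟩ := geometric_hahn_banach_closed_point hK.cvx hK.cpt.isClosed hxK
  have h3 := hx ((InnerProductSpace.toDual ℝ (Euc n)).symm f)
  have h4 : suppFn K ((InnerProductSpace.toDual ℝ (Euc n)).symm f) ≤ c := by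
    refine suppFn_le hK fun y hy => ?_
    rw [real_inner_comm, InnerProductSpace.toDual_symm_apply]
    exact (h1 y hy).le
  rw [real_inner_comm, InnerProductSpace.toDual_symm_apply] at h3
  linarith

theorem Wb_mono {n : ℕ} {h₁ h₂ : Euc n → ℝ} (h : ∀ x, h₁ x ≤ h₂ x) : Wb h₁ ⊆ Wb h₂ :=
  fun _ hx u => (hx u).trans (h u)

theorem Subl.sum {n : ℕ} {h₁ h₂ : Euc n → ℝ} (hh₁ : Subl h₁) (hh₂ : Subl h₂) :
    Subl (fun x => h₁ x + h₂ x) :=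
  ⟨fun t ht x => by rw [hh₁.smul t ht, hh₂.smul t ht]; ring,
    fun x y => by linarith [hh₁.add x y, hh₂.add x y]⟩

theorem Subl.const_mul {n : ℕ} {h : Euc n → ℝ} (hh : Subl h) {a : ℝ} (ha : 0 ≤ a) :
    Subl (fun x => a * h x) :=
  ⟨fun t ht x => by rw [hh.smul t ht]; ring, fun x y => by nlinarith [hh.add x y]⟩

theorem Subl.comp {n : ℕ} {h : Euc n → ℝ} (hh : Subl h) (A : Euc n →ₗ[ℝ] Euc n) :
    Subl (fun x => h (A x)) :=
  ⟨fun t ht x => by simp [hh.smul t ht], fun x y => by simp [hh.add]⟩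

theorem subl_norm {n : ℕ} : Subl (fun x : Euc n => ‖x‖) :=
  ⟨fun t ht x => by rw [norm_smul, Real.norm_of_nonneg ht], norm_add_le⟩

theorem suppFn_add {n : ℕ} {K L : Set (Euc n)} (hK : CC K) (hL : CC L) (u : Euc n) :
    suppFn (K + L) u = suppFn K u + suppFn L u := by
  refine le_antisymm (suppFn_le (hK.add hL) ?_) ?_
  · rintro _ ⟨x, hx, y, hy, rfl⟩
    show ⟪x + y, u⟫ ≤ _
    rw [inner_add_left]
    exact add_le_add (le_suppFn hK hx u) (le_suppFn hL hy u)
  · rw [← le_sub_iff_add_le]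
    refine suppFn_le hK fun x hx => ?_
    rw [le_sub_comm]
    refine suppFn_le hL fun y hy => ?_
    rw [le_sub_iff_add_le', ← inner_add_left]
    exact le_suppFn (hK.add hL) (add_mem_add hx hy) u

theorem Wb_add {n : ℕ} {h₁ h₂ : Euc n → ℝ} (hh₁ : Subl h₁) (hh₂ : Subl h₂) :
    Wb (fun x => h₁ x + h₂ x) = Wb h₁ + Wb h₂ := by
  rw [← Wb_suppFn (hh₁.cc.add hh₂.cc)]
  congr 1
  funext u
  rw [suppFn_add hh₁.cc hh₂.cc, suppFn_Wb hh₁, suppFn_Wb hh₂]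

theorem Wb_const_mul {n : ℕ} {h : Euc n → ℝ} {a : ℝ} (ha : 0 < a) :
    Wb (fun x => a * h x) = a • Wb h := by
  ext x
  rw [mem_smul_set_iff_inv_smul_mem₀ ha.ne']
  refine forall_congr' fun u => ?_
  rw [inner_smul_left, conj_trivial, inv_mul_le_iff₀ ha]

theorem Wb_norm {n : ℕ} : Wb (fun x : Euc n => ‖x‖) = closedBall 0 1 := by
  ext x
  rw [mem_closedBall_zero_iff]
  constructor
  · intro h
    have := h x
    rw [real_inner_self_eq_norm_sq] at this
    by_contra hc
    push Not at hc
    nlinarith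
  · intro h u
    refine (real_inner_le_norm x u).trans ?_
    nlinarith [norm_nonneg u]

theorem Wb_comp {n : ℕ} (h : Euc n → ℝ) (A : Euc n ≃ₗ[ℝ] Euc n) :
    Wb (fun x => h (A x)) = (LinearMap.adjoint (A : Euc n →ₗ[ℝ] Euc n)) '' Wb h := by
  ext x
  constructor
  · intro hx
    refine ⟨LinearMap.adjoint (A.symm : Euc n →ₗ[ℝ] Euc n) x, fun u => ?_, ?_⟩
    · rw [LinearMap.adjoint_inner_left]
      have := hx (A.symm u)
      simpa using this
    · refine ext_inner_right ℝ fun v => ?_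
      rw [LinearMap.adjoint_inner_left, LinearMap.adjoint_inner_left]
      simp
  · rintro ⟨y, hy, rfl⟩ u
    rw [LinearMap.adjoint_inner_left]
    exact hy (A u)

/-- Normalized projection body operator on support functions: `Pop h` is the support function of
`Π(Wb h)` divided by `ω_m`, so that the Euclidean norm is a fixed point. -/
def Pop {m : ℕ} (h : Euc (m + 1) → ℝ) (w : Euc (m + 1)) : ℝ := pf (Wb h) w / uball m

theorem Pop_subl {m : ℕ} {h : Euc (m + 1) → ℝ} (hh : Subl h) : Subl (Pop h) := by
  constructor
  · intro t ht x
    rw [Pop, pf_smul hh.cc ht, Pop]; ring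
  · intro x y
    rw [Pop, Pop, Pop, ← add_div]
    exact div_le_div_of_nonneg_right (pf_subadd hh.cc x y) (uball_pos m).le

theorem Pop_even {m : ℕ} (h : Euc (m + 1) → ℝ) (x : Euc (m + 1)) : Pop h (-x) = Pop h x := by
  rw [Pop, pf_neg, Pop]

theorem Pop_mono {m : ℕ} {h₁ h₂ : Euc (m + 1) → ℝ} (hh₁ : Subl h₁) (hh₂ : Subl h₂)
    (h : ∀ x, h₁ x ≤ h₂ x) (x : Euc (m + 1)) : Pop h₁ x ≤ Pop h₂ x :=
  div_le_div_of_nonneg_right (pf_mono hh₁.cc hh₂.cc (Wb_mono h) x) (uball_pos m).le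

theorem Pop_const_mul {m : ℕ} {h : Euc (m + 1) → ℝ} (hh : Subl h) {a : ℝ} (ha : 0 < a)
    (x : Euc (m + 1)) : Pop (fun x => a * h x) x = a ^ m * Pop h x := by
  rw [Pop, Wb_const_mul ha, pf_smul_set hh.cc ha.le, Pop]; ring

theorem Pop_norm {m : ℕ} (x : Euc (m + 1)) : Pop (fun x => ‖x‖) x = ‖x‖ := by
  rw [Pop, Wb_norm, pf_ball, mul_div_cancel_left₀ _ (uball_pos m).ne']

/-- The inverse transpose of a linear equivalence. -/
def invT {n : ℕ} (A : Euc n ≃ₗ[ℝ] Euc n) : Euc n ≃ₗ[ℝ] Euc n :=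
  LinearEquiv.ofLinearMap (LinearMap.adjoint (A.symm : Euc n →ₗ[ℝ] Euc n))
    (LinearMap.adjoint (A : Euc n →ₗ[ℝ] Euc n))
    (by rw [← LinearMap.adjoint_comp]; simp) (by rw [← LinearMap.adjoint_comp]; simp)

theorem invT_invT {n : ℕ} (A : Euc n ≃ₗ[ℝ] Euc n) (x : Euc n) : invT (invT A) x = A x := by
  show LinearMap.adjoint (LinearMap.adjoint (A : Euc n →ₗ[ℝ] Euc n)) x = A x
  rw [LinearMap.adjoint_adjoint]; rfl

theorem adjoint_invT {n : ℕ} (A : Euc n ≃ₗ[ℝ] Euc n) (x : Euc n) :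
    LinearMap.adjoint (A : Euc n →ₗ[ℝ] Euc n) (invT A x) = x := (invT A).symm_apply_apply x

/-- Equivariance of the projection body operator under linear maps. -/
theorem Pop_comp {m : ℕ} (A : Euc (m + 1) ≃ₗ[ℝ] Euc (m + 1)) :
    ∃ d : ℝ, 0 < d ∧ ∀ (h : Euc (m + 1) → ℝ) (x : Euc (m + 1)),
      Pop (fun x => h (A x)) x = d * Pop h (invT A x) := by
  refine ⟨|(LinearMap.adjoint (A : Euc (m + 1) →ₗ[ℝ] Euc (m + 1))).det|, ?_, fun h x => ?_⟩
  · rw [abs_pos]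
    exact (LinearEquiv.isUnit_det' (invT A).symm).ne_zero
  · rw [Pop, Wb_comp]
    conv_lhs => rw [← adjoint_invT A x]
    rw [pf_image, Pop]; ring

/-- The equation `Pop (Pop h) = c h` is invariant under linear changes of variables. -/
theorem Pop_Pop_comp {m : ℕ} {h : Euc (m + 1) → ℝ} (hh : Subl h)
    (A : Euc (m + 1) ≃ₗ[ℝ] Euc (m + 1)) {c : ℝ} (hc : 0 < c) (H : ∀ x, Pop (Pop h) x = c * h x) :
    ∃ c' : ℝ, 0 < c' ∧ ∀ x, Pop (Pop (fun x => h (A x))) x = c' * h (A x) := by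
  obtain ⟨d, hd, h1⟩ := Pop_comp A
  obtain ⟨e, he, h2⟩ := Pop_comp (invT A)
  refine ⟨d ^ m * e * c, by positivity, fun x => ?_⟩
  have h3 : Pop (fun x => h (A x)) = fun x => d * Pop h (invT A x) := funext (h1 h)
  rw [h3, Pop_const_mul (h := fun x => Pop h (invT A x))
    ((Pop_subl hh).comp (invT A : Euc (m + 1) →ₗ[ℝ] Euc (m + 1))) hd, h2, invT_invT, H]
  ring

theorem projBody_eq {m : ℕ} {K : Set (Euc (m + 1))} (hK : CC K) :
    projBody K = Wb (fun x => hcon m * uball m * Pop (suppFn K) x) := by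
  have hPK : ∀ x, hcon m * uball m * Pop (suppFn K) x = hcon m * pf K x := by
    intro x
    rw [Pop, Wb_suppFn hK]
    field_simp [(uball_pos m).ne']
  simp_rw [hPK]
  ext x
  constructor
  · intro hx w
    by_cases hw : w = 0
    · simp [hw, pf_zero]
    obtain ⟨u, hu, h⟩ := eq_smul_unit hw
    have h1 := hx u (by simpa using hu)
    rw [projSupp_eq_pf hK hu] at h1
    show _ ≤ hcon m * pf K w
    rw [h, inner_smul_right, pf_smul hK (norm_nonneg _)]
    nlinarith [mul_le_mul_of_nonneg_left h1 (norm_nonneg w)]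
  · intro hx u hu
    rw [projSupp_eq_pf hK (by simpa using hu)]
    exact hx u

/-- The equation `Π²K = cK` in terms of support functions. -/
theorem Pop_of_projBody {m : ℕ} {K : Set (Euc (m + 1))} (hK : CC K) {c : ℝ} (hc : 0 < c)
    (H : projBody (projBody K) = c • K) :
    ∃ c' : ℝ, 0 < c' ∧ ∀ x, Pop (Pop (suppFn K)) x = c' * suppFn K x := by
  set κ := hcon m * uball m with hκ
  have hκp : 0 < κ := mul_pos (hcon_pos m) (uball_pos m)
  have hs1 : Subl (fun x => κ * Pop (suppFn K) x) := (Pop_subl hK.subl).const_mul hκp.le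
  have h1 : CC (projBody K) := by rw [projBody_eq hK]; exact hs1.cc
  have h2 : Pop (suppFn (projBody K)) = fun x => κ ^ m * Pop (Pop (suppFn K)) x := by
    rw [projBody_eq hK, suppFn_Wb hs1]
    funext x
    exact Pop_const_mul (Pop_subl hK.subl) hκp x
  have h3 : c • K = Wb (fun x => c * suppFn K x) := by
    rw [Wb_const_mul hc, Wb_suppFn hK]
  rw [projBody_eq h1, h2, h3] at H
  have h4 := congrArg suppFn H
  rw [suppFn_Wb (hK.subl.const_mul hc.le), suppFn_Wb (((Pop_subl
    (Pop_subl hK.subl)).const_mul (by positivity)).const_mul hκp.le)] at h4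
  refine ⟨c / (κ * κ ^ m), by positivity, fun x => ?_⟩
  have h5 := congrFun h4 x
  rw [div_mul_eq_mul_div, eq_div_iff (by positivity), ← h5]
  ring

theorem suppFn_image {n : ℕ} {K : Set (Euc n)} (φ : Euc n →ₗ[ℝ] Euc n) (x : Euc n) :
    suppFn (φ '' K) x = suppFn K (LinearMap.adjoint φ x) := by
  rw [suppFn, suppFn, image_image]
  simp only [LinearMap.adjoint_inner_right]

/-! ### Semiconvexity of projection bodies -/

/-- The zonotope (Minkowski sum of segments) generated by a list of vectors. -/
def Zon {n : ℕ} : List (Euc n) → Set (Euc n)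
  | [] => {0}
  | w :: ws => Zon ws + seg w

theorem CC.zon {n : ℕ} : ∀ ws : List (Euc n), CC (Zon ws)
  | [] => CC.singleton 0
  | w :: ws => (CC.zon ws).add (CC.seg w)

theorem image_zon {n k : ℕ} (f : Euc n →ₗ[ℝ] Euc k) :
    ∀ ws : List (Euc n), f '' Zon ws = Zon (ws.map f)
  | [] => by simp [Zon]
  | w :: ws => by simp only [Zon, List.map_cons]; rw [image_add f, image_zon f ws, image_seg]

theorem vol_eq_of_subsingleton {K L : Set (Euc 0)} (hK : K.Nonempty) (hL : L.Nonempty) :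
    vol K = vol L := by
  rw [Subsingleton.eq_univ_of_nonempty hK, Subsingleton.eq_univ_of_nonempty hL]

theorem vol_singleton {m : ℕ} (x : Euc (m + 1)) : vol {x} = 0 := by
  simp [vol]

theorem pf_singleton_le {n : ℕ} {K : Set (Euc n)} (hK : CC K) (u : Euc n) :
    pf {0} u ≤ pf K u := by
  obtain ⟨x, hx⟩ := hK.ne
  have h := pf_translate x {0} u
  rw [singleton_add_singleton, add_zero] at h
  rw [← h]
  exact pf_mono (CC.singleton x) hK (singleton_subset_iff.2 hx) u

theorem pf_defect_singleton {m : ℕ} {K : Set (Euc (m + 1))} (hK : CC K) (u v : Euc (m + 1)) :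
    pf {0} u + pf {0} v - pf {0} (u + v) ≤ pf K u + pf K v - pf K (u + v) := by
  obtain _ | m := m
  · have h : ∀ w, pf {0} w = pf K w := by
      intro w
      by_cases hw : w = 0
      · simp [hw, pf_zero]
      obtain ⟨u, hu, hh⟩ := eq_smul_unit hw
      rw [hh, pf_smul_unit hK hu (norm_nonneg _), pf_smul_unit (CC.singleton 0) hu (norm_nonneg _)]
      rw [vol_eq_of_subsingleton ((singleton_nonempty _).image _) (hK.ne.image _)]
    rw [h, h, h]
  · have h : ∀ w, pf ({0} : Set (Euc (m + 1 + 1))) w = 0 := by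
      intro w
      by_cases hw : w = 0
      · simp [hw, pf_zero]
      obtain ⟨u, hu, hh⟩ := eq_smul_unit hw
      rw [hh, pf_smul_unit (CC.singleton 0) hu (norm_nonneg _), image_singleton, vol_singleton,
        mul_zero]
    rw [h, h, h]
    linarith [pf_subadd hK u v]

/-- Mixed second differences of the volume are projection functions of a projection, which allows
induction over the dimension. -/
theorem pf_add_seg_smul {m : ℕ} {K : Set (Euc (m + 1))} (hK : CC K) {e : Euc (m + 1)}
    (he : ‖e‖ = 1) {t : ℝ} (ht : 0 ≤ t) (u : Euc (m + 1)) :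
    pf (K + seg u) (t • e) = pf K (t • e) + t * pf (pr e '' K) (pr e u) := by
  rw [pf_smul_unit (hK.add (CC.seg _)) he ht, pf_smul_unit hK he ht, image_add (pr e), image_seg,
    vol_add_seg_eq]
  ring

/-- The case of an empty list of segments in `zon_defect`. -/
theorem zon_base {n : ℕ} {K : Set (Euc n)} (hK : CC K) (u v : Euc n) :
    vol ({0} + seg u + seg v) - vol ({0} + seg (u + v)) ≤
      vol (K + seg u + seg v) - vol (K + seg (u + v)) := by
  obtain _ | m := n
  · have h0 : ∀ w : Euc 0, ({0} + seg w : Set (Euc 0)).Nonempty := fun w =>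
      ((CC.singleton 0).add (CC.seg w)).ne
    have hne := ((((CC.singleton (0 : Euc 0))).add (CC.seg u)).add (CC.seg v)).ne
    rw [vol_eq_of_subsingleton hne (h0 (u + v)),
      vol_eq_of_subsingleton ((hK.add (CC.seg u)).add (CC.seg v)).ne
        (hK.add (CC.seg (u + v))).ne]
    simp
  · simp only [vol_add_seg_eq]
    have h1 := pf_defect_singleton hK u v
    by_cases hv : v = 0
    · subst hv; simp [pf_zero]
    obtain ⟨e, he, hh⟩ := eq_smul_unit hv
    have h2 : ∀ L : Set (Euc (m + 1)), CC L →
        pf (L + seg u) v = pf L v + ‖v‖ * pf (pr e '' L) (pr e u) := by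
      intro L hL
      have := pf_add_seg_smul hL he (norm_nonneg v) u
      rwa [← hh] at this
    rw [h2 K hK, h2 _ (CC.singleton 0)]
    have h3 := pf_singleton_le (hK.image (pr e)) (pr e u)
    rw [image_singleton, map_zero]
    nlinarith [mul_le_mul_of_nonneg_left h3 (norm_nonneg v)]

/-- Adding a convex set `K` to a zonotope increases the defect
`vol (· + [0,u] + [0,v]) - vol (· + [0,u+v])`. -/
theorem zon_defect (l : ℕ) : ∀ (n : ℕ) (ws : List (Euc n)), ws.length = l →
    ∀ (K : Set (Euc n)), CC K → ∀ u v : Euc n,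
    vol (Zon ws + seg u + seg v) - vol (Zon ws + seg (u + v)) ≤
      vol (K + Zon ws + seg u + seg v) - vol (K + Zon ws + seg (u + v)) := by
  induction l with
  | zero =>
    intro n ws hl K hK u v
    rw [List.length_eq_zero_iff] at hl
    subst hl
    have : K + {0} = K := by simp
    simp only [Zon]
    rw [this]
    exact zon_base hK u v
  | succ l ih =>
    intro n ws hl K hK u v
    obtain _ | ⟨w, ws⟩ := ws
    · simp at hl
    have hl' : ws.length = l := by simpa using hl
    have ih1 := ih n ws hl' K hK u v
    simp only [Zon]
    by_cases hw : w = 0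
    · subst hw
      rw [seg_zero, add_singleton]
      simpa using ih1
    obtain _ | m := n
    · exact absurd (Subsingleton.elim _ _) hw
    obtain ⟨e, he, hh⟩ := eq_smul_unit hw
    have ih2 := ih m (ws.map (pr e)) (by simpa using hl') (pr e '' K) (hK.image _)
      (pr e u) (pr e v)
    have hv : ∀ L : Set (Euc (m + 1)), CC L →
        vol (L + seg w) = vol L + ‖w‖ * vol (pr e '' L) := by
      intro L hL
      have := vol_add_seg hL he (norm_nonneg w)
      rwa [← hh] at this
    have hZ := CC.zon ws
    have e1 : Zon ws + seg w + seg u + seg v = Zon ws + seg u + seg v + seg w := by abel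
    have e2 : Zon ws + seg w + seg (u + v) = Zon ws + seg (u + v) + seg w := by abel
    have e3 : K + (Zon ws + seg w) + seg u + seg v = K + Zon ws + seg u + seg v + seg w := by abel
    have e4 : K + (Zon ws + seg w) + seg (u + v) = K + Zon ws + seg (u + v) + seg w := by abel
    rw [e1, e2, e3, e4, hv _ ((hZ.add (CC.seg _)).add (CC.seg _)), hv _ (hZ.add (CC.seg _)),
      hv _ (((hK.add hZ).add (CC.seg _)).add (CC.seg _)), hv _ ((hK.add hZ).add (CC.seg _))]
    simp only [image_add (pr e), image_seg, image_zon]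
    rw [map_add]
    nlinarith [mul_le_mul_of_nonneg_left ih2 (norm_nonneg w)]

/-- The subadditivity defect of `pf` for a zonotope increases when a convex set is added. -/
theorem pf_defect {n : ℕ} (ws : List (Euc n)) {K : Set (Euc n)} (hK : CC K) (u v : Euc n) :
    pf (Zon ws) u + pf (Zon ws) v - pf (Zon ws) (u + v) ≤
      pf (K + Zon ws) u + pf (K + Zon ws) v - pf (K + Zon ws) (u + v) := by
  set Z := Zon ws
  have hZ : CC Z := CC.zon ws
  have hX : CC (K + Z) := hK.add hZ
  have expand : ∀ L : Set (Euc n), CC L → ∀ t : ℝ, 0 < t →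
      vol (L + seg (t • u) + seg (t • v)) - vol (L + seg (t • u + t • v)) =
        t * (pf L u + pf L v - pf L (u + v) + t * (pf (L + seg v) u - pf L u)) := by
    intro L hL t ht
    rw [← smul_add, vol_add_seg_eq, vol_add_seg_eq, vol_add_seg_eq, pf_smul hL ht.le,
      pf_smul hL ht.le, pf_smul (hL.add (CC.seg _)) ht.le, pf_add_seg, pf_smul hL ht.le,
      pf_smul (hL.add (CC.seg _)) ht.le]
    ring
  have key : ∀ t : ℝ, 0 < t →
      pf Z u + pf Z v - pf Z (u + v) + t * (pf (Z + seg v) u - pf Z u) ≤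
      pf (K + Z) u + pf (K + Z) v - pf (K + Z) (u + v)
        + t * (pf (K + Z + seg v) u - pf (K + Z) u) := by
    intro t ht
    have := zon_defect ws.length n ws rfl K hK (t • u) (t • v)
    rw [expand Z hZ t ht, expand _ hX t ht] at this
    exact le_of_mul_le_mul_left this ht
  have lim : ∀ a b : ℝ, Tendsto (fun t : ℝ => a + t * b) (𝓝[>] 0) (𝓝 a) := by
    intro a b
    have : Tendsto (fun t : ℝ => a + t * b) (𝓝 0) (𝓝 (a + 0 * b)) :=
      Continuous.tendsto (by fun_prop) 0
    rw [zero_mul, add_zero] at this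
    exact this.mono_left nhdsWithin_le_nhds
  exact le_of_tendsto_of_tendsto (lim _ _) (lim _ _)
    (eventually_mem_nhdsWithin.mono fun t ht => key t ht)

/-- The functions `x ↦ ∑ |⟪w, x⟫|` on the sphere. -/
def zonFns (n : ℕ) : Set C(sphere (0 : Euc n) 1, ℝ) :=
  {f | ∃ ws : List (Euc n), ∀ x, f x = (ws.map fun w => |⟪w, (x : Euc n)⟫|).sum}

theorem sum_abs_smul {n : ℕ} {a : ℝ} (ha : 0 ≤ a) (x : Euc n) : ∀ ws : List (Euc n),
    ((ws.map (fun w => a • w)).map fun w => |⟪w, x⟫|).sum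
      = a * (ws.map fun w => |⟪w, x⟫|).sum
  | [] => by simp
  | w :: ws => by
    have := sum_abs_smul ha x ws
    simp only [List.map_cons, List.sum_cons] at *
    rw [this, inner_smul_left, conj_trivial, abs_mul, abs_of_nonneg ha]; ring

theorem zonFns_convex (n : ℕ) : Convex ℝ (zonFns n) := by
  rintro f ⟨ws, hf⟩ g ⟨vs, hg⟩ a b ha hb _
  refine ⟨ws.map (fun w => a • w) ++ vs.map (fun w => b • w), fun x => ?_⟩
  rw [List.map_append, List.sum_append, sum_abs_smul ha, sum_abs_smul hb, ← hf, ← hg]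
  simp

/-- By rotation invariance the integral of `|⟪y, x⟫|` over the ball is the same for all unit
vectors `x`; so the ball is a limit of zonotopes. -/
theorem integral_abs_inner {m : ℕ} : ∃ c : ℝ, 0 < c ∧ ∀ x : Euc (m + 1), ‖x‖ = 1 →
    ∫ y in closedBall (0 : Euc (m + 1)) 1, |⟪y, x⟫| = c := by
  set e : Euc (m + 1) := EuclideanSpace.single 0 1
  have he : ‖e‖ = 1 := by simp [e]
  refine ⟨∫ y in closedBall (0 : Euc (m + 1)) 1, |⟪y, e⟫|, ?_, fun x hx => ?_⟩
  · have hcont : Continuous fun y : Euc (m + 1) => |⟪y, e⟫| := by fun_prop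
    rw [setIntegral_pos_iff_support_of_nonneg_ae (ae_of_all _ fun y => abs_nonneg _)
      (hcont.continuousOn.integrableOn_compact (isCompact_closedBall _ _))]
    refine lt_of_lt_of_le ?_ (measure_mono (s := Function.support (fun y => |⟪y, e⟫|) ∩
      ball (0 : Euc (m + 1)) 1) (inter_subset_inter_right _ ball_subset_closedBall))
    refine IsOpen.measure_pos _ (hcont.isOpen_support.inter isOpen_ball) ⟨(1 / 2 : ℝ) • e, ?_, ?_⟩
    · rw [Function.mem_support, inner_smul_left, real_inner_self_eq_norm_sq, he]
      norm_num
    · rw [mem_ball_zero_iff, norm_smul, he]; norm_num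
  · set g := Submodule.reflection (ℝ ∙ (e - x))ᗮ
    have hg : g e = x := Submodule.reflection_sub (by rw [he, hx])
    have hmp := g.measurePreserving
    have h1 := hmp.setIntegral_preimage_emb g.toHomeomorph.measurableEmbedding
      (fun y => |⟪y, x⟫|) (closedBall 0 1)
    have h2 : g ⁻¹' closedBall 0 1 = closedBall 0 1 := by
      ext y; simp
    rw [← h1, h2]
    congr 1; funext y
    rw [← hg, LinearIsometryEquiv.inner_map_map]

theorem zonFns_const {m : ℕ} {ρ : ℝ} (hρ : 0 ≤ ρ) :
    ContinuousMap.const _ ρ ∈ closure (zonFns (m + 1)) := by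
  obtain ⟨c, hc, hI⟩ := integral_abs_inner (m := m)
  set B := closedBall (0 : Euc (m + 1)) 1
  set ω := volume.real B
  have hω : 0 < ω := uball_pos (m + 1)
  let F : C(Euc (m + 1), C(sphere (0 : Euc (m + 1)) 1, ℝ)) :=
    ContinuousMap.curry ⟨fun p => ρ * ω / c * |⟪p.1, (p.2 : Euc (m + 1))⟫|, by fun_prop⟩
  have hF : ∀ y x, F y x = ρ * ω / c * |⟪y, (x : Euc (m + 1))⟫| := fun y x => rfl
  have hFint : IntegrableOn F B :=
    F.continuous.continuousOn.integrableOn_compact (isCompact_closedBall _ _)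
  have hmem : (⨍ y in B, F y) ∈ closure (zonFns (m + 1)) := by
    refine (zonFns_convex (m + 1)).closure.set_average_mem isClosed_closure ?_ ?_ ?_ hFint
    · exact (measure_closedBall_pos volume _ one_pos).ne'
    · exact (isCompact_closedBall _ _).measure_lt_top.ne
    · refine ae_of_all _ fun y => subset_closure ⟨[(ρ * ω / c) • y], fun x => ?_⟩
      rw [hF]
      simp only [List.map_cons, List.map_nil, List.sum_cons, List.sum_nil, add_zero]
      have h0 : 0 ≤ ρ * ω / c := by positivity
      rw [inner_smul_left, conj_trivial, abs_mul, abs_of_nonneg h0]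
  convert hmem using 1
  ext x
  rw [ContinuousMap.const_apply, setAverage_eq, ContinuousMap.smul_apply]
  have h1 : (∫ y in B, F y) x = ∫ y in B, F y x :=
    ((ContinuousMap.evalCLM ℝ x).integral_comp_comm hFint).symm
  rw [h1]
  simp only [hF]
  rw [integral_const_mul, hI x (by simp), smul_eq_mul]
  change ρ = ω⁻¹ * _
  field_simp

theorem suppFn_seg {n : ℕ} (w x : Euc n) : suppFn (seg w) x = max 0 ⟪w, x⟫ := by
  refine le_antisymm (suppFn_le (CC.seg w) fun y hy => ?_) (max_le ?_ ?_)
  · obtain ⟨θ, hθ, rfl⟩ := mem_seg.1 hy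
    rw [inner_smul_left, conj_trivial]
    rcases le_total 0 ⟪w, x⟫ with h | h
    · exact (mul_le_of_le_one_left h hθ.2).trans (le_max_right _ _)
    · exact (mul_nonpos_of_nonneg_of_nonpos hθ.1 h).trans (le_max_left _ _)
  · have := le_suppFn (CC.seg w) (left_mem_segment ℝ 0 w) x
    simpa using this
  · exact le_suppFn (CC.seg w) (right_mem_segment ℝ 0 w) x

/-- The list of generators and their negatives. -/
def symList {n : ℕ} : List (Euc n) → List (Euc n)
  | [] => []
  | w :: ws => w :: (-w) :: symList ws

theorem suppFn_zon_symList {n : ℕ} (x : Euc n) : ∀ ws : List (Euc n),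
    suppFn (Zon (symList ws)) x = (ws.map fun w => |⟪w, x⟫|).sum
  | [] => by simp [symList, Zon, suppFn]
  | w :: ws => by
    have := suppFn_zon_symList x ws
    simp only [symList, Zon, List.map_cons, List.sum_cons]
    rw [suppFn_add ((CC.zon _).add (CC.seg _)) (CC.seg _), suppFn_add (CC.zon _) (CC.seg _),
      this, suppFn_seg, suppFn_seg, inner_neg_left]
    rcases le_total 0 ⟪w, x⟫ with h | h
    · rw [max_eq_right h, max_eq_left (by linarith), abs_of_nonneg h]; ring
    · rw [max_eq_left h, max_eq_right (by linarith), abs_of_nonpos h]; ring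

theorem exists_zon {m : ℕ} {ρ τ : ℝ} (hρ : 0 ≤ ρ) (hτ : 0 < τ) : ∃ ws : List (Euc (m + 1)),
    ∀ x, (ρ - τ) * ‖x‖ ≤ suppFn (Zon ws) x ∧ suppFn (Zon ws) x ≤ (ρ + τ) * ‖x‖ := by
  obtain ⟨f, ⟨ws, hf⟩, hd⟩ := Metric.mem_closure_iff.1 (zonFns_const (m := m) hρ) τ hτ
  refine ⟨symList ws, fun x => ?_⟩
  by_cases hx : x = 0
  · subst hx
    rw [(CC.zon _).subl.zero]; simp
  obtain ⟨u, hu, h⟩ := eq_smul_unit hx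
  have h1 : suppFn (Zon (symList ws)) x = ‖x‖ * suppFn (Zon (symList ws)) u := by
    conv_lhs => rw [h, (CC.zon _).subl.smul _ (norm_nonneg _)]
  have h2 := (ContinuousMap.dist_apply_le_dist (x := (⟨u, by simpa using hu⟩ :
    sphere (0 : Euc (m + 1)) 1))).trans_lt hd
  rw [hf, ← suppFn_zon_symList, Real.dist_eq, ContinuousMap.const_apply, abs_lt] at h2
  rw [h1]
  constructor <;> nlinarith [norm_nonneg x, h2.1, h2.2]

/-- Semiconvexity is preserved by the projection body operator: if `h - ρ‖·‖` is a support
function, so is `Pop h - ρ^m ‖·‖`. -/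
theorem Pop_semiconvex {m : ℕ} {h : Euc (m + 1) → ℝ} {ρ : ℝ} (hρ : 0 < ρ)
    (he : ∀ x, h (-x) = h x) (hs : Subl (fun x => h x - ρ * ‖x‖)) :
    Subl (fun x => Pop h x - ρ ^ m * ‖x‖) := by
  set h' : Euc (m + 1) → ℝ := fun x => h x - ρ * ‖x‖ with hh'
  have hh : Subl h := by
    have := hs.sum (subl_norm.const_mul hρ.le)
    simpa [hh'] using this
  have hnn : ∀ x, 0 ≤ h' x := by
    intro x
    have h1 := hs.add x (-x)
    rw [add_neg_cancel, hs.zero] at h1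
    have h2 : h' (-x) = h' x := by simp [hh', he]
    rw [h2] at h1; linarith
  have hP := Pop_subl hh
  refine ⟨fun t ht x => ?_, fun u v => ?_⟩
  · rw [hP.smul t ht, norm_smul, Real.norm_of_nonneg ht]; ring
  have key : ∀ τ ∈ Ioo (0 : ℝ) 1,
      (1 - τ) ^ m * (ρ ^ m * ‖u‖) + (1 - τ) ^ m * (ρ ^ m * ‖v‖)
        - (1 + τ) ^ m * (ρ ^ m * ‖u + v‖) ≤
      (1 + τ) ^ m * Pop h u + (1 + τ) ^ m * Pop h v - (1 - τ) ^ m * Pop h (u + v) := by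
    intro τ hτ
    obtain ⟨ws, hws⟩ := exists_zon (m := m) hρ.le (mul_pos hρ hτ.1)
    have hZ := CC.zon ws
    have hd := pf_defect ws hs.cc u v
    set hz := suppFn (Zon ws)
    have e1 : Zon ws = Wb hz := (Wb_suppFn hZ).symm
    have e2 : Wb h' + Zon ws = Wb (fun x => h' x + hz x) := by rw [Wb_add hs hZ.subl, ← e1]
    rw [e2, e1] at hd
    have hd' : Pop hz u + Pop hz v - Pop hz (u + v) ≤ Pop (fun x => h' x + hz x) u
        + Pop (fun x => h' x + hz x) v - Pop (fun x => h' x + hz x) (u + v) := by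
      simp only [Pop]
      rw [← add_div, ← sub_div, ← add_div, ← sub_div]
      exact div_le_div_of_nonneg_right hd (uball_pos m).le
    have t1 : 0 < 1 - τ := by linarith [hτ.2]
    have t2 : 0 < 1 + τ := by linarith [hτ.1]
    have hsum := hs.sum hZ.subl
    have lz : ∀ x, (1 - τ) ^ m * (ρ ^ m * ‖x‖) ≤ Pop hz x := by
      intro x
      have := Pop_mono (subl_norm.const_mul (mul_pos hρ t1).le) hZ.subl
        (fun y => le_trans (le_of_eq (by ring)) (hws y).1) x
      rw [Pop_const_mul subl_norm (mul_pos hρ t1), Pop_norm, mul_pow] at this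
      linarith
    have uz : ∀ x, Pop hz x ≤ (1 + τ) ^ m * (ρ ^ m * ‖x‖) := by
      intro x
      have := Pop_mono hZ.subl (subl_norm.const_mul (mul_pos hρ t2).le)
        (fun y => le_trans (hws y).2 (le_of_eq (by ring))) x
      rw [Pop_const_mul subl_norm (mul_pos hρ t2), Pop_norm, mul_pow] at this
      linarith
    have lh : ∀ x, (1 - τ) ^ m * Pop h x ≤ Pop (fun x => h' x + hz x) x := by
      intro x
      have := Pop_mono (hh.const_mul t1.le) hsum (fun y => by
        have h1 := (hws y).1
        have h2 := hnn y
        simp only [hh'] at h2 ⊢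
        nlinarith [hτ.1, norm_nonneg y]) x
      rwa [Pop_const_mul hh t1] at this
    have uh : ∀ x, Pop (fun x => h' x + hz x) x ≤ (1 + τ) ^ m * Pop h x := by
      intro x
      have := Pop_mono hsum (hh.const_mul t2.le) (fun y => by
        have h1 := (hws y).2
        have h2 := hnn y
        simp only [hh'] at h2 ⊢
        nlinarith [hτ.1, norm_nonneg y]) x
      rwa [Pop_const_mul hh t2] at this
    linarith [lz u, lz v, uz (u + v), lh (u + v), uh u, uh v]
  have l1 : Tendsto (fun τ : ℝ => (1 - τ) ^ m * (ρ ^ m * ‖u‖) + (1 - τ) ^ m * (ρ ^ m * ‖v‖)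
        - (1 + τ) ^ m * (ρ ^ m * ‖u + v‖)) (𝓝[>] 0) (𝓝 (ρ ^ m * ‖u‖ + ρ ^ m * ‖v‖
          - ρ ^ m * ‖u + v‖)) := by
    refine Tendsto.mono_left ?_ nhdsWithin_le_nhds
    refine Continuous.tendsto' (by fun_prop) _ _ (by simp)
  have l2 : Tendsto (fun τ : ℝ => (1 + τ) ^ m * Pop h u + (1 + τ) ^ m * Pop h v
        - (1 - τ) ^ m * Pop h (u + v)) (𝓝[>] 0) (𝓝 (Pop h u + Pop h v - Pop h (u + v))) := by
    refine Tendsto.mono_left ?_ nhdsWithin_le_nhds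
    refine Continuous.tendsto' (by fun_prop) _ _ (by simp)
  have := le_of_tendsto_of_tendsto l1 l2 (by
    filter_upwards [Ioo_mem_nhdsGT (zero_lt_one' ℝ)] with τ hτ using key τ hτ)
  linarith

/-! ### The sphere and polar coordinates -/

/-- The unit sphere of `ℝᵏ` as a type. -/
abbrev Sp (k : ℕ) : Type := sphere (0 : Euc k) 1

/-- The rotation invariant probability measure on the unit sphere of `ℝᵏ`. -/
def sg (k : ℕ) : Measure (Sp k) :=
  ((volume : Measure (Euc k)).toSphere univ)⁻¹ • (volume : Measure (Euc k)).toSphere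

theorem Sp.norm_coe {k : ℕ} (x : Sp k) : ‖(x : Euc k)‖ = 1 := mem_sphere_zero_iff_norm.1 x.2

instance {k : ℕ} [NeZero k] : Nonempty (Sp k) :=
  (NormedSpace.sphere_nonempty.2 zero_le_one : (sphere (0 : Euc k) 1).Nonempty).to_subtype

theorem toSphere_univ_ne {k : ℕ} [NeZero k] : (volume : Measure (Euc k)).toSphere univ ≠ 0 := by
  rw [Measure.toSphere_apply_univ]
  refine mul_ne_zero ?_ (measure_ball_pos _ _ one_pos).ne'
  simpa using NeZero.ne k

instance {k : ℕ} [NeZero k] : IsProbabilityMeasure (sg k) where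
  measure_univ := by
    simp only [sg, Measure.smul_apply, smul_eq_mul]
    exact ENNReal.inv_mul_cancel toSphere_univ_ne (measure_ne_top _ _)

theorem toSphere_eq {k : ℕ} [NeZero k] : (volume : Measure (Euc k)).toSphere =
    ((volume : Measure (Euc k)).toSphere univ) • sg k := by
  rw [sg, smul_smul, ENNReal.mul_inv_cancel toSphere_univ_ne (measure_ne_top _ _), one_smul]

/-- The radial projection `x ↦ x / ‖x‖` onto the unit sphere, with an arbitrary value at `0`. -/
def nrm {k : ℕ} [NeZero k] (x : Euc k) : Sp k :=
  if h : x = 0 then Classical.arbitrary _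
  else ⟨‖x‖⁻¹ • x, by simp [norm_smul, h]⟩

theorem nrm_coe {k : ℕ} [NeZero k] {x : Euc k} (h : x ≠ 0) : (nrm x : Euc k) = ‖x‖⁻¹ • x := by
  simp [nrm, h]

theorem norm_smul_nrm {k : ℕ} [NeZero k] (x : Euc k) : ‖x‖ • (nrm x : Euc k) = x := by
  by_cases h : x = 0
  · simp [h]
  · rw [nrm_coe h, smul_smul, mul_inv_cancel₀ (norm_ne_zero_iff.2 h), one_smul]

theorem nrm_smul {k : ℕ} [NeZero k] {t : ℝ} (ht : 0 < t) {x : Euc k} (hx : x ≠ 0) :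
    nrm (t • x) = nrm x := by
  apply Subtype.ext
  rw [nrm_coe (smul_ne_zero ht.ne' hx), nrm_coe hx, norm_smul, smul_smul, Real.norm_of_nonneg ht.le]
  congr 1
  field_simp

theorem nrm_self {k : ℕ} [NeZero k] (x : Sp k) : nrm (x : Euc k) = x := by
  apply Subtype.ext
  have := norm_smul_nrm (x : Euc k)
  rwa [Sp.norm_coe, one_smul] at this

theorem continuousAt_nrm {k : ℕ} [NeZero k] {x : Euc k} (hx : x ≠ 0) : ContinuousAt nrm x := by
  rw [Topology.IsInducing.subtypeVal.continuousAt_iff]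
  have : ContinuousAt (fun y : Euc k => ‖y‖⁻¹ • y) x :=
    (continuousAt_id.norm.inv₀ (norm_ne_zero_iff.2 hx)).smul continuousAt_id
  refine this.congr ?_
  filter_upwards [isOpen_ne.mem_nhds hx] with y hy
  exact (nrm_coe hy).symm

theorem measurable_nrm {k : ℕ} [NeZero k] : Measurable (nrm : Euc k → Sp k) := by
  refine measurable_of_measurable_union_cover {0} {0}ᶜ (measurableSet_singleton _)
    (measurableSet_singleton _).compl (by simp) ?_ ?_
  · exact Subsingleton.measurable
  · apply Continuous.measurable
    rw [continuous_iff_continuousAt]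
    exact fun x => (continuousAt_nrm x.2).comp continuousAt_subtype_val

/-- The radial weight appearing in polar coordinates. -/
def radW (k : ℕ) (a : ℝ → ℝ) : ℝ :=
  ∫ r : Ioi (0 : ℝ), a r ∂(Measure.volumeIoiPow (k - 1))

theorem polar_aux {k : ℕ} [NeZero k] (a : ℝ → ℝ) (f : Sp k → ℝ) :
    ∫ x : Euc k, a ‖x‖ * f (nrm x) =
      radW k a * (((volume : Measure (Euc k)).toSphere univ).toReal * ∫ θ, f θ ∂(sg k)) := by
  have h1 : ∫ x : Euc k, a ‖x‖ * f (nrm x) =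
      ∫ x : ({(0)}ᶜ : Set (Euc k)), a ‖x.1‖ * f (nrm x.1) ∂(volume.comap Subtype.val) := by
    rw [integral_subtype_comap (measurableSet_singleton _).compl fun x => a ‖x‖ * f (nrm x),
      restrict_compl_singleton]
  have h2 : ∫ x : ({(0)}ᶜ : Set (Euc k)), a ‖x.1‖ * f (nrm x.1) ∂(volume.comap Subtype.val) =
      ∫ p, f p.1 * a p.2 ∂((volume : Measure (Euc k)).toSphere.prod
        (.volumeIoiPow (Module.finrank ℝ (Euc k) - 1))) := by
    rw [← (volume : Measure (Euc k)).measurePreserving_homeomorphUnitSphereProd.integral_comp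
        (Homeomorph.measurableEmbedding _) (fun p => f p.1 * a p.2)]
    refine integral_congr_ae (ae_of_all _ fun x => ?_)
    simp only
    rw [mul_comm]
    congr 2
    · apply Subtype.ext
      rw [nrm_coe x.2]
      simp
    · simp
  rw [h1, h2, integral_prod_mul f (fun r : Ioi (0 : ℝ) => a r), mul_comm, radW]
  congr 1
  · simp
  · conv_lhs => rw [toSphere_eq]
    rw [integral_smul_measure, smul_eq_mul]

/-- Polar coordinates for a product of a radial and an angular function. -/
theorem polar_mul {k : ℕ} [NeZero k] (a : ℝ → ℝ) (f : Sp k → ℝ) :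
    ∫ x : Euc k, a ‖x‖ * f (nrm x) = (∫ x : Euc k, a ‖x‖) * ∫ θ, f θ ∂(sg k) := by
  have h := polar_aux (k := k) a (fun _ => 1)
  simp only [mul_one, integral_const, probReal_univ, one_smul] at h
  rw [polar_aux, h]
  ring

theorem ball_avg {k : ℕ} [NeZero k] (f : Sp k → ℝ) :
    ∫ x in closedBall (0 : Euc k) 1, f (nrm x) = uball k * ∫ θ, f θ ∂(sg k) := by
  have h := polar_mul (k := k) ((Iic (1 : ℝ)).indicator 1) f
  have e1 : ∀ g : Euc k → ℝ, (∫ x : Euc k, (Iic (1 : ℝ)).indicator 1 ‖x‖ * g x) =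
      ∫ x in closedBall (0 : Euc k) 1, g x := by
    intro g
    rw [← integral_indicator measurableSet_closedBall]
    refine integral_congr_ae (ae_of_all _ fun x => ?_)
    by_cases hx : ‖x‖ ≤ 1 <;> simp [indicator, hx]
  rw [e1] at h
  rw [h]
  have e2 := e1 (fun _ => 1)
  simp only [mul_one] at e2
  rw [e2]
  simp [uball, Measure.real]

/-- Volume of a star-shaped set with radial function `g`. -/
theorem star_volume {k : ℕ} [NeZero k] {g : Sp k → ℝ} (hg : Continuous g) (hp : ∀ θ, 0 < g θ) :
    (volume {x : Euc k | x ≠ 0 ∧ ‖x‖ < g (nrm x)}).toReal = uball k * ∫ θ, g θ ^ k ∂(sg k) := by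
  have hk : 0 < k := Nat.pos_of_ne_zero (NeZero.ne k)
  have hS : {x : Euc k | x ≠ 0 ∧ ‖x‖ < g (nrm x)} =
      Subtype.val '' ((homeomorphUnitSphereProd (Euc k)) ⁻¹' {p | p.2 < ⟨g p.1, hp p.1⟩}) := by
    ext x
    simp only [mem_ofPred_eq, mem_image, mem_preimage]
    constructor
    · rintro ⟨h0, h⟩
      refine ⟨⟨x, h0⟩, ?_, rfl⟩
      rw [← Subtype.coe_lt_coe]
      convert h using 2
      · simp
      · apply Subtype.ext
        rw [nrm_coe h0]; simp
    · rintro ⟨⟨y, h0⟩, h, rfl⟩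
      refine ⟨h0, ?_⟩
      rw [← Subtype.coe_lt_coe] at h
      convert h using 2
      · simp
      · apply Subtype.ext
        rw [nrm_coe h0]; simp
  have hm : MeasurableSet {p : Sp k × Ioi (0 : ℝ) | p.2 < ⟨g p.1, hp p.1⟩} :=
    (isOpen_lt continuous_snd ((hg.comp continuous_fst).subtype_mk _)).measurableSet
  rw [hS, ← comap_subtype_coe_apply (measurableSet_singleton _).compl,
    (volume : Measure (Euc k)).measurePreserving_homeomorphUnitSphereProd.measure_preimage
      hm.nullMeasurableSet, Measure.prod_apply hm]
  have h3 : ∀ θ : Sp k, Measure.volumeIoiPow (Module.finrank ℝ (Euc k) - 1)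
      (Prod.mk θ ⁻¹' {p : Sp k × Ioi (0 : ℝ) | p.2 < ⟨g p.1, hp p.1⟩}) =
      ENNReal.ofReal (g θ ^ k / k) := by
    intro θ
    have : (Prod.mk θ ⁻¹' {p : Sp k × Ioi (0 : ℝ) | p.2 < ⟨g p.1, hp p.1⟩}) =
      Iio ⟨g θ, hp θ⟩ := rfl
    rw [this, Measure.volumeIoiPow_apply_Iio]
    simp only [finrank_euclideanSpace, Fintype.card_fin]
    rw [Nat.sub_add_cancel hk, Nat.cast_pred hk, sub_add_cancel]
  simp_rw [h3]
  rw [← ofReal_integral_eq_lintegral_ofReal, ENNReal.toReal_ofReal]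
  · conv_lhs => rw [toSphere_eq]
    rw [integral_smul_measure, integral_div, smul_eq_mul, Measure.toSphere_apply_univ]
    have hb : volume (ball (0 : Euc k) 1) = volume (closedBall (0 : Euc k) 1) :=
      (Measure.addHaar_closedBall_eq_addHaar_ball _ _ _).symm
    rw [hb, ENNReal.toReal_mul]
    simp only [finrank_euclideanSpace, Fintype.card_fin, ENNReal.toReal_natCast, uball]
    field_simp
  · exact integral_nonneg fun θ => div_nonneg (pow_nonneg (hp θ).le _) (Nat.cast_nonneg _)
  · have hc : Continuous fun θ => g θ ^ k / (k : ℝ) := by fun_prop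
    obtain ⟨C, hC⟩ := isCompact_univ.exists_bound_of_continuousOn hc.continuousOn
    exact Integrable.of_bound hc.aestronglyMeasurable C (ae_of_all _ fun θ => hC θ (mem_univ _))
  · exact ae_of_all _ fun θ => div_nonneg (pow_nonneg (hp θ).le _) (Nat.cast_nonneg _)

theorem integrable_sg {k : ℕ} [NeZero k] {f : Sp k → ℝ} (hf : Continuous f) :
    Integrable f (sg k) := by
  obtain ⟨C, hC⟩ := isCompact_univ.exists_bound_of_continuousOn hf.continuousOn
  exact Integrable.of_bound hf.aestronglyMeasurable C (ae_of_all _ fun θ => hC θ (mem_univ _))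

/-! ### Linearization of the projection body operator -/

/-- The isometric embedding of the unit sphere of `ℝᵐ` as the great subsphere orthogonal to `u`. -/
def embS {m : ℕ} (u : Sp (m + 1)) (θ : Sp m) : Sp (m + 1) :=
  ⟨emb (u : Euc (m + 1)) θ, by rw [mem_sphere_zero_iff_norm, norm_emb, Sp.norm_coe]⟩

theorem embS_coe {m : ℕ} (u : Sp (m + 1)) (θ : Sp m) :
    (embS u θ : Euc (m + 1)) = emb (u : Euc (m + 1)) θ := rfl

theorem continuous_embS {m : ℕ} (u : Sp (m + 1)) : Continuous (embS u) :=
  ((continuous_emb (u : Euc (m + 1))).comp continuous_subtype_val).subtype_mk _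

/-- If `h` is uniformly convex with modulus `1 - η` and within `δ` of `1` on the sphere, then its
Wulff body almost contains the radial point `h v • v`: the tangential part of a subgradient at `v`
is of size `O(√(δη))`, and enters only quadratically. -/
theorem radial_mem {n : ℕ} {h : Euc n → ℝ} {η δ : ℝ} (hδ : 0 < δ) (hδη : δ ≤ η)
    (hη : η ≤ 1 / 8) (hs : Subl (fun x => h x - (1 - η) * ‖x‖)) (hh : Subl h)
    (hb : ∀ u, ‖u‖ = 1 → |h u - 1| ≤ δ) {v : Euc n} (hv : ‖v‖ = 1) :
    (h v - 16 * δ * η) • v ∈ Wb h := by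
  obtain ⟨p, hp, hpv⟩ := hs.exists_supp v
  simp only [hv, mul_one] at hpv
  have hη0 : 0 < η := hδ.trans_le hδη
  set q : Euc n := p - ⟪p, v⟫ • v with hq
  have hvv : ⟪v, v⟫ = 1 := by rw [real_inner_self_eq_norm_sq, hv]; norm_num
  have hqv : ⟪q, v⟫ = 0 := by
    rw [hq, inner_sub_left, real_inner_smul_left, hvv]; ring
  have hpq : ⟪p, q⟫ = ‖q‖ ^ 2 := by
    have : p = q + ⟪p, v⟫ • v := by rw [hq]; abel
    conv_lhs => rw [this]
    rw [inner_add_left, real_inner_smul_left, real_inner_self_eq_norm_sq,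
      show ⟪v, q⟫ = 0 by rw [real_inner_comm, hqv], mul_zero, add_zero]
  have hle : ∀ x, h x ≤ (1 + δ) * ‖x‖ :=
    hh.bound fun u hu => by linarith [(abs_le.1 (hb u hu)).2]
  have hqb : ‖q‖ ^ 2 ≤ 8 * δ * η := by
    set t : ℝ := 1 / (2 * η) with ht
    have htη : η * t = 1 / 2 := by rw [ht]; field_simp
    have ht0 : 0 < t := by rw [ht]; positivity
    have h1 := hp (v + t • q)
    simp only at h1
    rw [inner_add_right, real_inner_smul_right, hpq, hpv] at h1
    have h2 := hle (v + t • q)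
    have hn2 : ‖v + t • q‖ ^ 2 = 1 + t ^ 2 * ‖q‖ ^ 2 := by
      rw [norm_add_sq_real, real_inner_smul_right, real_inner_comm, hqv, norm_smul, hv,
        Real.norm_of_nonneg ht0.le]; ring
    have hn : ‖v + t • q‖ ≤ 1 + t ^ 2 * ‖q‖ ^ 2 / 2 := by
      apply le_of_sq_le_sq _ (by positivity)
      nlinarith [sq_nonneg (t ^ 2 * ‖q‖ ^ 2)]
    have h3 := (abs_le.1 (hb v hv)).1
    have h4 : t * ‖q‖ ^ 2 ≤ 2 * δ + η * (t ^ 2 * ‖q‖ ^ 2) := by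
      have : (δ + η) * ‖v + t • q‖ ≤ (δ + η) * (1 + t ^ 2 * ‖q‖ ^ 2 / 2) := by gcongr
      have h5 : δ * (t ^ 2 * ‖q‖ ^ 2) ≤ η * (t ^ 2 * ‖q‖ ^ 2) := by gcongr
      nlinarith
    have h5 : η * (t ^ 2 * ‖q‖ ^ 2) = t * ‖q‖ ^ 2 / 2 := by
      calc η * (t ^ 2 * ‖q‖ ^ 2) = (η * t) * (t * ‖q‖ ^ 2) := by ring
        _ = _ := by rw [htη]; ring
    have h6 : t * ‖q‖ ^ 2 ≤ 4 * δ := by linarith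
    have h7 : η * (t * ‖q‖ ^ 2) ≤ η * (4 * δ) := by gcongr
    have h8 : η * (t * ‖q‖ ^ 2) = ‖q‖ ^ 2 / 2 := by rw [← mul_assoc, htη]; ring
    linarith
  have hδη' : δ * η ≤ 1 / 64 := by nlinarith
  have hpos : 0 < δ * η := by positivity
  have hnorm : ‖(1 - η - 16 * δ * η) • v - q‖ ≤ 1 - η := by
    apply le_of_sq_le_sq _ (by linarith)
    rw [norm_sub_sq_real, real_inner_smul_left, real_inner_comm, hqv, norm_smul, hv, mul_one,
      Real.norm_eq_abs, sq_abs]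
    nlinarith
  intro z
  have hdec : (h v - 16 * δ * η) • v = p + ((1 - η - 16 * δ * η) • v - q) := by
    rw [hq, hpv]
    module
  rw [hdec, inner_add_left]
  have h1 := hp z
  simp only at h1
  have h2 := real_inner_le_norm ((1 - η - 16 * δ * η) • v - q) z
  have h3 : ‖(1 - η - 16 * δ * η) • v - q‖ * ‖z‖ ≤ (1 - η) * ‖z‖ := by gcongr
  linarith

theorem pow_taylor (m : ℕ) {z : ℝ} (hz : |z| ≤ 1) : |(1 + z) ^ m - 1 - m * z| ≤ 4 ^ m * z ^ 2 := by
  induction m with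
  | zero => simp; positivity
  | succ m ih =>
    have h1 : (1 + z) ^ (m + 1) - 1 - ((m + 1 : ℕ) : ℝ) * z =
        (1 + z) * ((1 + z) ^ m - 1 - m * z) + m * z ^ 2 := by push_cast; ring
    rw [h1]
    have h2 : |1 + z| ≤ 2 := by
      calc |1 + z| ≤ |1| + |z| := abs_add_le _ _
        _ ≤ 2 := by rw [abs_one]; linarith
    have h3 : (m : ℝ) ≤ 4 ^ m := by
      exact_mod_cast (Nat.lt_pow_self (by norm_num)).le
    calc |(1 + z) * ((1 + z) ^ m - 1 - m * z) + m * z ^ 2|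
        ≤ |1 + z| * |(1 + z) ^ m - 1 - m * z| + |m * z ^ 2| := by
          rw [← abs_mul]; exact abs_add_le _ _
      _ ≤ 2 * (4 ^ m * z ^ 2) + 4 ^ m * z ^ 2 := by
          rw [abs_of_nonneg (by positivity : (0 : ℝ) ≤ m * z ^ 2)]
          gcongr
      _ ≤ _ := by rw [pow_succ 4 m]; nlinarith [mul_nonneg (by positivity : (0:ℝ) ≤ 4 ^ m) (sq_nonneg z)]

/-- The constant in the linearization estimate `Pop_linear`. -/
def CB (m : ℕ) : ℝ := 16 * m + 9 * 4 ^ m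

theorem CB_nonneg (m : ℕ) : 0 ≤ CB m := by unfold CB; positivity

/-- First-order expansion of the normalized projection body operator at the unit ball. -/
theorem Pop_linear {m : ℕ} [NeZero m] {h : Euc (m + 1) → ℝ} {η δ : ℝ} (hδ : 0 < δ) (hδη : δ ≤ η)
    (hη : η ≤ 1 / 8) (hs : Subl (fun x => h x - (1 - η) * ‖x‖)) (hh : Subl h)
    (hb : ∀ u, ‖u‖ = 1 → |h u - 1| ≤ δ) (u : Sp (m + 1)) :
    |Pop h u - 1 - m * ∫ θ, (h (embS u θ) - 1) ∂(sg m)| ≤ CB m * (η * δ) := by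
  have hu : ‖(u : Euc (m + 1))‖ = 1 := u.norm_coe
  set ξ : ℝ := 16 * δ * η with hξ
  have hη0 : 0 < η := hδ.trans_le hδη
  have hξ0 : 0 < ξ := by positivity
  have hξ2 : ξ ≤ 2 * δ := by rw [hξ]; nlinarith
  set g : Sp m → ℝ := fun θ => h (embS u θ) with hg
  have hgc : Continuous g :=
    hh.continuous.comp (continuous_subtype_val.comp (continuous_embS u))
  have hgb : ∀ θ, |g θ - 1| ≤ δ := fun θ => hb _ (Sp.norm_coe _)
  have hle : ∀ θ, 1 - δ ≤ g θ ∧ g θ ≤ 1 + δ := fun θ =>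
    ⟨by linarith [(abs_le.1 (hgb θ)).1], by linarith [(abs_le.1 (hgb θ)).2]⟩
  have hK := hh.cc
  have hlow : {y : Euc m | y ≠ 0 ∧ ‖y‖ < g (nrm y) - ξ} ⊆ pr (u : Euc (m + 1)) '' Wb h := by
    rintro y ⟨hy0, hy⟩
    refine ⟨emb (u : Euc (m + 1)) y, ?_, pr_emb _ y⟩
    have h1 := radial_mem hδ hδη hη hs hh hb (v := embS u (nrm y)) (Sp.norm_coe _)
    have h2 : emb (u : Euc (m + 1)) y = ‖y‖ • (embS u (nrm y) : Euc (m + 1)) := by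
      rw [embS_coe, ← map_smul, norm_smul_nrm]
    have hpos : 0 < g (nrm y) - ξ := (norm_nonneg y).trans_lt hy
    intro z
    have h3 := h1 z
    rw [real_inner_smul_left] at h3
    rw [h2, real_inner_smul_left]
    have hz : 0 ≤ h z := by
      have h0 := hs.exists_supp z
      by_cases hz0 : z = 0
      · rw [hz0, hh.zero]
      · obtain ⟨w, hw, hzw⟩ := eq_smul_unit hz0
        rw [hzw, hh.smul _ (norm_nonneg _)]
        exact mul_nonneg (norm_nonneg _) (by linarith [(abs_le.1 (hb w hw)).1])
    by_cases hsgn : 0 ≤ ⟪(embS u (nrm y) : Euc (m + 1)), z⟫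
    · exact (mul_le_mul_of_nonneg_right hy.le hsgn).trans h3
    · push Not at hsgn
      exact (mul_nonpos_of_nonneg_of_nonpos (norm_nonneg _) hsgn.le).trans hz
  have hup : pr (u : Euc (m + 1)) '' Wb h ⊆ {0} ∪ {y : Euc m | y ≠ 0 ∧ ‖y‖ < g (nrm y) + ξ} := by
    rintro _ ⟨x, hx, rfl⟩
    by_cases hy : pr (u : Euc (m + 1)) x = 0
    · left; exact hy
    right
    refine ⟨hy, ?_⟩
    set y := pr (u : Euc (m + 1)) x
    have h1 : ‖y‖ = ⟪x, (embS u (nrm y) : Euc (m + 1))⟫ := by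
      rw [embS_coe, inner_emb_pr hu]
      change ‖y‖ = ⟪y, (nrm y : Euc m)⟫
      conv_rhs => rw [← norm_smul_nrm y]
      rw [nrm_smul (norm_pos_iff.2 hy) (by rw [← norm_ne_zero_iff, Sp.norm_coe]; norm_num),
        nrm_self, real_inner_smul_left, real_inner_self_eq_norm_sq, Sp.norm_coe]
      ring
    have h2 := hx (embS u (nrm y) : Euc (m + 1))
    rw [h1]
    exact h2.trans_lt (by simp only [hg]; linarith)
  have hKt : volume (pr (u : Euc (m + 1)) '' Wb h) < ∞ := (hK.image _).lt_top
  have hPop : Pop h u * uball m = vol (pr (u : Euc (m + 1)) '' Wb h) := by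
    rw [Pop, pf_unit hK hu, div_mul_cancel₀ _ (uball_pos m).ne']
  have hpl : ∀ θ, 0 < g θ - ξ := fun θ => by linarith [(hle θ).1]
  have hpu : ∀ θ, 0 < g θ + ξ := fun θ => by linarith [(hle θ).1]
  have i1 : ∫ θ, (g θ - ξ) ^ m ∂(sg m) ≤ Pop h u := by
    have h1 := star_volume (g := fun θ => g θ - ξ) (hgc.sub continuous_const) hpl
    have h2 := ENNReal.toReal_mono hKt.ne (measure_mono (μ := volume) hlow)
    rw [h1] at h2
    change _ ≤ vol _ at h2
    rw [← hPop, mul_comm] at h2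
    exact le_of_mul_le_mul_right h2 (uball_pos m)
  have i2 : Pop h u ≤ ∫ θ, (g θ + ξ) ^ m ∂(sg m) := by
    have h1 := star_volume (g := fun θ => g θ + ξ) (hgc.add continuous_const) hpu
    have hfin : volume {y : Euc m | y ≠ 0 ∧ ‖y‖ < g (nrm y) + ξ} ≠ ∞ := by
      refine ((measure_mono (fun y hy => ?_)).trans_lt
        (measure_ball_lt_top (μ := volume) (x := (0 : Euc m)) (r := 4))).ne
      rw [mem_ball_zero_iff]
      linarith [hy.2, (hle (nrm y)).2]
    have hfin2 : volume ({0} ∪ {y : Euc m | y ≠ 0 ∧ ‖y‖ < g (nrm y) + ξ}) =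
        volume {y : Euc m | y ≠ 0 ∧ ‖y‖ < g (nrm y) + ξ} := by
      have : Nontrivial (Euc m) := inferInstance
      apply le_antisymm _ (measure_mono subset_union_right)
      refine (measure_union_le _ _).trans ?_
      rw [measure_singleton, zero_add]
    have h2 := ENNReal.toReal_mono (by rw [hfin2]; exact hfin) (measure_mono (μ := volume) hup)
    rw [hfin2, h1] at h2
    change vol _ ≤ _ at h2
    rw [← hPop, mul_comm (uball m)] at h2
    exact le_of_mul_le_mul_right h2 (uball_pos m)
  have key : ∀ s : ℝ, |s| ≤ ξ → |∫ θ, (g θ + s) ^ m ∂(sg m) - 1 - m * ∫ θ, (g θ - 1) ∂(sg m)| ≤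
      CB m * (η * δ) := by
    intro s hsx
    have e : ∫ θ, (g θ + s) ^ m ∂(sg m) - 1 - m * ∫ θ, (g θ - 1) ∂(sg m) =
        ∫ θ, ((g θ + s) ^ m - 1 - m * (g θ - 1)) ∂(sg m) := by
      rw [integral_sub (f := fun θ => (g θ + s) ^ m - 1), integral_sub (f := fun θ => (g θ + s) ^ m),
        integral_const_mul]
      · simp
      · exact integrable_sg (by fun_prop)
      · exact integrable_sg (by fun_prop)
      · exact integrable_sg (by fun_prop)
      · exact integrable_sg (by fun_prop)
    rw [e]
    have hbd : ∀ θ, ‖(g θ + s) ^ m - 1 - m * (g θ - 1)‖ ≤ CB m * (η * δ) := by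
      intro θ
      rw [Real.norm_eq_abs]
      have hz : |g θ - 1 + s| ≤ 3 * δ := (abs_add_le _ _).trans (by linarith [hgb θ])
      have h1 := pow_taylor m (z := g θ - 1 + s) (by linarith)
      have h2 : (g θ + s) ^ m - 1 - m * (g θ - 1) =
          ((1 + (g θ - 1 + s)) ^ m - 1 - m * (g θ - 1 + s)) + m * s := by ring_nf
      rw [h2]
      refine (abs_add_le _ _).trans ?_
      rw [abs_mul, abs_of_nonneg (Nat.cast_nonneg m : (0 : ℝ) ≤ m)]
      have h3 : (g θ - 1 + s) ^ 2 ≤ 9 * (η * δ) := by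
        rw [← sq_abs]
        nlinarith [abs_nonneg (g θ - 1 + s)]
      calc _ ≤ 4 ^ m * (9 * (η * δ)) + m * (16 * (η * δ)) := by
            refine add_le_add (h1.trans (by gcongr)) ?_
            gcongr
            exact hsx.trans_eq (by rw [hξ]; ring)
        _ = _ := by unfold CB; ring
    refine (norm_integral_le_of_norm_le_const (ae_of_all _ hbd)).trans ?_
    simp
  have k1 := key (-ξ) (by rw [abs_neg, abs_of_pos hξ0])
  have k2 := key ξ (by rw [abs_of_pos hξ0])
  simp only [← sub_eq_add_neg] at k1
  rw [abs_le] at k1 k2 ⊢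
  constructor <;> linarith [k1.1, k2.2]

/-! ### Moments of linear forms on the sphere -/

theorem inner_nrm {k : ℕ} [NeZero k] {x : Euc k} (hx : x ≠ 0) (w : Euc k) :
    ⟪(nrm x : Euc k), w⟫ = ‖x‖⁻¹ * ⟪x, w⟫ := by
  rw [nrm_coe hx, real_inner_smul_left]

/-- Rotation invariance of `sg`, for functions of one linear form. -/
theorem avg_inner {k : ℕ} [NeZero k] (F : ℝ → ℝ) {w w' : Euc k} (h : ‖w‖ = ‖w'‖) :
    ∫ θ : Sp k, F ⟪(θ : Euc k), w⟫ ∂(sg k) = ∫ θ : Sp k, F ⟪(θ : Euc k), w'⟫ ∂(sg k) := by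
  have key : ∫ x in closedBall (0 : Euc k) 1, F ⟪(nrm x : Euc k), w⟫ =
      ∫ x in closedBall (0 : Euc k) 1, F ⟪(nrm x : Euc k), w'⟫ := by
    set g := (ℝ ∙ (w - w'))ᗮ.reflection with hg
    have hgw : g w = w' := Submodule.reflection_sub h
    have hmp : MeasurePreserving g volume volume := g.measurePreserving
    have hpre : g ⁻¹' (closedBall (0 : Euc k) 1) = closedBall 0 1 := by
      ext x; simp
    have h1 := hmp.setIntegral_preimage_emb g.toHomeomorph.measurableEmbedding
      (fun x => F ⟪(nrm x : Euc k), w'⟫) (closedBall (0 : Euc k) 1)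
    rw [hpre] at h1
    rw [← h1]
    refine integral_congr_ae ?_
    have hne : ∀ᵐ x ∂(volume.restrict (closedBall (0 : Euc k) 1)), x ≠ 0 :=
      ae_restrict_of_ae (by simp [ae_iff, measure_singleton])
    filter_upwards [hne] with x hx
    have hgx : g x ≠ 0 := by
      rw [← norm_ne_zero_iff, g.norm_map, norm_ne_zero_iff]; exact hx
    rw [inner_nrm hx, inner_nrm hgx, g.norm_map, ← hgw, g.inner_map_map]
  rw [ball_avg (fun θ : Sp k => F ⟪(θ : Euc k), w⟫),
    ball_avg (fun θ : Sp k => F ⟪(θ : Euc k), w'⟫)] at key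
  exact mul_left_cancel₀ (uball_pos k).ne' key

/-- The `j`-th moment of a coordinate on the unit sphere of `ℝᵏ`. -/
def cm (k : ℕ) [NeZero k] (j : ℕ) : ℝ :=
  ∫ θ : Sp k, ⟪(θ : Euc k), (Classical.arbitrary (Sp k) : Sp k)⟫ ^ j ∂(sg k)

theorem avg_pow {k : ℕ} [NeZero k] (j : ℕ) (w : Euc k) :
    ∫ θ : Sp k, ⟪(θ : Euc k), w⟫ ^ j ∂(sg k) = ‖w‖ ^ j * cm k j := by
  rw [cm, ← integral_const_mul,
    avg_inner (fun t => t ^ j) (w' := ‖w‖ • ((Classical.arbitrary (Sp k) : Sp k) : Euc k))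
      (by rw [norm_smul, Sp.norm_coe]; simp)]
  simp only [real_inner_smul_right, mul_pow]

theorem continuous_inner_pow {k : ℕ} (w : Euc k) (j : ℕ) :
    Continuous fun θ : Sp k => ⟪(θ : Euc k), w⟫ ^ j :=
  (continuous_subtype_val.inner continuous_const).pow j

theorem cm_two (k : ℕ) [NeZero k] : (k : ℝ) * cm k 2 = 1 := by
  have h : ∫ θ : Sp k, ∑ i : Fin k, ⟪(θ : Euc k), EuclideanSpace.single i (1 : ℝ)⟫ ^ 2 ∂(sg k) = 1 := by
    have : ∀ θ : Sp k, ∑ i : Fin k, ⟪(θ : Euc k), EuclideanSpace.single i (1 : ℝ)⟫ ^ 2 = 1 := by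
      intro θ
      have h1 := EuclideanSpace.real_norm_sq_eq (θ : Euc k)
      rw [Sp.norm_coe] at h1
      simp only [EuclideanSpace.inner_single_right]
      simpa using h1.symm
    simp [this]
  rw [integral_finsetSum _ fun i _ => integrable_sg (continuous_inner_pow _ _)] at h
  simp only [avg_pow] at h
  simpa using h

theorem abs_inner_le_one {k : ℕ} (θ v : Sp k) : |⟪(θ : Euc k), (v : Euc k)⟫| ≤ 1 := by
  have := abs_real_inner_le_norm (θ : Euc k) v
  rwa [θ.norm_coe, v.norm_coe, mul_one] at this

theorem cm_nonneg (k : ℕ) [NeZero k] (j : ℕ) : 0 ≤ cm k (2 * j) :=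
  integral_nonneg fun θ => by
    simp only [pow_mul]
    positivity

theorem cm_le (k : ℕ) [NeZero k] {j : ℕ} (hj : 2 ≤ j) : cm k (2 * j) ≤ cm k 4 := by
  refine integral_mono (integrable_sg (continuous_inner_pow _ _))
    (integrable_sg (continuous_inner_pow _ _)) fun θ => ?_
  have h1 := abs_inner_le_one θ (Classical.arbitrary (Sp k))
  simp only
  rw [show 4 = 2 * 2 from rfl, pow_mul _ 2 j, pow_mul _ 2 2]
  exact pow_le_pow_of_le_one (sq_nonneg _) ((sq_le_one_iff_abs_le_one _).2 h1) hj

instance {k : ℕ} [NeZero k] : (sg k).IsOpenPosMeasure where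
  open_pos U hU hne := by
    simp only [sg, Measure.smul_apply, smul_eq_mul]
    exact mul_ne_zero (ENNReal.inv_ne_zero.2 (measure_ne_top _ _)) (hU.measure_ne_zero _ hne)

theorem integral_sg_pos {k : ℕ} [NeZero k] {f : Sp k → ℝ} (hf : Continuous f) (h0 : ∀ θ, 0 ≤ f θ)
    {θ : Sp k} (hθ : f θ ≠ 0) : 0 < ∫ θ, f θ ∂(sg k) :=
  hf.integral_pos_of_hasCompactSupport_nonneg_nonzero (HasCompactSupport.of_compactSpace f) h0 hθ

theorem cm_four_lt (k : ℕ) [NeZero k] (hk : 2 ≤ k) : cm k 4 < cm k 2 := by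
  have h : 0 < ∫ θ : Sp k, (⟪(θ : Euc k), (Classical.arbitrary (Sp k) : Sp k)⟫ ^ 2 -
      ⟪(θ : Euc k), (Classical.arbitrary (Sp k) : Sp k)⟫ ^ 4) ∂(sg k) := by
    set e : Euc k := ((Classical.arbitrary (Sp k) : Sp k) : Euc k) with he
    have hen : ‖e‖ = 1 := Sp.norm_coe _
    obtain ⟨b, hb⟩ : ∃ b : Euc k, ‖b‖ = 1 ∧ ⟪b, e⟫ = 0 := by
      obtain ⟨b, hb, hb0⟩ : ∃ b ∈ (ℝ ∙ e)ᗮ, b ≠ 0 := by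
        apply Submodule.exists_mem_ne_zero_of_ne_bot
        intro hbot
        rw [Submodule.orthogonal_eq_bot_iff] at hbot
        have h1 := finrank_span_le_card (R := ℝ) ({e} : Set (Euc k))
        rw [hbot, finrank_top] at h1
        simp at h1
        omega
      obtain ⟨u, hu, hbu⟩ := eq_smul_unit hb0
      refine ⟨u, hu, ?_⟩
      have h2 := Submodule.mem_orthogonal_singleton_iff_inner_left.1 hb
      rw [hbu, real_inner_smul_left] at h2
      exact (mul_eq_zero.1 h2).resolve_left (norm_ne_zero_iff.2 hb0)
    have hen2 : ⟪e, e⟫ = 1 := by rw [real_inner_self_eq_norm_sq, hen]; norm_num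
    have hθ : ‖(3 / 5 : ℝ) • e + (4 / 5 : ℝ) • b‖ = 1 := by
      have : ‖(3 / 5 : ℝ) • e + (4 / 5 : ℝ) • b‖ ^ 2 = 1 := by
        rw [norm_add_sq_real, real_inner_smul_left, real_inner_smul_right, real_inner_comm, hb.2,
          norm_smul, norm_smul, hen, hb.1]
        norm_num
      nlinarith [norm_nonneg ((3 / 5 : ℝ) • e + (4 / 5 : ℝ) • b)]
    refine integral_sg_pos (θ := ⟨_, mem_sphere_zero_iff_norm.2 hθ⟩)
      ((continuous_inner_pow _ _).sub (continuous_inner_pow _ _)) (fun θ => ?_) ?_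
    · have h1 := (sq_le_one_iff_abs_le_one _).2 (abs_inner_le_one θ (Classical.arbitrary (Sp k)))
      simp only [← he] at h1
      nlinarith [sq_nonneg ⟪(θ : Euc k), e⟫]
    · simp only [inner_add_left, real_inner_smul_left, hen2, hb.2]
      norm_num
  rw [integral_sub (integrable_sg (continuous_inner_pow _ _))
    (integrable_sg (continuous_inner_pow _ _))] at h
  exact sub_pos.1 h

/-! ### Density of powers of linear forms -/

/-- The power `x ↦ ⟪x, a⟫ ^ j` of a linear form, restricted to the sphere. -/
def powF {k : ℕ} (a : Euc k) (j : ℕ) : C(Sp k, ℝ) := ⟨_, continuous_inner_pow a j⟩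

theorem powF_apply {k : ℕ} (a : Euc k) (j : ℕ) (x : Sp k) : powF a j x = ⟪(x : Euc k), a⟫ ^ j := rfl

/-- The exponential of a linear form, restricted to the sphere. -/
def expF {k : ℕ} (a : Euc k) : C(Sp k, ℝ) :=
  ⟨fun x => Real.exp ⟪(x : Euc k), a⟫,
    Real.continuous_exp.comp (continuous_subtype_val.inner continuous_const)⟩

/-- The span of all powers of linear forms. -/
def polF (k : ℕ) : Submodule ℝ C(Sp k, ℝ) := Submodule.span ℝ {f | ∃ a j, f = powF a j}

theorem expF_mem {k : ℕ} (a : Euc k) : expF a ∈ (polF k).topologicalClosure := by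
  have hsum : HasSum (fun j : ℕ => ((j.factorial : ℝ)⁻¹) • powF a 1 ^ j)
      (NormedSpace.exp (powF a 1)) := NormedSpace.exp_series_hasSum_exp' (𝕂 := ℝ) _
  have he : NormedSpace.exp (powF a 1) = expF a := by
    ext x
    have h1 := hsum.map (ContinuousMap.evalCLM ℝ x) (ContinuousMap.evalCLM ℝ x).continuous
    have h2 : HasSum (fun j : ℕ => ((j.factorial : ℝ)⁻¹) • (⟪(x : Euc k), a⟫) ^ j)
      (NormedSpace.exp ⟪(x : Euc k), a⟫) := NormedSpace.exp_series_hasSum_exp' (𝕂 := ℝ) _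
    rw [← Real.exp_eq_exp_ℝ] at h2
    refine h1.unique ?_
    convert h2 using 1
    · ext j
      simp [powF]
    · rfl
  rw [he] at hsum
  refine mem_closure_of_tendsto hsum (Eventually.of_forall fun s => ?_)
  refine Submodule.sum_mem _ fun j _ => Submodule.smul_mem _ _ (Submodule.subset_span ⟨a, j, ?_⟩)
  ext x
  simp [powF]

theorem polF_dense (k : ℕ) : (polF k).topologicalClosure = ⊤ := by
  set A := Algebra.adjoin ℝ {f : C(Sp k, ℝ) | ∃ a, f = expF a} with hA
  have h1 : Subalgebra.toSubmodule A ≤ (polF k).topologicalClosure := by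
    rw [hA, Algebra.adjoin_eq_span, Submodule.span_le]
    intro f hf
    have : ∃ a, f = expF a := by
      refine Submonoid.closure_induction (motive := fun f _ => ∃ a, f = expF a) (fun f h => h) ?_ ?_ hf
      · exact ⟨0, by ext x; simp [expF]⟩
      · rintro _ _ _ _ ⟨a, rfl⟩ ⟨b, rfl⟩
        exact ⟨a + b, by ext x; simp [expF, inner_add_right, Real.exp_add]⟩
    obtain ⟨a, rfl⟩ := this
    exact expF_mem a
  have h2 : A.SeparatesPoints := by
    intro x y hxy
    refine ⟨expF (x - y : Euc k), ⟨expF (x - y : Euc k), Algebra.subset_adjoin ⟨_, rfl⟩, rfl⟩, ?_⟩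
    intro h
    simp only [expF, ContinuousMap.coe_mk, Real.exp_eq_exp] at h
    have : ⟪(x - y : Euc k), (x - y : Euc k)⟫ = 0 := by
      rw [inner_sub_left, h, sub_self]
    rw [inner_self_eq_zero, sub_eq_zero] at this
    exact hxy (Subtype.ext this)
  have h3 := ContinuousMap.subalgebra_topologicalClosure_eq_top_of_separatesPoints A h2
  rw [eq_top_iff]
  intro f _
  have hf : f ∈ A.topologicalClosure := by rw [h3]; trivial
  have hc : closure (A : Set C(Sp k, ℝ)) ⊆ (polF k).topologicalClosure :=
    closure_minimal h1 (polF k).isClosed_topologicalClosure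
  exact hc hf

theorem polF_approx {k : ℕ} (f : C(Sp k, ℝ)) {ε : ℝ} (hε : 0 < ε) : ∃ g ∈ polF k, ‖f - g‖ < ε := by
  have hf : f ∈ (polF k).topologicalClosure := by rw [polF_dense]; trivial
  obtain ⟨g, hg, hd⟩ := Metric.mem_closure_iff.1 hf ε hε
  exact ⟨g, hg, by rwa [dist_eq_norm_sub] at hd⟩

/-! ### The spherical Radon transform -/

/-- The averages of `f` over great subspheres. -/
def Rfun {m : ℕ} (f : C(Sp (m + 1), ℝ)) (u : Sp (m + 1)) : ℝ := ∫ θ, f (embS u θ) ∂(sg m)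

theorem integrable_embS {m : ℕ} [NeZero m] (f : C(Sp (m + 1), ℝ)) (u : Sp (m + 1)) :
    Integrable (fun θ => f (embS u θ)) (sg m) :=
  integrable_sg (f.continuous.comp (continuous_embS u))

theorem abs_Rfun_le {m : ℕ} [NeZero m] (f : C(Sp (m + 1), ℝ)) (u : Sp (m + 1)) :
    |Rfun f u| ≤ ‖f‖ := by
  refine (norm_integral_le_of_norm_le_const (ae_of_all _ fun θ => f.norm_coe_le_norm _)).trans ?_
  simp

theorem Rfun_add {m : ℕ} [NeZero m] (f g : C(Sp (m + 1), ℝ)) (u : Sp (m + 1)) :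
    Rfun (f + g) u = Rfun f u + Rfun g u :=
  integral_add (integrable_embS f u) (integrable_embS g u)

theorem Rfun_smul {m : ℕ} [NeZero m] (c : ℝ) (f : C(Sp (m + 1), ℝ)) (u : Sp (m + 1)) :
    Rfun (c • f) u = c * Rfun f u :=
  integral_const_mul c _

theorem Rfun_sub {m : ℕ} [NeZero m] (f g : C(Sp (m + 1), ℝ)) (u : Sp (m + 1)) :
    Rfun (f - g) u = Rfun f u - Rfun g u :=
  integral_sub (integrable_embS f u) (integrable_embS g u)

theorem norm_pr_sq {m : ℕ} (u : Sp (m + 1)) (a : Euc (m + 1)) :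
    ‖pr (u : Euc (m + 1)) a‖ ^ 2 = ‖a‖ ^ 2 - ⟪(u : Euc (m + 1)), a⟫ ^ 2 := by
  rw [norm_sq_decomp u.norm_coe a, real_inner_comm]; ring

/-- The Radon transform of a power of a linear form, in terms of the moments `cm`. -/
theorem Rfun_powF {m : ℕ} [NeZero m] (a : Euc (m + 1)) (j : ℕ) (u : Sp (m + 1)) :
    Rfun (powF a j) u = ‖pr (u : Euc (m + 1)) a‖ ^ j * cm m j := by
  rw [← avg_pow, Rfun]
  congr 1
  ext θ
  rw [powF_apply, embS_coe, real_inner_comm, inner_emb_pr u.norm_coe, real_inner_comm]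

theorem continuous_Rfun {m : ℕ} [NeZero m] (f : C(Sp (m + 1), ℝ)) : Continuous (Rfun f) := by
  have hpol : ∀ g ∈ polF (m + 1), Continuous (Rfun g) := by
    intro g hg
    refine Submodule.span_induction ?_ ?_ ?_ ?_ hg
    · rintro _ ⟨a, j, rfl⟩
      have : Rfun (powF a j) = fun u : Sp (m + 1) =>
          √(‖a‖ ^ 2 - ⟪(u : Euc (m + 1)), a⟫ ^ 2) ^ j * cm m j := by
        ext u
        rw [Rfun_powF, ← norm_pr_sq, Real.sqrt_sq (norm_nonneg _)]
      rw [this]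
      have h1 := continuous_inner_pow a 2
      fun_prop
    · have : Rfun (0 : C(Sp (m + 1), ℝ)) = fun _ => 0 := by
        ext u; simp [Rfun]
      rw [this]; exact continuous_const
    · intro x y _ _ hx hy
      rw [show Rfun (x + y) = fun u => Rfun x u + Rfun y u from funext (Rfun_add x y)]
      exact hx.add hy
    · intro c x _ hx
      rw [show Rfun (c • x) = fun u => c * Rfun x u from funext (Rfun_smul c x)]
      exact continuous_const.mul hx
  refine continuous_of_uniform_approx_of_continuous fun U hU => ?_
  obtain ⟨ε, hε, hU⟩ := Metric.mem_uniformity_dist.1 hU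
  obtain ⟨g, hg, hd⟩ := polF_approx f hε
  refine ⟨Rfun g, hpol g hg, fun u => hU ?_⟩
  rw [Real.dist_eq, ← Rfun_sub]
  exact (abs_Rfun_le _ _).trans_lt hd

/-- The spherical Radon transform as a linear operator on continuous functions. -/
def Rop {m : ℕ} [NeZero m] : C(Sp (m + 1), ℝ) →ₗ[ℝ] C(Sp (m + 1), ℝ) where
  toFun f := ⟨Rfun f, continuous_Rfun f⟩
  map_add' f g := by ext u; exact Rfun_add f g u
  map_smul' c f := by ext u; exact Rfun_smul c f u

theorem Rop_apply {m : ℕ} [NeZero m] (f : C(Sp (m + 1), ℝ)) (u : Sp (m + 1)) :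
    Rop f u = ∫ θ, f (embS u θ) ∂(sg m) := rfl

theorem abs_Rop_le {m : ℕ} [NeZero m] (f : C(Sp (m + 1), ℝ)) (u : Sp (m + 1)) :
    |Rop f u| ≤ ‖f‖ := abs_Rfun_le f u

/-! ### Band averages -/

/-- The indicator function of the interval `(-τ, τ)`. -/
def slab (τ t : ℝ) : ℝ := if |t| < τ then 1 else 0

theorem slab_nonneg (τ t : ℝ) : 0 ≤ slab τ t := by unfold slab; split_ifs <;> norm_num
theorem slab_le_one (τ t : ℝ) : slab τ t ≤ 1 := by unfold slab; split_ifs <;> norm_num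
theorem abs_slab_le (τ t : ℝ) : |slab τ t| ≤ 1 := by
  rw [abs_of_nonneg (slab_nonneg _ _)]; exact slab_le_one _ _

theorem measurable_slab (τ : ℝ) : Measurable (slab τ) :=
  Measurable.ite (measurableSet_lt measurable_norm measurable_const) measurable_const
    measurable_const

theorem measurableSet_ball_slab {k : ℕ} (e : Euc k) (r : ℝ) :
    MeasurableSet {x : Euc k | ‖x‖ ≤ 1 ∧ |⟪x, e⟫| < r} := by
  have h1 : MeasurableSet {x : Euc k | ‖x‖ ≤ 1} := measurableSet_le (by fun_prop) (by fun_prop)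
  have h2 : MeasurableSet {x : Euc k | |⟪x, e⟫| < r} :=
    (isOpen_lt (by fun_prop) (by fun_prop)).measurableSet
  exact h1.inter h2

theorem volume_slab_le {d : ℕ} {e : Euc (d + 1)} (he : ‖e‖ = 1) {r : ℝ} (hr : 0 ≤ r) :
    (volume {x : Euc (d + 1) | ‖x‖ ≤ 1 ∧ |⟪x, e⟫| < r}).toReal ≤ 2 * r * uball d := by
  have hS : MeasurableSet {x : Euc (d + 1) | ‖x‖ ≤ 1 ∧ |⟪x, e⟫| < r} :=
    measurableSet_ball_slab e _
  have h1 : volume {x : Euc (d + 1) | ‖x‖ ≤ 1 ∧ |⟪x, e⟫| < r} ≤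
      ENNReal.ofReal (2 * r) * volume (closedBall (0 : Euc d) 1) := by
    rw [meas_frame he hS]
    calc _ ≤ ∫⁻ y, (closedBall (0 : Euc d) 1).indicator (fun _ => ENNReal.ofReal (2 * r)) y := by
          refine lintegral_mono fun y => ?_
          by_cases hy : y ∈ closedBall (0 : Euc d) 1
          · rw [indicator_of_mem hy]
            refine (measure_mono (t := Ioo (-r) r) ?_).trans ?_
            · intro s hs
              have h2 := hs.2
              rw [inner_add_left, real_inner_smul_left, real_inner_self_eq_norm_sq, he,
                real_inner_comm, inner_emb_left he] at h2
              simp only [one_pow, mul_one, add_zero] at h2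
              exact abs_lt.1 h2
            · rw [Real.volume_Ioo]
              apply ENNReal.ofReal_le_ofReal
              linarith
          · rw [indicator_of_notMem hy, nonpos_iff_eq_zero]
            rw [show {s : ℝ | s • e + emb e y ∈ {x : Euc (d + 1) | ‖x‖ ≤ 1 ∧ |⟪x, e⟫| < r}} = ∅ from ?_,
              measure_empty]
            rw [eq_empty_iff_forall_notMem]
            intro s hs
            apply hy
            rw [mem_closedBall_zero_iff]
            have h2 := norm_pr_le he (s • e + emb e y)
            rw [map_add, map_smul, pr_self he, smul_zero, zero_add, pr_emb] at h2
            exact h2.trans hs.1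
      _ = _ := by rw [lintegral_indicator_const measurableSet_closedBall]
  have h2 := ENNReal.toReal_mono (ENNReal.mul_lt_top ENNReal.ofReal_lt_top
    measure_closedBall_lt_top).ne h1
  rwa [ENNReal.toReal_mul, ENNReal.toReal_ofReal (by linarith)] at h2

/-- A band of width `τ` on the sphere has measure `O(τ)`. -/
theorem exists_band (k : ℕ) [NeZero k] : ∃ C : ℝ, 0 < C ∧ ∀ (w : Euc k) (τ : ℝ), w ≠ 0 → 0 ≤ τ →
    ∫ θ : Sp k, slab τ ⟪(θ : Euc k), w⟫ ∂(sg k) ≤ C * τ * ‖w‖⁻¹ := by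
  obtain ⟨d, rfl⟩ : ∃ d, k = d + 1 := ⟨k - 1, (Nat.succ_pred (NeZero.ne k)).symm⟩
  refine ⟨2 * uball d / uball (d + 1),
    div_pos (mul_pos two_pos (uball_pos _)) (uball_pos _), fun w τ hw hτ => ?_⟩
  obtain ⟨e, he, hwe⟩ := eq_smul_unit hw
  have hwp : 0 < ‖w‖ := norm_pos_iff.2 hw
  have h1 := ball_avg (fun θ : Sp (d + 1) => slab τ ⟪(θ : Euc (d + 1)), w⟫)
  have hmS : MeasurableSet {x : Euc (d + 1) | ‖x‖ ≤ 1 ∧ |⟪x, e⟫| < τ * ‖w‖⁻¹} :=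
    measurableSet_ball_slab e _
  have h2 : ∫ x in closedBall (0 : Euc (d + 1)) 1, slab τ ⟪(nrm x : Euc (d + 1)), w⟫ ≤
      (volume {x : Euc (d + 1) | ‖x‖ ≤ 1 ∧ |⟪x, e⟫| < τ * ‖w‖⁻¹}).toReal := by
    have h3 : (volume {x : Euc (d + 1) | ‖x‖ ≤ 1 ∧ |⟪x, e⟫| < τ * ‖w‖⁻¹}).toReal =
        ∫ x in closedBall (0 : Euc (d + 1)) 1,
          {x : Euc (d + 1) | ‖x‖ ≤ 1 ∧ |⟪x, e⟫| < τ * ‖w‖⁻¹}.indicator (fun _ => (1 : ℝ)) x := by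
      rw [integral_indicator_const _ hmS, measureReal_restrict_apply hmS, inter_eq_left.2]
      · simp [Measure.real]
      · intro x hx
        exact mem_closedBall_zero_iff.2 hx.1
    rw [h3]
    have hfin : volume (closedBall (0 : Euc (d + 1)) 1) ≠ ∞ := measure_closedBall_lt_top.ne
    have hne : ∀ᵐ x ∂(volume.restrict (closedBall (0 : Euc (d + 1)) 1)), x ≠ 0 :=
      ae_restrict_of_ae (by simp [ae_iff, measure_singleton])
    have : IsFiniteMeasure (volume.restrict (closedBall (0 : Euc (d + 1)) 1)) :=
      ⟨by simpa using measure_closedBall_lt_top⟩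
    refine integral_mono_of_nonneg (ae_of_all _ fun x => slab_nonneg _ _)
      ((integrable_const _).indicator hmS) ?_
    filter_upwards [hne, ae_restrict_mem measurableSet_closedBall] with x hx0 hx1
    rw [mem_closedBall_zero_iff] at hx1
    unfold slab
    split_ifs with hlt
    · rw [indicator_of_mem]
      refine ⟨hx1, ?_⟩
      have hxw : ⟪x, w⟫ = ‖w‖ * ⟪x, e⟫ := by
        conv_lhs => rw [hwe]
        exact real_inner_smul_right _ _ _
      rw [inner_nrm hx0, hxw, abs_mul, abs_mul, abs_norm, abs_inv, abs_norm] at hlt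
      rw [lt_mul_inv_iff₀ hwp]
      have hxp : 0 < ‖x‖ := norm_pos_iff.2 hx0
      have h5 : |⟪x, e⟫| * ‖w‖ ≤ ‖x‖⁻¹ * (‖w‖ * |⟪x, e⟫|) := by
        rw [mul_comm ‖w‖]
        exact le_mul_of_one_le_left (by positivity) ((one_le_inv₀ hxp).2 hx1)
      exact h5.trans_lt hlt
    · exact indicator_nonneg (fun _ _ => zero_le_one) _
  have h4 := volume_slab_le he (r := τ * ‖w‖⁻¹) (by positivity)
  rw [h1] at h2
  have h5 := h2.trans h4
  rw [← le_div_iff₀' (uball_pos _)] at h5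
  refine h5.trans_eq ?_
  ring

/-- Averages over bands around great subspheres; as the width `τ` tends to `0` these tend to a
multiple of the spherical Radon transform. -/
def Jop {m : ℕ} (τ : ℝ) (f : Sp (m + 1) → ℝ) (v : Sp (m + 1)) : ℝ :=
  uball (m + 1) / (2 * τ) * ∫ x : Sp (m + 1), f x * slab τ ⟪(x : Euc (m + 1)), (v : Euc (m + 1))⟫
    ∂(sg (m + 1))

/-- The integrand of `Jop` in the coordinates `x = τ s v + emb v y`. -/
def Jint {m : ℕ} (τ : ℝ) (f : Sp (m + 1) → ℝ) (v : Sp (m + 1)) (p : ℝ × Euc m) : ℝ :=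
  (closedBall (0 : Euc (m + 1)) 1).indicator
    (fun x => f (nrm x) * slab τ ⟪(nrm x : Euc (m + 1)), (v : Euc (m + 1))⟫)
    ((τ * p.1) • (v : Euc (m + 1)) + emb (v : Euc (m + 1)) p.2)

theorem measurable_Jint {m : ℕ} (τ : ℝ) {f : Sp (m + 1) → ℝ} (hf : Measurable f)
    (v : Sp (m + 1)) : Measurable (Jint τ f v) := by
  have h1 : Measurable fun x : Euc (m + 1) =>
      f (nrm x) * slab τ ⟪(nrm x : Euc (m + 1)), (v : Euc (m + 1))⟫ := by
    refine (hf.comp measurable_nrm).mul ((measurable_slab τ).comp ?_)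
    exact ((continuous_subtype_val.inner continuous_const).measurable).comp measurable_nrm
  refine (h1.indicator measurableSet_closedBall).comp ?_
  have := continuous_emb (v : Euc (m + 1))
  fun_prop

theorem inner_frame {m : ℕ} (v : Sp (m + 1)) (s : ℝ) (y : Euc m) :
    ⟪s • (v : Euc (m + 1)) + emb (v : Euc (m + 1)) y, (v : Euc (m + 1))⟫ = s := by
  rw [inner_add_left, real_inner_smul_left, real_inner_self_eq_norm_sq, v.norm_coe,
    real_inner_comm, inner_emb_left v.norm_coe]
  ring

theorem pr_frame {m : ℕ} (v : Sp (m + 1)) (s : ℝ) (y : Euc m) :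
    pr (v : Euc (m + 1)) (s • (v : Euc (m + 1)) + emb (v : Euc (m + 1)) y) = y := by
  rw [map_add, map_smul, pr_self v.norm_coe, smul_zero, zero_add, pr_emb]

theorem abs_Jint_le {m : ℕ} {τ : ℝ} (hτ : 0 < τ) {f : Sp (m + 1) → ℝ} {B : ℝ}
    (hB : ∀ x, |f x| ≤ B) (v : Sp (m + 1)) (p : ℝ × Euc m) (hp : p.2 ≠ 0) :
    |Jint τ f v p| ≤ (Icc (-1 : ℝ) 1 ×ˢ closedBall (0 : Euc m) 1).indicator (fun _ => B) p := by
  have hB0 : 0 ≤ B := (abs_nonneg _).trans (hB v)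
  have hnn : 0 ≤ (Icc (-1 : ℝ) 1 ×ˢ closedBall (0 : Euc m) 1).indicator (fun _ => B) p :=
    indicator_nonneg (fun _ _ => hB0) _
  unfold Jint
  set x := (τ * p.1) • (v : Euc (m + 1)) + emb (v : Euc (m + 1)) p.2 with hx
  have hpx : pr (v : Euc (m + 1)) x = p.2 := pr_frame v _ _
  have hix : ⟪x, (v : Euc (m + 1))⟫ = τ * p.1 := inner_frame v _ _
  have hx0 : x ≠ 0 := by
    intro h; rw [h, map_zero] at hpx; exact hp hpx.symm
  by_cases hxb : x ∈ closedBall (0 : Euc (m + 1)) 1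
  · rw [indicator_of_mem hxb]
    rw [mem_closedBall_zero_iff] at hxb
    unfold slab
    split_ifs with hlt
    · rw [indicator_of_mem, mul_one]
      · exact hB _
      · rw [inner_nrm hx0, hix, abs_mul, abs_inv, abs_norm, abs_mul, abs_of_pos hτ,
          inv_mul_lt_iff₀ (norm_pos_iff.2 hx0), mul_comm ‖x‖] at hlt
        have h1 : |p.1| < ‖x‖ := lt_of_mul_lt_mul_left hlt hτ.le
        refine ⟨abs_le.1 (h1.le.trans hxb), ?_⟩
        rw [mem_closedBall_zero_iff, ← hpx]
        exact (norm_pr_le v.norm_coe x).trans hxb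
    · simpa using hnn
  · rw [indicator_of_notMem hxb]
    simpa using hnn

theorem ae_snd_ne {m : ℕ} [NeZero m] :
    ∀ᵐ p : ℝ × Euc m ∂((volume : Measure ℝ).prod (volume : Measure (Euc m))), p.2 ≠ 0 := by
  have h : ∀ᵐ y : Euc m ∂volume, y ≠ 0 := by simp [ae_iff, measure_singleton]
  exact Measure.quasiMeasurePreserving_snd.ae h

theorem integrable_box (m : ℕ) (B : ℝ) :
    Integrable ((Icc (-1 : ℝ) 1 ×ˢ closedBall (0 : Euc m) 1).indicator (fun _ => B))
      ((volume : Measure ℝ).prod (volume : Measure (Euc m))) := by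
  rw [integrable_indicator_iff (measurableSet_Icc.prod measurableSet_closedBall)]
  refine integrableOn_const (hs := ?_) (hC := by simp)
  rw [Measure.prod_prod]
  exact (ENNReal.mul_lt_top (by simp) measure_closedBall_lt_top).ne

theorem integral_box (m : ℕ) (B : ℝ) :
    ∫ p, (Icc (-1 : ℝ) 1 ×ˢ closedBall (0 : Euc m) 1).indicator (fun _ => B) p
      ∂((volume : Measure ℝ).prod (volume : Measure (Euc m))) = 2 * uball m * B := by
  rw [integral_indicator_const _ (measurableSet_Icc.prod measurableSet_closedBall),
    Measure.real, Measure.prod_prod, ENNReal.toReal_mul]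
  simp [uball]
  norm_num

theorem integrable_Jint {m : ℕ} [NeZero m] {τ : ℝ} (hτ : 0 < τ) {f : Sp (m + 1) → ℝ}
    (hf : Measurable f) {B : ℝ} (hB : ∀ x, |f x| ≤ B) (v : Sp (m + 1)) :
    Integrable (Jint τ f v) ((volume : Measure ℝ).prod (volume : Measure (Euc m))) := by
  refine (integrable_box m B).mono' (measurable_Jint τ hf v).aestronglyMeasurable ?_
  filter_upwards [ae_snd_ne] with p hp
  exact abs_Jint_le hτ hB v p hp

/-- Polar coordinates, followed by the coordinates `x = τ s v + emb v y`, express `Jop` through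
`Jint`. -/
theorem Jop_eq {m : ℕ} [NeZero m] {τ : ℝ} (hτ : 0 < τ) {f : Sp (m + 1) → ℝ}
    (hf : Measurable f) {B : ℝ} (hB : ∀ x, |f x| ≤ B) (v : Sp (m + 1)) :
    Jop τ f v = 1 / 2 * ∫ p, Jint τ f v p ∂((volume : Measure ℝ).prod (volume : Measure (Euc m))) := by
  set G : Euc (m + 1) → ℝ := (closedBall (0 : Euc (m + 1)) 1).indicator
    (fun x => f (nrm x) * slab τ ⟪(nrm x : Euc (m + 1)), (v : Euc (m + 1))⟫) with hG
  have h1 : uball (m + 1) * ∫ x : Sp (m + 1),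
      f x * slab τ ⟪(x : Euc (m + 1)), (v : Euc (m + 1))⟫ ∂(sg (m + 1)) = ∫ x, G x := by
    rw [← ball_avg (fun x : Sp (m + 1) => f x * slab τ ⟪(x : Euc (m + 1)), (v : Euc (m + 1))⟫), hG,
      integral_indicator measurableSet_closedBall]
  have hmG : Measurable G := by
    refine Measurable.indicator ?_ measurableSet_closedBall
    refine (hf.comp measurable_nrm).mul ((measurable_slab τ).comp ?_)
    exact ((continuous_subtype_val.inner continuous_const).measurable).comp measurable_nrm
  have hGi : Integrable G := by
    have hB0 : 0 ≤ B := (abs_nonneg _).trans (hB v)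
    have h2 : Integrable ((closedBall (0 : Euc (m + 1)) 1).indicator (fun _ => B)) := by
      rw [integrable_indicator_iff measurableSet_closedBall]
      exact integrableOn_const (hs := measure_closedBall_lt_top.ne) (hC := by simp)
    refine h2.mono' hmG.aestronglyMeasurable (ae_of_all _ fun x => ?_)
    rw [hG, norm_indicator_eq_indicator_norm]
    refine indicator_le_indicator ?_
    rw [norm_mul]
    exact (mul_le_mul (hB _) (abs_slab_le _ _) (abs_nonneg _) hB0).trans_eq (mul_one _)
  have hmp := mp_frame (m := m) v.norm_coe
  have hcomp : Integrable (fun p : ℝ × Euc m =>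
      G (p.1 • (v : Euc (m + 1)) + emb (v : Euc (m + 1)) p.2)) ((volume : Measure ℝ).prod volume) :=
    hmp.integrable_comp_of_integrable hGi
  have hGp : ∫ x, G x = ∫ p : ℝ × Euc m, G (p.1 • (v : Euc (m + 1)) + emb (v : Euc (m + 1)) p.2)
      ∂((volume : Measure ℝ).prod volume) := by
    conv_lhs => rw [← hmp.map_eq]
    exact integral_map hmp.measurable.aemeasurable hmG.aestronglyMeasurable
  rw [integral_prod_symm _ hcomp] at hGp
  rw [integral_prod_symm _ (integrable_Jint hτ hf hB v), Jop, div_mul_eq_mul_div, h1, hGp]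
  have h3 : ∀ y : Euc m, ∫ s : ℝ, Jint τ f v (s, y) =
      τ⁻¹ * ∫ s : ℝ, G (s • (v : Euc (m + 1)) + emb (v : Euc (m + 1)) y) := by
    intro y
    have := Measure.integral_comp_mul_left
      (fun s : ℝ => G (s • (v : Euc (m + 1)) + emb (v : Euc (m + 1)) y)) τ
    rw [abs_of_pos (inv_pos.2 hτ), smul_eq_mul] at this
    exact this
  simp_rw [h3]
  rw [integral_const_mul]
  field_simp

theorem abs_Jop_le {m : ℕ} [NeZero m] {τ : ℝ} (hτ : 0 < τ) {f : Sp (m + 1) → ℝ}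
    (hf : Measurable f) {B : ℝ} (hB : ∀ x, |f x| ≤ B) (v : Sp (m + 1)) :
    |Jop τ f v| ≤ uball m * B := by
  rw [Jop_eq hτ hf hB, abs_mul]
  have h1 : |∫ p, Jint τ f v p ∂((volume : Measure ℝ).prod (volume : Measure (Euc m)))| ≤
      2 * uball m * B := by
    rw [← integral_box, ← Real.norm_eq_abs]
    refine norm_integral_le_of_norm_le (integrable_box m B) ?_
    filter_upwards [ae_snd_ne] with p hp
    exact abs_Jint_le hτ hB v p hp
  rw [abs_of_pos (by norm_num : (0 : ℝ) < 1 / 2)]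
  linarith

/-! ### Convergence of band averages to the Radon transform -/

/-- The limit constant relating `Jop` and `Rop`. -/
def KJ (m : ℕ) : ℝ := ∫ y : Euc m, (Iic (1 : ℝ)).indicator (fun r => r) ‖y‖

theorem KJ_pos (m : ℕ) [NeZero m] : 0 < KJ m := by
  have hi : Integrable (fun y : Euc m => (Iic (1 : ℝ)).indicator (fun r => r) ‖y‖) := by
    have h2 : Integrable ((closedBall (0 : Euc m) 1).indicator (fun _ => (1 : ℝ))) := by
      rw [integrable_indicator_iff measurableSet_closedBall]
      exact integrableOn_const (hs := measure_closedBall_lt_top.ne) (hC := by simp)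
    refine h2.mono' ((measurable_id.indicator measurableSet_Iic).comp
      measurable_norm).aestronglyMeasurable (ae_of_all _ fun x => ?_)
    by_cases hx : ‖x‖ ≤ 1 <;> simp [indicator, hx]
  rw [KJ, integral_pos_iff_support_of_nonneg _ hi]
  · have h1 : ball (0 : Euc m) 1 \ {0} ⊆
        Function.support (fun y : Euc m => (Iic (1 : ℝ)).indicator (fun r => r) ‖y‖) := by
      rintro x ⟨hx, hx0⟩
      rw [mem_ball_zero_iff] at hx
      rw [Function.mem_support, indicator_of_mem (mem_Iic.2 hx.le)]
      exact norm_ne_zero_iff.2 hx0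
    refine lt_of_lt_of_le ?_ (measure_mono h1)
    rw [measure_sdiff_null (measure_singleton _)]
    exact measure_ball_pos _ _ one_pos
  · intro x
    by_cases hx : ‖x‖ ≤ 1 <;> simp [indicator, hx]

/-- As the band shrinks to a great subsphere, the normalized band averages tend to a multiple of
the Radon transform. -/
theorem Jop_tendsto {m : ℕ} [NeZero m] (f : C(Sp (m + 1), ℝ)) (v : Sp (m + 1)) {τ : ℕ → ℝ}
    (hτ : ∀ i, 0 < τ i) (hτ0 : Tendsto τ atTop (𝓝 0)) :
    Tendsto (fun i => Jop (τ i) f v) atTop (𝓝 (KJ m * Rop f v)) := by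
  have hB : ∀ x, |f x| ≤ ‖f‖ := f.norm_coe_le_norm
  have hm := f.continuous.measurable
  set L : ℝ × Euc m → ℝ := fun p =>
    (closedBall (0 : Euc m) 1).indicator (fun y => f (embS v (nrm y))) p.2 * slab ‖p.2‖ p.1 with hL
  have hlim : ∫ p, L p ∂((volume : Measure ℝ).prod (volume : Measure (Euc m))) =
      2 * (KJ m * Rop f v) := by
    have hmL : Measurable L := by
      refine Measurable.mul ?_ ?_
      · exact ((hm.comp ((continuous_embS v).measurable.comp measurable_nrm)).indicator
          measurableSet_closedBall).comp measurable_snd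
      · exact Measurable.ite (measurableSet_lt (by fun_prop) (by fun_prop)) measurable_const
          measurable_const
    have hLi : Integrable L ((volume : Measure ℝ).prod (volume : Measure (Euc m))) := by
      refine (integrable_box m ‖f‖).mono' hmL.aestronglyMeasurable (ae_of_all _ fun p => ?_)
      have hnn : 0 ≤ (Icc (-1 : ℝ) 1 ×ˢ closedBall (0 : Euc m) 1).indicator (fun _ => ‖f‖) p :=
        indicator_nonneg (fun _ _ => norm_nonneg _) _
      simp only [hL, slab]
      split_ifs with h
      · by_cases hp : p.2 ∈ closedBall (0 : Euc m) 1
        · rw [indicator_of_mem hp, indicator_of_mem, mul_one]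
          · exact hB _
          · exact ⟨abs_le.1 (h.le.trans (mem_closedBall_zero_iff.1 hp)), hp⟩
        · rw [indicator_of_notMem hp]; simpa using hnn
      · simpa using hnn
    rw [integral_prod_symm _ hLi, Rop_apply, KJ,
      ← polar_mul ((Iic (1 : ℝ)).indicator (fun r => r)) (fun θ => f (embS v θ)),
      ← integral_const_mul]
    refine integral_congr_ae (ae_of_all _ fun y => ?_)
    simp only [hL]
    rw [integral_const_mul]
    have hs : ∫ s : ℝ, slab ‖y‖ s = 2 * ‖y‖ := by
      have : slab ‖y‖ = (Ioo (-‖y‖) ‖y‖).indicator (fun _ => (1 : ℝ)) := by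
        ext s
        simp only [slab, indicator, mem_Ioo, abs_lt]
      rw [this, integral_indicator_const _ measurableSet_Ioo]
      simp only [Real.volume_real_Ioo, smul_eq_mul, mul_one]
      rw [max_eq_left (by linarith [norm_nonneg y])]
      ring
    rw [hs]
    by_cases hy : ‖y‖ ≤ 1
    · rw [indicator_of_mem (mem_closedBall_zero_iff.2 hy), indicator_of_mem (mem_Iic.2 hy)]
      ring
    · rw [indicator_of_notMem (fun h => hy (mem_closedBall_zero_iff.1 h)),
        indicator_of_notMem (show ‖y‖ ∉ Iic (1 : ℝ) from hy)]
      ring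
  have hJ : ∀ i, Jop (τ i) f v = 1 / 2 * ∫ p, Jint (τ i) f v p
      ∂((volume : Measure ℝ).prod (volume : Measure (Euc m))) := fun i => Jop_eq (hτ i) hm hB v
  simp_rw [hJ]
  have : KJ m * Rop f v = 1 / 2 * ∫ p, L p ∂((volume : Measure ℝ).prod (volume : Measure (Euc m))) := by
    rw [hlim]; ring
  rw [this]
  refine Tendsto.const_mul _ ?_
  refine tendsto_integral_of_dominated_convergence
    ((Icc (-1 : ℝ) 1 ×ˢ closedBall (0 : Euc m) 1).indicator (fun _ => ‖f‖))
    (fun i => (measurable_Jint (τ i) hm v).aestronglyMeasurable) (integrable_box m ‖f‖) ?_ ?_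
  · intro i
    filter_upwards [ae_snd_ne] with p hp
    exact abs_Jint_le (hτ i) hB v p hp
  have h1 : ∀ᵐ p : ℝ × Euc m ∂((volume : Measure ℝ).prod (volume : Measure (Euc m))),
      ‖p.2‖ ≠ 1 := by
    have h : ∀ᵐ y : Euc m ∂volume, ‖y‖ ≠ 1 := by
      rw [ae_iff]
      have := Measure.addHaar_sphere (volume : Measure (Euc m)) 0 1
      convert this using 2
      ext x; simp
    exact Measure.quasiMeasurePreserving_snd.ae h
  have h2 : ∀ᵐ p : ℝ × Euc m ∂((volume : Measure ℝ).prod (volume : Measure (Euc m))),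
      ‖p.2‖ ≠ |p.1| := by
    rw [ae_iff]
    simp only [ne_eq, not_not]
    have hms : MeasurableSet {p : ℝ × Euc m | ‖p.2‖ = |p.1|} :=
      measurableSet_eq_fun (by fun_prop) (by fun_prop)
    rw [Measure.measure_prod_null hms]
    refine ae_of_all _ fun s => ?_
    have := Measure.addHaar_sphere (volume : Measure (Euc m)) 0 |s|
    simp only [Pi.zero_apply]
    convert this using 2
    ext x; simp
  filter_upwards [ae_snd_ne, h1, h2] with p hp0 hp1 hp2
  -- along the rescaled coordinates the base point tends to `emb v y`
  set x : ℕ → Euc (m + 1) := fun i => (τ i * p.1) • (v : Euc (m + 1)) + emb (v : Euc (m + 1)) p.2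
    with hx
  have hxt : Tendsto x atTop (𝓝 (emb (v : Euc (m + 1)) p.2)) := by
    have h3 : Tendsto (fun i => (τ i * p.1) • (v : Euc (m + 1))) atTop (𝓝 ((0 * p.1) • (v : Euc (m + 1)))) :=
      (hτ0.mul_const _).smul_const _
    have h4 := h3.add_const (emb (v : Euc (m + 1)) p.2)
    simpa using h4
  have hxn : Tendsto (fun i => ‖x i‖) atTop (𝓝 ‖p.2‖) := by
    have := hxt.norm
    rwa [norm_emb] at this
  have hx0 : ∀ i, x i ≠ 0 := by
    intro i h
    have h5 := pr_frame v (τ i * p.1) p.2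
    change pr (v : Euc (m + 1)) (x i) = p.2 at h5
    rw [h, map_zero] at h5
    exact hp0 h5.symm
  have he0 : emb (v : Euc (m + 1)) p.2 ≠ 0 := by
    rw [← norm_ne_zero_iff, norm_emb, norm_ne_zero_iff]; exact hp0
  have hne : nrm (emb (v : Euc (m + 1)) p.2) = embS v (nrm p.2) := by
    apply Subtype.ext
    rw [nrm_coe he0, embS_coe, nrm_coe hp0, norm_emb, map_smul]
  have hft : Tendsto (fun i => f (nrm (x i))) atTop (𝓝 (f (embS v (nrm p.2)))) := by
    have h6 := ((f.continuous.tendsto _).comp (continuousAt_nrm he0).tendsto).comp hxt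
    rw [hne] at h6
    exact h6
  have hJi : ∀ i, Jint (τ i) f v p = (if ‖x i‖ ≤ 1 then f (nrm (x i)) else 0) *
      slab ‖x i‖ p.1 := by
    intro i
    have hix : ⟪x i, (v : Euc (m + 1))⟫ = τ i * p.1 := inner_frame v _ _
    have hsl : slab (τ i) ⟪(nrm (x i) : Euc (m + 1)), (v : Euc (m + 1))⟫ = slab ‖x i‖ p.1 := by
      have hiff : |⟪(nrm (x i) : Euc (m + 1)), (v : Euc (m + 1))⟫| < τ i ↔ |p.1| < ‖x i‖ := by
        rw [inner_nrm (hx0 i), hix, abs_mul, abs_inv, abs_norm, abs_mul, abs_of_pos (hτ i),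
          inv_mul_lt_iff₀ (norm_pos_iff.2 (hx0 i)), mul_comm ‖x i‖, mul_lt_mul_iff_right₀ (hτ i)]
      simp only [slab, hiff]
    unfold Jint
    change (closedBall (0 : Euc (m + 1)) 1).indicator _ (x i) = _
    by_cases hxi : ‖x i‖ ≤ 1
    · rw [indicator_of_mem (mem_closedBall_zero_iff.2 hxi), if_pos hxi, hsl]
    · rw [indicator_of_notMem (fun h => hxi (mem_closedBall_zero_iff.1 h)), if_neg hxi, zero_mul]
  simp_rw [hJi]
  refine Tendsto.mul ?_ ?_
  · rcases lt_or_gt_of_ne hp1 with hlt | hgt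
    · rw [indicator_of_mem (mem_closedBall_zero_iff.2 hlt.le)]
      refine hft.congr' ?_
      filter_upwards [hxn.eventually_lt_const hlt] with i hi
      rw [if_pos hi.le]
    · rw [indicator_of_notMem (fun h => (mem_closedBall_zero_iff.1 h).not_gt hgt)]
      refine tendsto_const_nhds.congr' ?_
      filter_upwards [hxn.eventually_const_lt hgt] with i hi
      rw [if_neg hi.not_ge]
  · refine tendsto_const_nhds.congr' ?_
    unfold slab
    rcases lt_or_gt_of_ne hp2 with hlt | hgt
    · filter_upwards [hxn.eventually_lt_const hlt] with i hi
      rw [if_neg hi.not_gt, if_neg hlt.not_gt]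
    · filter_upwards [hxn.eventually_const_lt hgt] with i hi
      rw [if_pos hi, if_pos hgt]

/-! ### Self-adjointness of the Radon transform -/

theorem measurable_slab_inner {k : ℕ} (τ : ℝ) :
    Measurable fun p : Sp k × Sp k => slab τ ⟪(p.2 : Euc k), (p.1 : Euc k)⟫ :=
  (measurable_slab τ).comp (by fun_prop : Continuous fun p : Sp k × Sp k =>
    ⟪(p.2 : Euc k), (p.1 : Euc k)⟫).measurable

theorem measurable_Jop {m : ℕ} (τ : ℝ) {f : Sp (m + 1) → ℝ} (hf : Measurable f) :
    Measurable (Jop τ f) := by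
  refine Measurable.const_mul ?_ _
  have h : Measurable fun p : Sp (m + 1) × Sp (m + 1) =>
      f p.2 * slab τ ⟪(p.2 : Euc (m + 1)), (p.1 : Euc (m + 1))⟫ :=
    (hf.comp measurable_snd).mul (measurable_slab_inner τ)
  exact h.stronglyMeasurable.integral_prod_right.measurable

/-- Band averages have a symmetric kernel. -/
theorem Jop_symm {m : ℕ} (τ : ℝ) (f g : C(Sp (m + 1), ℝ)) :
    ∫ v, Jop τ f v * g v ∂(sg (m + 1)) = ∫ x, f x * Jop τ g x ∂(sg (m + 1)) := by
  set c := uball (m + 1) / (2 * τ) with hc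
  have h1 : ∀ v, Jop τ f v * g v = c * ∫ x : Sp (m + 1),
      f x * slab τ ⟪(x : Euc (m + 1)), (v : Euc (m + 1))⟫ * g v ∂(sg (m + 1)) := by
    intro v
    rw [integral_mul_const, Jop]; ring
  have h2 : ∀ x, f x * Jop τ g x = c * ∫ v : Sp (m + 1),
      f x * slab τ ⟪(x : Euc (m + 1)), (v : Euc (m + 1))⟫ * g v ∂(sg (m + 1)) := by
    intro x
    have : ∀ v : Sp (m + 1), f x * slab τ ⟪(x : Euc (m + 1)), (v : Euc (m + 1))⟫ * g v =
        f x * (g v * slab τ ⟪(v : Euc (m + 1)), (x : Euc (m + 1))⟫) := by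
      intro v
      rw [real_inner_comm]; ring
    simp_rw [this]
    rw [integral_const_mul, Jop]; ring
  simp_rw [h1, h2]
  rw [integral_const_mul, integral_const_mul, integral_integral_swap]
  have hm : Measurable fun p : Sp (m + 1) × Sp (m + 1) =>
      f p.2 * slab τ ⟪(p.2 : Euc (m + 1)), (p.1 : Euc (m + 1))⟫ * g p.1 :=
    ((f.continuous.measurable.comp measurable_snd).mul
      (measurable_slab_inner τ)).mul
      (g.continuous.measurable.comp measurable_fst)
  refine Integrable.of_bound hm.aestronglyMeasurable (‖f‖ * 1 * ‖g‖) (ae_of_all _ fun p => ?_)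
  simp only [Function.uncurry, norm_mul]
  gcongr
  · exact f.norm_coe_le_norm _
  · exact abs_slab_le _ _
  · exact g.norm_coe_le_norm _

theorem tau_pos (i : ℕ) : (0 : ℝ) < 1 / ((i : ℝ) + 1) := Nat.one_div_pos_of_nat

/-- The spherical Radon transform is self-adjoint. -/
theorem Rop_symm {m : ℕ} [NeZero m] (f g : C(Sp (m + 1), ℝ)) :
    ∫ v, Rop f v * g v ∂(sg (m + 1)) = ∫ v, f v * Rop g v ∂(sg (m + 1)) := by
  have key : ∀ f g : C(Sp (m + 1), ℝ), Tendsto (fun i : ℕ => ∫ v, Jop (1 / ((i : ℝ) + 1)) f v * g v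
      ∂(sg (m + 1))) atTop (𝓝 (KJ m * ∫ v, Rop f v * g v ∂(sg (m + 1)))) := by
    intro f g
    rw [← integral_const_mul]
    refine tendsto_integral_of_dominated_convergence (fun _ => uball m * ‖f‖ * ‖g‖) ?_
      (integrable_const _) ?_ ?_
    · intro i
      exact ((measurable_Jop _ f.continuous.measurable).mul
        g.continuous.measurable).aestronglyMeasurable
    · intro i
      refine ae_of_all _ fun v => ?_
      rw [norm_mul]
      have := uball_pos m
      gcongr
      · exact abs_Jop_le (tau_pos i) f.continuous.measurable f.norm_coe_le_norm v
      · exact g.norm_coe_le_norm _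
    · refine ae_of_all _ fun v => ?_
      rw [← mul_assoc]
      exact (Jop_tendsto f v tau_pos tendsto_one_div_add_atTop_nhds_zero_nat).mul_const _
  have h1 := key f g
  have h2 := key g f
  have h3 : ∀ i : ℕ, ∫ v, Jop (1 / ((i : ℝ) + 1)) g v * f v ∂(sg (m + 1)) =
      ∫ v, Jop (1 / ((i : ℝ) + 1)) f v * g v ∂(sg (m + 1)) := by
    intro i
    rw [Jop_symm]
    congr 1; ext v; ring
  simp_rw [h3] at h2
  have h4 := tendsto_nhds_unique h1 h2
  have h5 := mul_left_cancel₀ (KJ_pos m).ne' h4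
  rw [h5]
  congr 1; ext v; ring

/-- The integral of `‖y‖⁻¹` over the ball of radius `t` in `ℝᵐ`. -/
def Nt (m : ℕ) (t : ℝ) : ℝ := ∫ y in ball (0 : Euc m) t, ‖y‖⁻¹

theorem integrableOn_inv_norm {m : ℕ} (hm : 2 ≤ m) (t : ℝ) :
    IntegrableOn (fun y : Euc m => ‖y‖⁻¹) (ball 0 t) := by
  have : Nontrivial (Euc m) := by
    have : Fact (2 ≤ m) := ⟨hm⟩
    apply Module.nontrivial_of_finrank_pos (R := ℝ)
    rw [show Module.finrank ℝ (Euc m) = m from finrank_euclideanSpace_fin]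
    omega
  rw [integrableOn_fun_norm_addHaar volume (f := fun r : ℝ => r⁻¹),
    show Module.finrank ℝ (Euc m) = m from finrank_euclideanSpace_fin]
  obtain ⟨d, rfl⟩ : ∃ d, m = d + 2 := ⟨m - 2, by omega⟩
  have h : IntegrableOn (fun y : ℝ => y ^ d) (Ioo 0 t) :=
    ((continuous_pow d).integrableOn_Icc (a := 0) (b := t)).mono_set Ioo_subset_Icc_self
  refine h.congr_fun (fun y hy => ?_) measurableSet_Ioo
  have : y ≠ 0 := hy.1.ne'
  change y ^ d = y ^ (d + 1) • y⁻¹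
  rw [smul_eq_mul, pow_succ]
  field_simp

theorem Nt_small {m : ℕ} (hm : 2 ≤ m) {ε : ℝ} (hε : 0 < ε) :
    ∃ t : ℝ, 0 < t ∧ t ≤ 1 ∧ Nt m t < ε := by
  have h : Tendsto (fun i : ℕ => Nt m (1 / ((i : ℝ) + 1))) atTop
      (𝓝 (∫ _ : Euc m, (0 : ℝ))) := by
    simp_rw [Nt, ← integral_indicator measurableSet_ball]
    refine tendsto_integral_of_dominated_convergence
      ((ball (0 : Euc m) 1).indicator fun y => ‖y‖⁻¹) ?_ ?_ ?_ ?_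
    · intro i
      exact (measurable_norm.inv.indicator measurableSet_ball).aestronglyMeasurable
    · rw [integrable_indicator_iff measurableSet_ball]
      exact integrableOn_inv_norm hm 1
    · intro i
      refine ae_of_all _ fun y => ?_
      rw [norm_indicator_eq_indicator_norm]
      simp only [norm_inv, norm_norm]
      refine indicator_le_indicator_of_subset (ball_subset_ball ?_) (fun _ => by positivity) _
      rw [div_le_one (by positivity)]
      linarith [Nat.cast_nonneg (α := ℝ) i]
    · refine ae_of_all _ fun y => ?_
      by_cases hy : y = 0
      · subst hy; simp [indicator]
      · refine tendsto_const_nhds.congr' ?_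
        filter_upwards [tendsto_one_div_add_atTop_nhds_zero_nat.eventually_lt_const
          (norm_pos_iff.2 hy)] with i hi
        rw [indicator_of_notMem]
        rw [mem_ball_zero_iff]
        exact hi.not_gt
  rw [integral_zero] at h
  obtain ⟨i, hi⟩ := (h.eventually_lt_const hε).exists
  refine ⟨_, tau_pos i, ?_, hi⟩
  rw [div_le_one (by positivity)]
  linarith [Nat.cast_nonneg (α := ℝ) i]

/-! ### The kernel of the squared Radon transform -/

/-- The measure of the band `{θ : |⟪θ, w⟫| < τ}` on the sphere. -/
def bandM {k : ℕ} (τ : ℝ) (w : Euc k) : ℝ := ∫ θ : Sp k, slab τ ⟪(θ : Euc k), w⟫ ∂(sg k)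

theorem measurable_bandM {k : ℕ} [NeZero k] (τ : ℝ) : Measurable (bandM τ : Euc k → ℝ) := by
  have h : Measurable fun p : Euc k × Sp k => slab τ ⟪(p.2 : Euc k), p.1⟫ :=
    (measurable_slab τ).comp (by fun_prop : Continuous fun p : Euc k × Sp k =>
      ⟪(p.2 : Euc k), p.1⟫).measurable
  exact h.stronglyMeasurable.integral_prod_right.measurable

theorem bandM_nonneg {k : ℕ} (τ : ℝ) (w : Euc k) : 0 ≤ bandM τ w :=
  integral_nonneg fun _ => slab_nonneg _ _

theorem bandM_le_one {k : ℕ} [NeZero k] (τ : ℝ) (w : Euc k) : bandM τ w ≤ 1 := by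
  have h : bandM τ w ≤ ∫ _ : Sp k, (1 : ℝ) ∂(sg k) :=
    integral_mono_of_nonneg (ae_of_all _ fun _ => slab_nonneg _ _) (integrable_const _)
      (ae_of_all _ fun _ => slab_le_one _ _)
  simpa using h

theorem measurable_near {m : ℕ} [NeZero m] (u : Sp (m + 1)) (τ t : ℝ) :
    Measurable fun x : Euc (m + 1) => if ‖pr (u : Euc (m + 1)) x‖ < t then
      bandM τ (pr (u : Euc (m + 1)) x) else 0 := by
  have h := (continuous_pr (u : Euc (m + 1))).measurable
  exact Measurable.ite (measurableSet_lt h.norm measurable_const) ((measurable_bandM τ).comp h)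
    measurable_const

/-- The points near the pole `u` contribute little to the kernel of the squared Radon
transform. -/
theorem near_pole {m : ℕ} [NeZero m] (hm : 2 ≤ m) {C : ℝ} (hC0 : 0 < C)
    (hC : ∀ (w : Euc m) (τ : ℝ), w ≠ 0 → 0 ≤ τ → bandM τ w ≤ C * τ * ‖w‖⁻¹)
    (u : Sp (m + 1)) {τ t : ℝ} (hτ : 0 < τ) (ht : 0 < t) :
    uball (m + 1) * ∫ x : Sp (m + 1), (if ‖pr (u : Euc (m + 1)) (x : Euc (m + 1))‖ < t then
      bandM τ (pr (u : Euc (m + 1)) (x : Euc (m + 1))) else 0) ∂(sg (m + 1)) ≤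
      2 * C * τ * Nt m t := by
  rw [← ball_avg (fun x : Sp (m + 1) => if ‖pr (u : Euc (m + 1)) (x : Euc (m + 1))‖ < t then
      bandM τ (pr (u : Euc (m + 1)) (x : Euc (m + 1))) else 0),
    ← integral_indicator measurableSet_closedBall]
  have hmp := mp_frame (m := m) u.norm_coe
  have hmm : Measurable ((closedBall (0 : Euc (m + 1)) 1).indicator fun x : Euc (m + 1) =>
      if ‖pr (u : Euc (m + 1)) (nrm x : Euc (m + 1))‖ < t then
      bandM τ (pr (u : Euc (m + 1)) (nrm x : Euc (m + 1))) else 0) :=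
    ((measurable_near u τ t).comp (measurable_subtype_coe.comp measurable_nrm)).indicator
      measurableSet_closedBall
  conv_lhs => rw [← hmp.map_eq]
  rw [integral_map hmp.measurable.aemeasurable hmm.aestronglyMeasurable]
  have h1 : Integrable (fun p : ℝ × Euc m => (Icc (-1 : ℝ) 1).indicator (fun _ => (1 : ℝ)) p.1 *
      (ball (0 : Euc m) t).indicator (fun y => C * τ * ‖y‖⁻¹) p.2)
      ((volume : Measure ℝ).prod (volume : Measure (Euc m))) := by
    refine Integrable.mul_prod (f := (Icc (-1 : ℝ) 1).indicator (fun _ => (1 : ℝ)))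
      (g := (ball (0 : Euc m) t).indicator (fun y => C * τ * ‖y‖⁻¹)) ?_ ?_
    · rw [integrable_indicator_iff measurableSet_Icc]
      exact integrableOn_const (hs := by simp) (hC := by simp)
    · rw [integrable_indicator_iff measurableSet_ball]
      exact (integrableOn_inv_norm hm t).const_mul _
  have h2 : ∫ p : ℝ × Euc m, (Icc (-1 : ℝ) 1).indicator (fun _ => (1 : ℝ)) p.1 *
      (ball (0 : Euc m) t).indicator (fun y => C * τ * ‖y‖⁻¹) p.2
      ∂((volume : Measure ℝ).prod (volume : Measure (Euc m))) = 2 * C * τ * Nt m t := by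
    rw [integral_prod_mul (f := (Icc (-1 : ℝ) 1).indicator (fun _ => (1 : ℝ)))
      (g := (ball (0 : Euc m) t).indicator (fun y => C * τ * ‖y‖⁻¹)),
      integral_indicator_const _ measurableSet_Icc, integral_indicator measurableSet_ball,
      integral_const_mul, Nt]
    simp
    ring
  rw [← h2]
  refine integral_mono_of_nonneg (ae_of_all _ fun p => ?_) h1 ?_
  · refine indicator_nonneg (fun x _ => ?_) _
    split_ifs
    · exact bandM_nonneg _ _
    · exact le_rfl
  filter_upwards [ae_snd_ne] with p hp
  have hnn : 0 ≤ (Icc (-1 : ℝ) 1).indicator (fun _ => (1 : ℝ)) p.1 *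
      (ball (0 : Euc m) t).indicator (fun y => C * τ * ‖y‖⁻¹) p.2 :=
    mul_nonneg (indicator_nonneg (fun _ _ => zero_le_one) _)
      (indicator_nonneg (fun _ _ => by positivity) _)
  set x := p.1 • (u : Euc (m + 1)) + emb (u : Euc (m + 1)) p.2 with hx
  have hpx : pr (u : Euc (m + 1)) x = p.2 := pr_frame u _ _
  have hix : ⟪x, (u : Euc (m + 1))⟫ = p.1 := inner_frame u _ _
  have hx0 : x ≠ 0 := by
    intro h; rw [h, map_zero] at hpx; exact hp hpx.symm
  by_cases hxb : x ∈ closedBall (0 : Euc (m + 1)) 1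
  · rw [indicator_of_mem hxb]
    rw [mem_closedBall_zero_iff] at hxb
    have hxp := norm_pos_iff.2 hx0
    have hyp := norm_pos_iff.2 hp
    split_ifs with hlt
    · rw [nrm_coe hx0, map_smul, hpx] at hlt ⊢
      rw [norm_smul, norm_inv, norm_norm, inv_mul_lt_iff₀ hxp] at hlt
      have hyt : ‖p.2‖ < t := hlt.trans_le (by nlinarith)
      rw [indicator_of_mem (mem_ball_zero_iff.2 hyt), indicator_of_mem, one_mul]
      · refine (hC _ _ (smul_ne_zero (inv_ne_zero hxp.ne') hp) hτ.le).trans ?_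
        rw [norm_smul, norm_inv, norm_norm, mul_inv, inv_inv]
        have : ‖x‖ * ‖p.2‖⁻¹ ≤ ‖p.2‖⁻¹ := mul_le_of_le_one_left (by positivity) hxb
        gcongr
      · have h3 := abs_real_inner_le_norm x (u : Euc (m + 1))
        rw [hix, u.norm_coe, mul_one] at h3
        exact abs_le.1 (h3.trans hxb)
    · exact hnn
  · rw [indicator_of_notMem hxb]
    exact hnn

theorem inner_embS {m : ℕ} (u : Sp (m + 1)) (θ : Sp m) (x : Euc (m + 1)) :
    ⟪x, (embS u θ : Euc (m + 1))⟫ = ⟪(θ : Euc m), pr (u : Euc (m + 1)) x⟫ := by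
  rw [embS_coe, inner_emb_pr u.norm_coe, real_inner_comm]

/-- By Fubini, the Radon transform of a band average is an integral operator whose kernel is the
measure `bandM` of a band. -/
theorem avg_Jop {m : ℕ} [NeZero m] (τ : ℝ) (f : C(Sp (m + 1), ℝ)) (u : Sp (m + 1)) :
    ∫ θ, Jop τ f (embS u θ) ∂(sg m) = uball (m + 1) / (2 * τ) *
      ∫ x : Sp (m + 1), f x * bandM τ (pr (u : Euc (m + 1)) (x : Euc (m + 1))) ∂(sg (m + 1)) := by
  unfold Jop
  rw [integral_const_mul, integral_integral_swap]
  · congr 1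
    refine integral_congr_ae (ae_of_all _ fun x => ?_)
    simp only [inner_embS]
    rw [integral_const_mul, bandM]
  have hm : Measurable fun p : Sp m × Sp (m + 1) =>
      f p.2 * slab τ ⟪(p.2 : Euc (m + 1)), (embS u p.1 : Euc (m + 1))⟫ := by
    refine (f.continuous.measurable.comp measurable_snd).mul ((measurable_slab τ).comp ?_)
    have hc : Continuous fun p : Sp m × Sp (m + 1) =>
        ⟪(p.2 : Euc (m + 1)), (embS u p.1 : Euc (m + 1))⟫ :=
      (continuous_subtype_val.comp continuous_snd).inner
        (continuous_subtype_val.comp ((continuous_embS u).comp continuous_fst))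
    exact hc.measurable
  refine Integrable.of_bound hm.aestronglyMeasurable (‖f‖ * 1) (ae_of_all _ fun p => ?_)
  simp only [Function.uncurry, norm_mul]
  gcongr
  · exact f.norm_coe_le_norm _
  · exact abs_slab_le _ _

/-- The square of the Radon transform has a kernel with an integrable singularity, so it maps
`L¹` to `C` up to an arbitrarily small multiple of the sup-norm. -/
theorem kernel_bound {m : ℕ} [NeZero m] (hm : 2 ≤ m) {δ : ℝ} (hδ : 0 < δ) :
    ∃ M : ℝ, 0 ≤ M ∧ ∀ (f : C(Sp (m + 1), ℝ)) (u : Sp (m + 1)),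
      |Rop (Rop f) u| ≤ δ * ‖f‖ + M * ∫ x, |f x| ∂(sg (m + 1)) := by
  obtain ⟨C, hC0, hC⟩ := exists_band m
  have hK := KJ_pos m
  have hω := uball_pos (m + 1)
  obtain ⟨t, ht, -, hNt⟩ := Nt_small hm (ε := KJ m * δ / C) (by positivity)
  refine ⟨(KJ m)⁻¹ * (uball (m + 1) * C / (2 * t)), by positivity, fun f u => ?_⟩
  have hfm := f.continuous.measurable
  have hmpr : Measurable fun x : Sp (m + 1) => pr (u : Euc (m + 1)) (x : Euc (m + 1)) :=
    (continuous_pr (u : Euc (m + 1))).measurable.comp measurable_subtype_coe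
  -- for positive band width the kernel is bounded away from the pole and small in `L¹` near it;
  -- letting the width tend to zero gives the claim for `R²`
  have hbd : ∀ τ : ℝ, 0 < τ → |∫ θ, Jop τ f (embS u θ) ∂(sg m)| ≤
      KJ m * δ * ‖f‖ + uball (m + 1) * C / (2 * t) * ∫ x, |f x| ∂(sg (m + 1)) := by
    intro τ hτ
    rw [avg_Jop, abs_mul, abs_of_pos (by positivity)]
    set N : Sp (m + 1) → ℝ := fun x => if ‖pr (u : Euc (m + 1)) (x : Euc (m + 1))‖ < t then
      bandM τ (pr (u : Euc (m + 1)) (x : Euc (m + 1))) else 0 with hN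
    have hNi : Integrable N (sg (m + 1)) := by
      refine Integrable.of_bound ((measurable_near u τ t).comp
        measurable_subtype_coe).aestronglyMeasurable 1 (ae_of_all _ fun x => ?_)
      simp only [hN]
      split_ifs
      · rw [Real.norm_of_nonneg (bandM_nonneg _ _)]; exact bandM_le_one _ _
      · simp
    have hfi : Integrable (fun x => |f x|) (sg (m + 1)) := integrable_sg f.continuous.abs
    have h1 : |∫ x : Sp (m + 1), f x * bandM τ (pr (u : Euc (m + 1)) (x : Euc (m + 1)))
        ∂(sg (m + 1))| ≤ ∫ x, (‖f‖ * N x + C * τ / t * |f x|) ∂(sg (m + 1)) := by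
      rw [← Real.norm_eq_abs]
      refine norm_integral_le_of_norm_le ((hNi.const_mul _).add (hfi.const_mul _))
        (ae_of_all _ fun x => ?_)
      rw [norm_mul, Real.norm_of_nonneg (bandM_nonneg _ _)]
      simp only [hN]
      have h0 := bandM_nonneg τ (pr (u : Euc (m + 1)) (x : Euc (m + 1)))
      split_ifs with hlt
      · have h2 : 0 ≤ C * τ / t * |f x| := by positivity
        have h3 := mul_le_mul_of_nonneg_right (f.norm_coe_le_norm x) h0
        linarith
      · push Not at hlt
        have hp : 0 < ‖pr (u : Euc (m + 1)) (x : Euc (m + 1))‖ := ht.trans_le hlt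
        have h4 := hC _ τ (norm_pos_iff.1 hp) hτ.le
        rw [mul_zero, zero_add, mul_comm]
        refine mul_le_mul_of_nonneg_right (h4.trans ?_) (abs_nonneg _)
        rw [div_eq_mul_inv]
        gcongr
    rw [integral_add (hNi.const_mul _) (hfi.const_mul _), integral_const_mul,
      integral_const_mul] at h1
    have h5 := near_pole hm hC0 hC u hτ ht
    calc _ ≤ uball (m + 1) / (2 * τ) * (‖f‖ * ∫ x, N x ∂(sg (m + 1)) +
          C * τ / t * ∫ x, |f x| ∂(sg (m + 1))) := by gcongr
      _ = (2 * τ)⁻¹ * ‖f‖ * (uball (m + 1) * ∫ x, N x ∂(sg (m + 1))) +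
          uball (m + 1) * C / (2 * t) * ∫ x, |f x| ∂(sg (m + 1)) := by
        field_simp
      _ ≤ (2 * τ)⁻¹ * ‖f‖ * (2 * C * τ * (KJ m * δ / C)) +
          uball (m + 1) * C / (2 * t) * ∫ x, |f x| ∂(sg (m + 1)) := by
        have h7 : uball (m + 1) * ∫ x, N x ∂(sg (m + 1)) ≤ 2 * C * τ * (KJ m * δ / C) :=
          h5.trans (by gcongr)
        exact add_le_add (mul_le_mul_of_nonneg_left h7 (by positivity)) le_rfl
      _ = _ := by field_simp
  have hlim : Tendsto (fun i : ℕ => ∫ θ, Jop (1 / ((i : ℝ) + 1)) f (embS u θ) ∂(sg m)) atTop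
      (𝓝 (KJ m * Rop (Rop f) u)) := by
    rw [Rop_apply, ← integral_const_mul]
    refine tendsto_integral_of_dominated_convergence (fun _ => uball m * ‖f‖) ?_
      (integrable_const _) ?_ ?_
    · intro i
      exact ((measurable_Jop _ hfm).comp (continuous_embS u).measurable).aestronglyMeasurable
    · intro i
      exact ae_of_all _ fun θ => abs_Jop_le (tau_pos i) hfm f.norm_coe_le_norm _
    · exact ae_of_all _ fun θ =>
        Jop_tendsto f _ tau_pos tendsto_one_div_add_atTop_nhds_zero_nat
  have h6 := le_of_tendsto hlim.abs (Eventually.of_forall fun i => hbd _ (tau_pos i))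
  rw [abs_mul, abs_of_pos hK, ← le_div_iff₀' hK] at h6
  refine h6.trans_eq ?_
  field_simp

/-! ### Triangular operators and the `L²` inner product -/

section Abstract

variable {E : Type*} [NormedAddCommGroup E] [InnerProductSpace ℝ E]

/-- A symmetric operator that is triangular with small diagonal entries along a chain of
finite-dimensional subspaces is contractive on the orthogonal complement of the first one. -/
theorem chain_contract {T : E →ₗ[ℝ] E} (hT : ∀ x y, ⟪T x, y⟫ = ⟪x, T y⟫)
    {V : ℕ → Submodule ℝ E} [∀ k, FiniteDimensional ℝ (V k)] (hV : Monotone V)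
    (h0 : ∀ x ∈ V 0, T x ∈ V 0) {lam : ℕ → ℝ} {q : ℝ} (hq : ∀ k, |lam k| ≤ q)
    (hs : ∀ k, ∀ x ∈ V (k + 1), T x - lam k • x ∈ V k) (k : ℕ) :
    ∀ x ∈ V k, (∀ y ∈ V 0, ⟪y, x⟫ = 0) → ‖T x‖ ^ 2 ≤ q ^ 2 * ‖x‖ ^ 2 := by
  have hinv : ∀ k, ∀ x ∈ V k, T x ∈ V k := by
    intro k
    cases k with
    | zero => exact h0
    | succ k =>
      intro x hx
      have h1 := (V (k + 1)).add_mem (hV (Nat.le_succ k) (hs k x hx)) ((V (k + 1)).smul_mem (lam k) hx)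
      simpa using h1
  induction k with
  | zero =>
    intro x hx hx0
    have h1 : x = 0 := inner_self_eq_zero.1 (hx0 x hx)
    simp [h1]
  | succ k ih =>
    intro x hx hx0
    obtain ⟨p, hp, r, hr, hxpr⟩ := (V k).exists_add_mem_mem_orthogonal x
    have hr' : ∀ y ∈ V k, ⟪y, r⟫ = 0 := fun y hy => hr y hy
    have hrm : r ∈ V (k + 1) := by
      have : r = x - p := by rw [hxpr]; abel
      rw [this]
      exact (V (k + 1)).sub_mem hx (hV (Nat.le_succ k) hp)
    have hTr : T r = lam k • r := by
      have h1 := hs k r hrm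
      have h2 : ⟪T r - lam k • r, T r - lam k • r⟫ = 0 := by
        rw [inner_sub_right, inner_smul_right, hr' _ h1, mul_zero, sub_zero, ← hT]
        exact hr' _ (hinv k _ h1)
      exact sub_eq_zero.1 (inner_self_eq_zero.1 h2)
    have hp0 : ∀ y ∈ V 0, ⟪y, p⟫ = 0 := by
      intro y hy
      have h1 := hx0 y hy
      rw [hxpr, inner_add_right, hr' y (hV (Nat.zero_le k) hy), add_zero] at h1
      exact h1
    have h1 := ih p hp hp0
    have h2 : ‖x‖ ^ 2 = ‖p‖ ^ 2 + ‖r‖ ^ 2 := by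
      rw [hxpr, ← real_inner_self_eq_norm_sq, inner_add_left, inner_add_right, inner_add_right,
        hr' p hp, real_inner_comm p r, hr' p hp, real_inner_self_eq_norm_sq,
        real_inner_self_eq_norm_sq]
      ring
    have h3 : ‖T x‖ ^ 2 = ‖T p‖ ^ 2 + lam k ^ 2 * ‖r‖ ^ 2 := by
      have h4 : ⟪T p, r⟫ = 0 := hr' _ (hinv k p hp)
      rw [hxpr, map_add, hTr, ← real_inner_self_eq_norm_sq, inner_add_left, inner_add_right,
        inner_add_right, inner_smul_right, real_inner_smul_left, real_inner_smul_left,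
        inner_smul_right, h4, real_inner_comm (T p) r, h4, real_inner_self_eq_norm_sq,
        real_inner_self_eq_norm_sq]
      ring
    have h5 : lam k ^ 2 ≤ q ^ 2 := by
      rw [← sq_abs]
      exact pow_le_pow_left₀ (abs_nonneg _) (hq k) 2
    rw [h2, h3, mul_add]
    gcongr

/-- The version of `chain_contract` for vectors approximated by the chain. -/
theorem chain_contract_closure {T : E →ₗ[ℝ] E} (hT : ∀ x y, ⟪T x, y⟫ = ⟪x, T y⟫)
    {B : ℝ} (hB : ∀ x, ‖T x‖ ≤ B * ‖x‖)
    {V : ℕ → Submodule ℝ E} [∀ k, FiniteDimensional ℝ (V k)] (hV : Monotone V)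
    (h0 : ∀ x ∈ V 0, T x ∈ V 0) {lam : ℕ → ℝ} {q : ℝ} (hq : ∀ k, |lam k| ≤ q)
    (hs : ∀ k, ∀ x ∈ V (k + 1), T x - lam k • x ∈ V k) {x : E}
    (hx : ∀ ε > 0, ∃ k, ∃ y ∈ V k, ‖x - y‖ < ε) (hx0 : ∀ y ∈ V 0, ⟪y, x⟫ = 0) :
    ‖T x‖ ^ 2 ≤ q ^ 2 * ‖x‖ ^ 2 := by
  choose! k y hy hyx using fun i : ℕ => hx (1 / ((i : ℝ) + 1)) (tau_pos i)
  have hlim : Tendsto y atTop (𝓝 x) := by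
    rw [tendsto_iff_norm_sub_tendsto_zero]
    refine squeeze_zero (fun i => norm_nonneg _) (fun i => ?_)
      tendsto_one_div_add_atTop_nhds_zero_nat
    rw [norm_sub_rev]
    exact (hyx i).le
  have hPx : (V 0).starProjection x = 0 := by
    rw [Submodule.starProjection_apply_eq_zero_iff, Submodule.mem_orthogonal]
    exact hx0
  have hz : Tendsto (fun i => y i - (V 0).starProjection (y i)) atTop (𝓝 x) := by
    have h1 := hlim.sub (((V 0).starProjection.continuous.tendsto x).comp hlim)
    rw [hPx, sub_zero] at h1
    exact h1
  have hTc : Continuous T := (T.mkContinuous B hB).continuous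
  refine le_of_tendsto_of_tendsto ((((hTc.tendsto x).comp hz).norm).pow 2)
    ((hz.norm.pow 2).const_mul _) (Eventually.of_forall fun i => ?_)
  refine chain_contract hT hV h0 hq hs (k i) _
    ((V (k i)).sub_mem (hy i) (hV (Nat.zero_le _) ((V 0).starProjection_apply_mem _))) ?_
  intro w hw
  have h2 := (V 0).sub_starProjection_mem_orthogonal (y i)
  exact h2 w hw

end Abstract

/-- The space of continuous functions on the sphere, with the `L²` inner product. -/
def CE (k : ℕ) : Type := C(Sp k, ℝ)

instance (k : ℕ) : AddCommGroup (CE k) := inferInstanceAs (AddCommGroup C(Sp k, ℝ))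
instance (k : ℕ) : Module ℝ (CE k) := inferInstanceAs (Module ℝ C(Sp k, ℝ))

/-- The identity map onto the space with the `L²` inner product. -/
def toCE (k : ℕ) : C(Sp k, ℝ) ≃ₗ[ℝ] CE k := LinearEquiv.refl ℝ _

/-- The identity map back to the space with the sup-norm. -/
def ofCE {k : ℕ} (f : CE k) : C(Sp k, ℝ) := f

theorem integrable_CE {k : ℕ} [NeZero k] (f : C(Sp k, ℝ)) : Integrable f (sg k) :=
  integrable_sg f.continuous

theorem integral_add_CE {k : ℕ} [NeZero k] (f g h : C(Sp k, ℝ)) :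
    ∫ x, (f + g) x * h x ∂(sg k) = ∫ x, f x * h x ∂(sg k) + ∫ x, g x * h x ∂(sg k) := by
  refine Eq.trans ?_ (integral_add (integrable_CE (f * h)) (integrable_CE (g * h)))
  congr 1; ext x; simp [add_mul]

/-- The `L²` inner product. -/
instance coreCE (k : ℕ) [NeZero k] : InnerProductSpace.Core ℝ (CE k) where
  inner f g := ∫ x, ofCE f x * ofCE g x ∂(sg k)
  conj_inner_symm f g := by
    simp only [RCLike.conj_to_real]
    congr 1; ext x; ring
  re_inner_nonneg f := by
    simp only [RCLike.re_to_real]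
    exact integral_nonneg fun x => mul_self_nonneg _
  add_left f g h := integral_add_CE f g h
  smul_left f g r := by
    simp only [RCLike.conj_to_real]
    rw [← integral_const_mul]
    congr 1; ext x
    change (r * ofCE f x) * _ = _
    ring
  definite f hf := by
    by_contra hne
    have h1 : ∃ x, ofCE f x ≠ 0 := by
      by_contra hcon
      push Not at hcon
      exact hne (ContinuousMap.ext hcon)
    obtain ⟨x, hx⟩ := h1
    have h2 := integral_sg_pos (f := fun x => ofCE f x * ofCE f x) (by fun_prop)
      (fun x => mul_self_nonneg _) (θ := x) (mul_self_ne_zero.2 hx)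
    exact h2.ne' hf

instance (k : ℕ) [NeZero k] : NormedAddCommGroup (CE k) :=
  (coreCE k).toNormedAddCommGroup
instance (k : ℕ) [NeZero k] : InnerProductSpace ℝ (CE k) := InnerProductSpace.ofCore (coreCE k).toCore

theorem inner_CE {k : ℕ} [NeZero k] (f g : CE k) : ⟪f, g⟫ = ∫ x, ofCE f x * ofCE g x ∂(sg k) := rfl

theorem norm_CE_sq {k : ℕ} [NeZero k] (f : CE k) : ‖f‖ ^ 2 = ∫ x, ofCE f x ^ 2 ∂(sg k) := by
  rw [← real_inner_self_eq_norm_sq, inner_CE]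
  congr 1; ext x; ring

theorem norm_CE_le {k : ℕ} [NeZero k] {f : CE k} {B : ℝ} (hB0 : 0 ≤ B) (hB : ∀ x, |ofCE f x| ≤ B) :
    ‖f‖ ≤ B := by
  refine abs_le_of_sq_le_sq' ?_ hB0 |>.2
  rw [norm_CE_sq]
  have h : ∫ x, ofCE f x ^ 2 ∂(sg k) ≤ ∫ _, B ^ 2 ∂(sg k) := by
    refine integral_mono (integrable_CE (ofCE f ^ 2)) (integrable_const _) fun x => ?_
    exact sq_le_sq' (abs_le.1 (hB x)).1 (abs_le.1 (hB x)).2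
  simpa using h

theorem integral_abs_le_CE {k : ℕ} [NeZero k] (f : CE k) : ∫ x, |ofCE f x| ∂(sg k) ≤ ‖f‖ := by
  set g : CE k := toCE k ⟨fun x => |ofCE f x|, by fun_prop⟩ with hg
  have h1 : ⟪g, toCE k 1⟫ = ∫ x, |ofCE f x| ∂(sg k) := by
    rw [inner_CE]
    congr 1; ext x
    change |ofCE f x| * 1 = _
    ring
  have h2 : ‖g‖ = ‖f‖ := by
    have : ‖g‖ ^ 2 = ‖f‖ ^ 2 := by
      rw [norm_CE_sq, norm_CE_sq]
      congr 1; ext x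
      exact sq_abs _
    exact (pow_left_inj₀ (norm_nonneg _) (norm_nonneg _) two_ne_zero).1 this
  have h3 : ‖toCE k 1‖ ≤ 1 := by
    refine norm_CE_le zero_le_one fun x => ?_
    change |(1 : ℝ)| ≤ 1
    simp
  rw [← h1, ← h2]
  calc _ ≤ ‖g‖ * ‖toCE k 1‖ := real_inner_le_norm _ _
    _ ≤ ‖g‖ * 1 := by gcongr
    _ = _ := mul_one _

/-! ### Spectrum of the Radon transform on even polynomials -/

/-- The operator `m R` on the space with the `L²` inner product: the derivative at the ball of the
normalized projection body operator. -/
def Tm (m : ℕ) [NeZero m] : CE (m + 1) →ₗ[ℝ] CE (m + 1) :=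
  (toCE (m + 1)).toLinearMap ∘ₗ ((m : ℝ) • Rop) ∘ₗ (toCE (m + 1)).symm.toLinearMap

theorem Tm_apply {m : ℕ} [NeZero m] (f : CE (m + 1)) (x : Sp (m + 1)) :
    ofCE (Tm m f) x = m * Rop (ofCE f) x := rfl

theorem Tm_toCE {m : ℕ} [NeZero m] (f : C(Sp (m + 1), ℝ)) :
    Tm m (toCE (m + 1) f) = toCE (m + 1) ((m : ℝ) • Rop f) := rfl

theorem ofCE_ext {k : ℕ} {f g : CE k} (h : ∀ x, ofCE f x = ofCE g x) : f = g := ContinuousMap.ext h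

theorem Tm_symm {m : ℕ} [NeZero m] (f g : CE (m + 1)) : ⟪Tm m f, g⟫ = ⟪f, Tm m g⟫ := by
  rw [inner_CE, inner_CE]
  simp only [Tm_apply]
  have h1 : ∀ x, (m : ℝ) * Rop (ofCE f) x * ofCE g x = m * (Rop (ofCE f) x * ofCE g x) :=
    fun x => by ring
  have h2 : ∀ x, ofCE f x * ((m : ℝ) * Rop (ofCE g) x) = m * (ofCE f x * Rop (ofCE g) x) :=
    fun x => by ring
  simp_rw [h1, h2]
  rw [integral_const_mul, integral_const_mul, Rop_symm]

theorem Rop_one {m : ℕ} [NeZero m] : Rop (1 : C(Sp (m + 1), ℝ)) = 1 := by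
  ext u
  rw [Rop_apply]
  simp

theorem Rop_sq_le {m : ℕ} [NeZero m] (f : C(Sp (m + 1), ℝ)) (u : Sp (m + 1)) :
    Rop f u ^ 2 ≤ Rop (f * f) u := by
  set c := Rop f u with hc
  have h0 : 0 ≤ Rop ((f - c • 1) * (f - c • 1)) u := by
    rw [Rop_apply]
    exact integral_nonneg fun θ => mul_self_nonneg _
  have h1 : (f - c • 1) * (f - c • 1) = f * f - (2 * c) • f + c ^ 2 • (1 : C(Sp (m + 1), ℝ)) := by
    ext x
    simp
    ring
  rw [h1, map_add, map_sub, map_smul, map_smul, Rop_one] at h0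
  simp only [ContinuousMap.add_apply, ContinuousMap.sub_apply, ContinuousMap.smul_apply,
    ContinuousMap.one_apply, smul_eq_mul, mul_one] at h0
  nlinarith

theorem Tm_bound {m : ℕ} [NeZero m] (f : CE (m + 1)) : ‖Tm m f‖ ≤ m * ‖f‖ := by
  refine (abs_le_of_sq_le_sq' ?_ (by positivity)).2
  rw [mul_pow, norm_CE_sq, norm_CE_sq]
  simp only [Tm_apply, mul_pow]
  rw [integral_const_mul]
  refine mul_le_mul_of_nonneg_left ?_ (by positivity)
  have h1 : ∫ x, Rop (ofCE f) x ^ 2 ∂(sg (m + 1)) ≤ ∫ x, Rop (ofCE f * ofCE f) x ∂(sg (m + 1)) :=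
    integral_mono (integrable_CE (Rop (ofCE f) ^ 2)) (integrable_CE _) fun x => Rop_sq_le _ x
  refine h1.trans_eq ?_
  have h2 := Rop_symm (ofCE f * ofCE f) 1
  rw [Rop_one] at h2
  simp only [ContinuousMap.one_apply, mul_one, ContinuousMap.mul_apply] at h2
  rw [h2]
  congr 1; ext x; ring

/-- The even polynomials of degree at most `2 (k + 1)`, restricted to the sphere. -/
def Vk (n k : ℕ) : Submodule ℝ (CE n) :=
  Submodule.span ℝ {f | ∃ (a : Euc n) (i : ℕ), i ≤ k + 1 ∧ f = toCE n (powF a (2 * i))}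

theorem powF_mem_Vk {n k : ℕ} (a : Euc n) {i : ℕ} (hi : i ≤ k + 1) :
    toCE n (powF a (2 * i)) ∈ Vk n k := Submodule.subset_span ⟨a, i, hi, rfl⟩

theorem Vk_mono (n : ℕ) : Monotone (Vk n) := by
  intro k l hkl
  refine Submodule.span_mono ?_
  rintro f ⟨a, i, hi, rfl⟩
  exact ⟨a, i, by omega, rfl⟩

/-- Monomials on the sphere. -/
def monF {n j : ℕ} (p : Fin j → Fin n) : C(Sp n, ℝ) :=
  ⟨fun x => ∏ i, (x : Euc n) (p i), by fun_prop⟩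

theorem powF_eq_sum {n : ℕ} (a : Euc n) (j : ℕ) :
    powF a j = ∑ p : Fin j → Fin n, (∏ i, a (p i)) • monF p := by
  ext x
  rw [powF_apply, PiLp.inner_apply, Fintype.sum_pow, ContinuousMap.sum_apply]
  refine Finset.sum_congr rfl fun p _ => ?_
  change _ = (∏ i, a (p i)) * ∏ i, (x : Euc n) (p i)
  rw [← Finset.prod_mul_distrib]
  refine Finset.prod_congr rfl fun i _ => ?_
  simp

instance Vk_finite (n k : ℕ) : FiniteDimensional ℝ (Vk n k) := by
  set s : Set (CE n) := ⋃ i ∈ Finset.range (k + 2),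
    range fun p : Fin (2 * i) → Fin n => toCE n (monF p) with hs
  have hfin : s.Finite := Set.Finite.biUnion (Finset.finite_toSet _) fun i _ => finite_range _
  have : FiniteDimensional ℝ (Submodule.span ℝ s) := FiniteDimensional.span_of_finite ℝ hfin
  refine Submodule.finiteDimensional_of_le (S₂ := Submodule.span ℝ s) (Submodule.span_le.2 ?_)
  rintro f ⟨a, i, hi, rfl⟩
  rw [powF_eq_sum, map_sum]
  refine Submodule.sum_mem _ fun p _ => ?_
  rw [map_smul]
  refine Submodule.smul_mem _ _ (Submodule.subset_span ?_)
  exact mem_biUnion (Finset.mem_coe.2 (Finset.mem_range.2 (by omega : i < k + 2))) ⟨p, rfl⟩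

theorem Rop_powF {m : ℕ} [NeZero m] (a : Euc (m + 1)) (i : ℕ) :
    Rop (powF a (2 * i)) = ∑ l ∈ Finset.range (i + 1),
      (cm m (2 * i) * ((-1) ^ l * (‖a‖ ^ 2) ^ (i - l) * (i.choose l))) • powF a (2 * l) := by
  ext u
  have h1 : Rop (powF a (2 * i)) u = ‖pr (u : Euc (m + 1)) a‖ ^ (2 * i) * cm m (2 * i) :=
    Rfun_powF a (2 * i) u
  rw [h1, pow_mul, norm_pr_sq, sub_eq_neg_add, add_pow, ContinuousMap.sum_apply, Finset.sum_mul]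
  refine Finset.sum_congr rfl fun l _ => ?_
  rw [ContinuousMap.smul_apply, powF_apply, smul_eq_mul, pow_mul ⟪(u : Euc (m + 1)), a⟫, neg_pow]
  ring

theorem Tm_powF_mem {m : ℕ} [NeZero m] (a : Euc (m + 1)) {i k : ℕ} (hi : i ≤ k + 1) :
    Tm m (toCE _ (powF a (2 * i))) ∈ Vk (m + 1) k := by
  rw [Tm_toCE, Rop_powF, map_smul, map_sum]
  refine Submodule.smul_mem _ _ (Submodule.sum_mem _ fun l hl => ?_)
  rw [map_smul]
  exact Submodule.smul_mem _ _ (powF_mem_Vk a (by have := Finset.mem_range.1 hl; omega))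

/-- The diagonal entries of the triangular operator `Tm`. -/
def lamT (m : ℕ) [NeZero m] (k : ℕ) : ℝ := m * (cm m (2 * (k + 2)) * (-1) ^ (k + 2))

/-- `Tm` acts as the scalar `lamT m k` on polynomials of degree `2 (k + 2)` modulo lower degree. -/
theorem Tm_triangular {m : ℕ} [NeZero m] (k : ℕ) (x : CE (m + 1)) (hx : x ∈ Vk (m + 1) (k + 1)) :
    Tm m x - lamT m k • x ∈ Vk (m + 1) k := by
  have h : Vk (m + 1) (k + 1) ≤ (Vk (m + 1) k).comap (Tm m - lamT m k • LinearMap.id) := by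
    refine Submodule.span_le.2 ?_
    rintro f ⟨a, i, hi, rfl⟩
    change Tm m (toCE _ (powF a (2 * i))) - lamT m k • toCE _ (powF a (2 * i)) ∈ Vk (m + 1) k
    rcases Nat.lt_or_ge i (k + 2) with hlt | hge
    · exact Submodule.sub_mem _ (Tm_powF_mem a (by omega))
        (Submodule.smul_mem _ _ (powF_mem_Vk a (by omega)))
    · obtain rfl : i = k + 2 := by omega
      rw [Tm_toCE, Rop_powF, map_smul, map_sum, Finset.sum_range_succ, smul_add]
      have h2 : (m : ℝ) • toCE (m + 1) ((cm m (2 * (k + 2)) * ((-1) ^ (k + 2) *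
          (‖a‖ ^ 2) ^ (k + 2 - (k + 2)) * ((k + 2).choose (k + 2)))) • powF a (2 * (k + 2))) =
          lamT m k • toCE (m + 1) (powF a (2 * (k + 2))) := by
        rw [map_smul, smul_smul, lamT]
        congr 1
        simp
      rw [h2, add_sub_cancel_right]
      refine Submodule.smul_mem _ _ (Submodule.sum_mem _ fun l hl => ?_)
      rw [map_smul]
      exact Submodule.smul_mem _ _ (powF_mem_Vk a (by have := Finset.mem_range.1 hl; omega))
  exact h hx

/-- The contraction factor of `Tm` orthogonally to the quadratic forms. -/
def qT (m : ℕ) [NeZero m] : ℝ := m * cm m 4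

theorem qT_nonneg (m : ℕ) [NeZero m] : 0 ≤ qT m :=
  mul_nonneg (Nat.cast_nonneg _) (cm_nonneg m 2)

theorem qT_lt_one {m : ℕ} [NeZero m] (hm : 2 ≤ m) : qT m < 1 := by
  rw [← cm_two m, qT]
  have : (0 : ℝ) < m := by exact_mod_cast (by omega : 0 < m)
  exact mul_lt_mul_of_pos_left (cm_four_lt m hm) this

theorem lamT_le {m : ℕ} [NeZero m] (k : ℕ) : |lamT m k| ≤ qT m := by
  rw [lamT, qT, abs_mul, abs_mul, abs_pow, abs_neg, abs_one, one_pow, mul_one, Nat.abs_cast,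
    abs_of_nonneg (cm_nonneg m (k + 2))]
  gcongr
  exact cm_le m (by omega)

theorem Tm_Vk_zero {m : ℕ} [NeZero m] (x : CE (m + 1)) (hx : x ∈ Vk (m + 1) 0) :
    Tm m x ∈ Vk (m + 1) 0 := by
  have h : Vk (m + 1) 0 ≤ (Vk (m + 1) 0).comap (Tm m) := by
    refine Submodule.span_le.2 ?_
    rintro f ⟨a, i, hi, rfl⟩
    exact Tm_powF_mem a hi
  exact h hx

theorem one_mem_Vk (n k : ℕ) : toCE n 1 ∈ Vk n k := by
  have : toCE n 1 = toCE n (powF 0 (2 * 0)) :=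
    congrArg _ (by ext x; simp [powF_apply])
  rw [this]
  exact powF_mem_Vk 0 (by omega)

theorem Tm_one {m : ℕ} [NeZero m] : Tm m (toCE _ 1) = (m : ℝ) • toCE _ 1 := by
  rw [Tm_toCE, Rop_one, map_smul]

/-- On quadratic forms, the square of `Tm` is the identity up to constants. -/
theorem Tm_sq_quad {m : ℕ} [NeZero m] (x : CE (m + 1)) (hx : x ∈ Vk (m + 1) 0) :
    ∃ κ : ℝ, Tm m (Tm m x) - x = κ • toCE _ 1 := by
  have h : Vk (m + 1) 0 ≤ (Submodule.span ℝ {toCE (m + 1) 1}).comap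
      (Tm m ∘ₗ Tm m - LinearMap.id) := by
    refine Submodule.span_le.2 ?_
    rintro f ⟨a, i, hi, rfl⟩
    refine Submodule.mem_span_singleton.2 ?_
    change ∃ κ : ℝ, κ • toCE _ 1 = Tm m (Tm m (toCE _ (powF a (2 * i)))) - toCE _ (powF a (2 * i))
    have hi' : i = 0 ∨ i = 1 := by omega
    rcases hi' with rfl | rfl
    · have : toCE (m + 1) (powF a (2 * 0)) = toCE (m + 1) 1 :=
        congrArg _ (by ext x; simp [powF_apply])
      rw [this, Tm_one, map_smul, Tm_one]
      exact ⟨m * m - 1, by rw [sub_smul, mul_smul, one_smul]⟩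
    · have h1 : Tm m (toCE _ (powF a (2 * 1))) =
          ‖a‖ ^ 2 • toCE (m + 1) 1 - toCE _ (powF a (2 * 1)) := by
        refine ofCE_ext fun u => ?_
        have h2 : Rop (powF a (2 * 1)) u = ‖pr (u : Euc (m + 1)) a‖ ^ (2 * 1) * cm m (2 * 1) :=
          Rfun_powF a (2 * 1) u
        rw [Tm_apply]
        change (m : ℝ) * Rop (powF a (2 * 1)) u = ‖a‖ ^ 2 * 1 - ⟪(u : Euc (m + 1)), a⟫ ^ (2 * 1)
        rw [h2, mul_one 2, norm_pr_sq]
        linear_combination (‖a‖ ^ 2 - ⟪(u : Euc (m + 1)), a⟫ ^ 2) * cm_two m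
      rw [h1, map_sub, map_smul, Tm_one, h1]
      refine ⟨‖a‖ ^ 2 * m - ‖a‖ ^ 2, ?_⟩
      rw [sub_smul, mul_smul]
      abel
  obtain ⟨κ, hκ⟩ := Submodule.mem_span_singleton.1 (h hx)
  exact ⟨κ, hκ.symm⟩

theorem quad_of_mem {n : ℕ} (x : CE n) (hx : x ∈ Vk n 0) :
    ∃ M : Euc n →ₗ[ℝ] Euc n, M.IsSymmetric ∧ ∀ u : Sp n, ofCE x u = ⟪(u : Euc n), M u⟫ := by
  induction hx using Submodule.span_induction with
  | mem f hf =>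
    obtain ⟨a, i, hi, rfl⟩ := hf
    have hi' : i = 0 ∨ i = 1 := by omega
    rcases hi' with rfl | rfl
    · refine ⟨LinearMap.id, fun x y => rfl, fun u => ?_⟩
      change ⟪(u : Euc n), a⟫ ^ (2 * 0) = ⟪(u : Euc n), (u : Euc n)⟫
      rw [real_inner_self_eq_norm_sq, u.norm_coe]
      simp
    · refine ⟨(innerₛₗ ℝ a).smulRight a, fun x y => ?_, fun u => ?_⟩
      · simp only [LinearMap.smulRight_apply, innerₛₗ_apply_apply, inner_smul_right,
          real_inner_smul_left]
        rw [real_inner_comm a x]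
        ring
      · change ⟪(u : Euc n), a⟫ ^ (2 * 1) = ⟪(u : Euc n), ⟪a, (u : Euc n)⟫ • a⟫
        rw [inner_smul_right, real_inner_comm a (u : Euc n)]
        ring
  | zero => exact ⟨0, fun x y => by simp, fun u => by simp; rfl⟩
  | add f g _ _ hf hg =>
    obtain ⟨M, hM, h1⟩ := hf
    obtain ⟨N, hN, h2⟩ := hg
    refine ⟨M + N, hM.add hN, fun u => ?_⟩
    rw [LinearMap.add_apply, inner_add_right, ← h1, ← h2]
    rfl
  | smul c f _ hf =>
    obtain ⟨M, hM, h1⟩ := hf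
    refine ⟨c • M, fun x y => ?_, fun u => ?_⟩
    · rw [LinearMap.smul_apply, LinearMap.smul_apply, real_inner_smul_left, inner_smul_right, hM x y]
    · rw [LinearMap.smul_apply, inner_smul_right, ← h1]
      rfl

/-! ### Stability of the linearized equation -/

/-- The even part of a function on the sphere. -/
def symF {n : ℕ} (g : C(Sp n, ℝ)) : C(Sp n, ℝ) :=
  ⟨fun x => (g x + g (-x)) / 2, by
    have : Continuous fun x : Sp n => -x := continuous_neg
    fun_prop⟩

theorem symF_apply {n : ℕ} (g : C(Sp n, ℝ)) (x : Sp n) : symF g x = (g x + g (-x)) / 2 := rfl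

theorem symF_mem {n : ℕ} (g : C(Sp n, ℝ)) (hg : g ∈ polF n) : ∃ k, toCE n (symF g) ∈ Vk n k := by
  induction hg using Submodule.span_induction with
  | mem f hf =>
    obtain ⟨a, j, rfl⟩ := hf
    rcases Nat.even_or_odd j with hj | hj
    · obtain ⟨i, rfl⟩ := even_iff_exists_two_mul.1 hj
      have h : symF (powF a (2 * i)) = powF a (2 * i) := by
        ext x
        rw [symF_apply, powF_apply, powF_apply]
        simp [pow_mul]
      exact ⟨i, by rw [h]; exact powF_mem_Vk a (by omega)⟩
    · have h : symF (powF a j) = 0 := by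
        ext x
        rw [symF_apply, powF_apply, powF_apply]
        simp [hj.neg_pow]
      exact ⟨0, by rw [h, map_zero]; exact Submodule.zero_mem _⟩
  | zero =>
    have h : symF (0 : C(Sp n, ℝ)) = 0 := by ext x; simp [symF_apply]
    exact ⟨0, by rw [h, map_zero]; exact Submodule.zero_mem _⟩
  | add f g _ _ hf hg =>
    obtain ⟨k, hk⟩ := hf
    obtain ⟨l, hl⟩ := hg
    have h : symF (f + g) = symF f + symF g := by
      ext x; simp [symF_apply]; ring
    refine ⟨max k l, ?_⟩
    rw [h, map_add]
    exact Submodule.add_mem _ (Vk_mono n (le_max_left _ _) hk) (Vk_mono n (le_max_right _ _) hl)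
  | smul c f _ hf =>
    obtain ⟨k, hk⟩ := hf
    have h : symF (c • f) = c • symF f := by
      ext x; simp [symF_apply]; ring
    exact ⟨k, by rw [h, map_smul]; exact Submodule.smul_mem _ _ hk⟩

theorem even_approx {n : ℕ} [NeZero n] (f : C(Sp n, ℝ)) (hf : ∀ x, f (-x) = f x) {ε : ℝ} (hε : 0 < ε) :
    ∃ k, ∃ y ∈ Vk n k, ‖toCE n f - y‖ < ε := by
  obtain ⟨g, hg, hgf⟩ := polF_approx f (half_pos hε)
  obtain ⟨k, hk⟩ := symF_mem g hg
  refine ⟨k, _, hk, lt_of_le_of_lt (norm_CE_le (half_pos hε).le fun x => ?_) (half_lt_self hε)⟩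
  change |f x - (g x + g (-x)) / 2| ≤ ε / 2
  have h1 := ((f - g).norm_coe_le_norm x).trans hgf.le
  have h2 := ((f - g).norm_coe_le_norm (-x)).trans hgf.le
  rw [ContinuousMap.sub_apply, Real.norm_eq_abs, abs_le] at h1 h2
  rw [hf x] at h2
  rw [abs_le]
  constructor <;> linarith [h1.1, h1.2, h2.1, h2.2]

theorem even_of_Vk_zero {n : ℕ} (x : CE n) (hx : x ∈ Vk n 0) (u : Sp n) : ofCE x (-u) = ofCE x u := by
  obtain ⟨M, -, h⟩ := quad_of_mem x hx
  rw [h, h]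
  simp

/-- `m R` is contractive in `L²` on even functions orthogonal to the quadratic forms. -/
theorem Tm_contract {m : ℕ} [NeZero m] (f : CE (m + 1)) (hf : ∀ x, ofCE f (-x) = ofCE f x)
    (h0 : ∀ y ∈ Vk (m + 1) 0, ⟪y, f⟫ = 0) : ‖Tm m f‖ ^ 2 ≤ qT m ^ 2 * ‖f‖ ^ 2 :=
  chain_contract_closure Tm_symm Tm_bound (Vk_mono (m + 1)) Tm_Vk_zero lamT_le Tm_triangular
    (fun _ hε => even_approx (ofCE f) hf hε) h0

/-- Stability of the linearized fixed point equation: an even function which is almost fixed by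
the square of `m R`, up to constants, is almost a quadratic form. -/
theorem spectral_stability {m : ℕ} [NeZero m] (hm : 2 ≤ m) : ∃ C : ℝ, 0 < C ∧
    ∀ (φ : C(Sp (m + 1), ℝ)) (κ e : ℝ), 0 ≤ e → (∀ x, φ (-x) = φ x) →
      (∀ u, |φ u - (m : ℝ) ^ 2 * Rop (Rop φ) u - κ| ≤ e) →
      ∃ M : Euc (m + 1) →ₗ[ℝ] Euc (m + 1), M.IsSymmetric ∧
        ∀ u : Sp (m + 1), |φ u - ⟪(u : Euc (m + 1)), M u⟫| ≤ C * e := by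
  have hm0 : (0 : ℝ) < m := by exact_mod_cast (by omega : 0 < m)
  obtain ⟨B, hB0, hB⟩ := kernel_bound hm (δ := 1 / (2 * (m : ℝ) ^ 2)) (by positivity)
  have hq : 0 < 1 - qT m ^ 2 := by
    have h1 := qT_nonneg m
    have h2 := qT_lt_one hm
    nlinarith
  refine ⟨4 + 2 * (m : ℝ) ^ 2 * B / (1 - qT m ^ 2), by positivity, fun φ κ e he hev hφ => ?_⟩
  set F : CE (m + 1) := toCE (m + 1) φ with hF
  set P : CE (m + 1) := (Vk (m + 1) 0).starProjection F with hP
  set ψ : CE (m + 1) := F - P with hψ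
  have hPm : P ∈ Vk (m + 1) 0 := (Vk (m + 1) 0).starProjection_apply_mem _
  have hψ0 : ∀ y ∈ Vk (m + 1) 0, ⟪y, ψ⟫ = 0 := by
    intro y hy
    exact (Vk (m + 1) 0).sub_starProjection_mem_orthogonal F y hy
  have hψa : ∀ x, ofCE ψ x = φ x - ofCE P x := fun x => rfl
  have hψe : ∀ x, ofCE ψ (-x) = ofCE ψ x := by
    intro x
    rw [hψa, hψa, hev, even_of_Vk_zero P hPm]
  obtain ⟨κ', hκ'⟩ := Tm_sq_quad P hPm
  have hcon := Tm_contract ψ hψe hψ0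
  have hone : ⟪toCE (m + 1) 1, ψ⟫ = 0 := hψ0 _ (one_mem_Vk _ _)
  have h1n : ⟪toCE (m + 1) 1, toCE (m + 1) 1⟫ = 1 := by
    rw [inner_CE]
    change ∫ _ : Sp (m + 1), (1 : ℝ) * 1 ∂(sg (m + 1)) = 1
    simp
  have h1n' : ‖toCE (m + 1) 1‖ = 1 := by
    have h := real_inner_self_eq_norm_sq (toCE (m + 1) (1 : C(Sp (m + 1), ℝ)))
    rw [h1n] at h
    nlinarith [norm_nonneg (toCE (m + 1) (1 : C(Sp (m + 1), ℝ)))]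
  set E0 : CE (m + 1) := F - Tm m (Tm m F) - κ • toCE (m + 1) 1 with hE0
  have hE0a : ∀ u, ofCE E0 u = φ u - (m : ℝ) ^ 2 * Rop (Rop φ) u - κ := by
    intro u
    change φ u - (m : ℝ) * Rop ((m : ℝ) • Rop φ) u - κ * 1 = _
    rw [map_smul, ContinuousMap.smul_apply, smul_eq_mul]
    ring
  have hE0n : ‖E0‖ ≤ e := norm_CE_le he fun u => by rw [hE0a]; exact hφ u
  have hE0ψ : E0 = ψ - Tm m (Tm m ψ) - (κ + κ') • toCE (m + 1) 1 := by
    have h2 : Tm m (Tm m P) = P + κ' • toCE (m + 1) 1 := by rw [← hκ']; abel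
    rw [hE0, hψ, map_sub, map_sub, h2, add_smul]
    abel
  have hψn : ‖ψ‖ ≤ e / (1 - qT m ^ 2) := by
    have h3 : ⟪E0, ψ⟫ = ‖ψ‖ ^ 2 - ‖Tm m ψ‖ ^ 2 := by
      rw [hE0ψ, inner_sub_left, inner_sub_left, real_inner_smul_left, hone, Tm_symm,
        real_inner_self_eq_norm_sq, real_inner_self_eq_norm_sq]
      ring
    have h4 := real_inner_le_norm E0 ψ
    rw [h3] at h4
    rw [le_div_iff₀ hq]
    rcases (norm_nonneg ψ).eq_or_lt with h5 | h5
    · rw [← h5]; linarith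
    · have h6 : ‖E0‖ * ‖ψ‖ ≤ e * ‖ψ‖ := by gcongr
      refine le_of_mul_le_mul_right ?_ h5
      nlinarith
  have hκ : |κ + κ'| ≤ e := by
    have h7 : ⟪E0, toCE (m + 1) 1⟫ = -(κ + κ') := by
      have h8 : ⟪ψ, toCE (m + 1) 1⟫ = 0 := by rw [real_inner_comm]; exact hone
      rw [hE0ψ, inner_sub_left, inner_sub_left, real_inner_smul_left, Tm_symm, Tm_symm, Tm_one,
        map_smul, Tm_one, inner_smul_right, inner_smul_right, h8, h1n]
      ring
    have h9 := abs_real_inner_le_norm E0 (toCE (m + 1) 1)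
    rw [h7, abs_neg, h1n', mul_one] at h9
    exact h9.trans hE0n
  have hpt : ∀ u, |ofCE ψ u - (m : ℝ) ^ 2 * Rop (Rop (ofCE ψ)) u| ≤ 2 * e := by
    intro u
    have h10 : ofCE E0 u = ofCE ψ u - (m : ℝ) ^ 2 * Rop (Rop (ofCE ψ)) u - (κ + κ') := by
      rw [hE0ψ]
      change ofCE ψ u - (m : ℝ) * Rop ((m : ℝ) • Rop (ofCE ψ)) u - (κ + κ') * 1 = _
      rw [map_smul, ContinuousMap.smul_apply, smul_eq_mul]
      ring
    have h11 := hφ u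
    rw [← hE0a, h10] at h11
    rw [abs_le] at h11 hκ ⊢
    constructor <;> linarith [h11.1, h11.2, hκ.1, hκ.2]
  have hsup : ‖ofCE ψ‖ ≤ (4 + 2 * (m : ℝ) ^ 2 * B / (1 - qT m ^ 2)) * e := by
    have h12 : ‖ofCE ψ‖ ≤ 2 * e + (1 / 2 * ‖ofCE ψ‖ +
        (m : ℝ) ^ 2 * B * (e / (1 - qT m ^ 2))) := by
      rw [ContinuousMap.norm_le _ (by positivity)]
      intro u
      have h13 := hpt u
      have h14 := hB (ofCE ψ) u
      have h15 : ∫ x, |ofCE ψ x| ∂(sg (m + 1)) ≤ e / (1 - qT m ^ 2) :=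
        (integral_abs_le_CE ψ).trans hψn
      have h16 : |(m : ℝ) ^ 2 * Rop (Rop (ofCE ψ)) u| ≤ 1 / 2 * ‖ofCE ψ‖ +
          (m : ℝ) ^ 2 * B * (e / (1 - qT m ^ 2)) := by
        rw [abs_mul, abs_of_pos (by positivity : (0 : ℝ) < (m : ℝ) ^ 2)]
        calc _ ≤ (m : ℝ) ^ 2 * (1 / (2 * (m : ℝ) ^ 2) * ‖ofCE ψ‖ +
              B * ∫ x, |ofCE ψ x| ∂(sg (m + 1))) := by gcongr
          _ ≤ (m : ℝ) ^ 2 * (1 / (2 * (m : ℝ) ^ 2) * ‖ofCE ψ‖ +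
              B * (e / (1 - qT m ^ 2))) := by gcongr
          _ = _ := by field_simp
      rw [Real.norm_eq_abs]
      rw [abs_le] at h13 h16 ⊢
      constructor <;> linarith [h13.1, h13.2, h16.1, h16.2]
    have h17 : (4 + 2 * (m : ℝ) ^ 2 * B / (1 - qT m ^ 2)) * e =
        4 * e + 2 * ((m : ℝ) ^ 2 * B * (e / (1 - qT m ^ 2))) := by ring
    rw [h17]
    linarith
  obtain ⟨M, hM, hMu⟩ := quad_of_mem P hPm
  refine ⟨M, hM, fun u => ?_⟩
  rw [← hMu, ← hψa]
  exact ((ofCE ψ).norm_coe_le_norm u).trans hsup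

/-! ### The second iterate -/

/-- The deviation `h - 1` of a sublinear function from `1` on the sphere. -/
def devF {m : ℕ} {h : Euc (m + 1) → ℝ} (hh : Subl h) : C(Sp (m + 1), ℝ) :=
  ⟨fun u => h u - 1, (hh.continuous.comp continuous_subtype_val).sub continuous_const⟩

theorem devF_apply {m : ℕ} {h : Euc (m + 1) → ℝ} (hh : Subl h) (u : Sp (m + 1)) :
    devF hh u = h u - 1 := rfl

theorem Subl.add_norm {n : ℕ} {h : Euc n → ℝ} {a b : ℝ} (hs : Subl (fun x => h x - a * ‖x‖))
    (hab : b ≤ a) : Subl (fun x => h x - b * ‖x‖) := by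
  have := hs.sum (subl_norm.const_mul (sub_nonneg.2 hab))
  convert this using 2
  ring

theorem Subl.of_sub_norm {n : ℕ} {h : Euc n → ℝ} {a : ℝ} (hs : Subl (fun x => h x - a * ‖x‖))
    (ha : 0 ≤ a) : Subl h := by
  simpa using hs.add_norm ha

/-- The Lipschitz constant in the iteration of `Pop`. -/
def C1 (m : ℕ) : ℝ := m + CB m + 1

theorem C1_ge_one (m : ℕ) : 1 ≤ C1 m := by
  have := CB_nonneg m
  have : (0 : ℝ) ≤ m := by positivity
  unfold C1; linarith

/-- One application of `Pop`: the deviation from the norm grows by a bounded factor. -/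
theorem Pop_step {m : ℕ} [NeZero m] {h : Euc (m + 1) → ℝ} {η δ : ℝ} (hδ : 0 < δ)
    (hδη : δ ≤ η) (hη : η ≤ 1 / 8) (hs : Subl (fun x => h x - (1 - η) * ‖x‖)) (hh : Subl h)
    (he : ∀ x, h (-x) = h x) (hb : ∀ u, ‖u‖ = 1 → |h u - 1| ≤ δ) :
    Subl (fun x => Pop h x - (1 - C1 m * η) * ‖x‖) ∧
    (∀ u, ‖u‖ = 1 → |Pop h u - 1| ≤ C1 m * δ) ∧
    ∀ u : Sp (m + 1), |devF (Pop_subl hh) u - m * Rop (devF hh) u| ≤ CB m * (η * δ) := by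
  have hη0 : 0 < η := hδ.trans_le hδη
  have hCB := CB_nonneg m
  have hm0 : (0 : ℝ) ≤ m := by positivity
  have h3 : ∀ u : Sp (m + 1),
      |devF (Pop_subl hh) u - m * Rop (devF hh) u| ≤ CB m * (η * δ) := by
    intro u
    exact Pop_linear hδ hδη hη hs hh hb u
  have hn : ‖devF hh‖ ≤ δ := by
    rw [ContinuousMap.norm_le _ hδ.le]
    intro u
    exact hb u u.norm_coe
  refine ⟨?_, ?_, h3⟩
  · refine (Pop_semiconvex (by linarith) he hs).add_norm ?_
    have := one_add_mul_le_pow (a := -η) (by linarith) m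
    have h4 : (1 + -η) ^ m = (1 - η) ^ m := by ring
    rw [h4] at this
    have : 0 ≤ (CB m + 1) * η := by positivity
    unfold C1
    linarith
  · intro u hu
    have h4 := h3 ⟨u, by simpa using hu⟩
    have h5 := (abs_Rop_le (devF hh) ⟨u, by simpa using hu⟩).trans hn
    rw [devF_apply] at h4
    simp only at h4
    have h6 : CB m * (η * δ) ≤ CB m * δ := by
      gcongr
      nlinarith
    rw [abs_le] at h4 h5 ⊢
    have h7 := mul_le_mul_of_nonneg_left h5.1 hm0
    have h8 := mul_le_mul_of_nonneg_left h5.2 hm0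
    unfold C1
    constructor <;> linarith

/-- The constant in the linearization of the second iterate of `Pop`. -/
def C2 (m : ℕ) : ℝ := CB m * C1 m ^ 2 + m * CB m

/-- The linearization of `Pop ∘ Pop` at the Euclidean norm is `m² R²`. -/
theorem Pop_Pop_linear {m : ℕ} [NeZero m] {h : Euc (m + 1) → ℝ} {η δ : ℝ} (hδ : 0 < δ)
    (hδη : δ ≤ η) (hη : C1 m * η ≤ 1 / 8) (hs : Subl (fun x => h x - (1 - η) * ‖x‖))
    (hh : Subl h) (he : ∀ x, h (-x) = h x) (hb : ∀ u, ‖u‖ = 1 → |h u - 1| ≤ δ)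
    (u : Sp (m + 1)) :
    |Pop (Pop h) u - 1 - (m : ℝ) ^ 2 * Rop (Rop (devF hh)) u| ≤ C2 m * (η * δ) := by
  have hη0 : 0 < η := hδ.trans_le hδη
  have hC := C1_ge_one m
  have hC0 : 0 < C1 m := by linarith
  have hm0 : (0 : ℝ) ≤ m := by positivity
  have hη' : η ≤ 1 / 8 := by nlinarith
  obtain ⟨a1, a2, a3⟩ := Pop_step hδ hδη hη' hs hh he hb
  obtain ⟨-, -, b3⟩ := Pop_step (mul_pos hC0 hδ) (by gcongr : C1 m * δ ≤ C1 m * η) hη a1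
    (Pop_subl hh) (Pop_even h) a2
  have c1 := b3 u
  rw [devF_apply] at c1
  have c2 := abs_Rop_le (devF (Pop_subl hh) - (m : ℝ) • Rop (devF hh)) u
  have c3 : ‖devF (Pop_subl hh) - (m : ℝ) • Rop (devF hh)‖ ≤ CB m * (η * δ) := by
    rw [ContinuousMap.norm_le _ (mul_nonneg (CB_nonneg m) (by positivity))]
    exact a3
  have c4 := c2.trans c3
  rw [map_sub, map_smul] at c4
  simp only [ContinuousMap.sub_apply, ContinuousMap.smul_apply, smul_eq_mul] at c4
  rw [abs_le] at c1 c4 ⊢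
  have h7 := mul_le_mul_of_nonneg_left c4.1 hm0
  have h8 := mul_le_mul_of_nonneg_left c4.2 hm0
  unfold C2
  constructor <;> nlinarith

/-! ### From the `C²` hypothesis to semiconvexity -/

/-- Polar coordinates on the sphere around a pole `z`. -/
theorem exists_polar {m : ℕ} [NeZero m] {z x : Euc (m + 1)} (hz : ‖z‖ = 1) (hx : ‖x‖ = 1) :
    ∃ (b : Euc (m + 1)) (θ : ℝ), ‖b‖ = 1 ∧ ⟪z, b⟫ = 0 ∧ 0 ≤ θ ∧ θ ≤ Real.pi ∧
      Real.cos θ = ⟪x, z⟫ ∧ x = Real.cos θ • z + Real.sin θ • b := by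
  obtain ⟨y, hy1, hy2⟩ : ∃ y : Euc m, ‖y‖ = 1 ∧ pr z x = ‖pr z x‖ • y := by
    by_cases h : pr z x = 0
    · refine ⟨EuclideanSpace.single 0 1, by simp, by simp [h]⟩
    · exact eq_smul_unit h
  have h1 := norm_sq_decomp hz x
  rw [hx] at h1
  have h2 : |⟪x, z⟫| ≤ 1 := by
    simpa [hx, hz] using abs_real_inner_le_norm x z
  have hc : Real.cos (Real.arccos ⟪x, z⟫) = ⟪x, z⟫ :=
    Real.cos_arccos (abs_le.1 h2).1 (abs_le.1 h2).2
  have hs : Real.sin (Real.arccos ⟪x, z⟫) = ‖pr z x‖ := by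
    rw [Real.sin_arccos, show (1 : ℝ) - ⟪x, z⟫ ^ 2 = ‖pr z x‖ ^ 2 by linarith,
      Real.sqrt_sq (norm_nonneg _)]
  refine ⟨emb z y, Real.arccos ⟪x, z⟫, by rw [norm_emb, hy1], inner_emb_left hz y,
    Real.arccos_nonneg _, Real.arccos_le_pi _, hc, ?_⟩
  rw [hc, hs, ← map_smul, ← hy2]
  exact decomp hz x

/-- Euler's identity for a positively homogeneous function. -/
theorem euler_id {n : ℕ} {g : Euc n → ℝ} (hg : ∀ t : ℝ, 0 ≤ t → ∀ x, g (t • x) = t * g x)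
    {x : Euc n} (hd : DifferentiableAt ℝ g x) : fderiv ℝ g x x = g x := by
  have h1 : HasDerivAt (fun t : ℝ => t • x) x 1 := by
    simpa using (hasDerivAt_id (1 : ℝ)).smul_const x
  have h2 : HasDerivAt (fun t : ℝ => g (t • x)) (fderiv ℝ g x x) 1 := by
    have : HasFDerivAt g (fderiv ℝ g x) ((1 : ℝ) • x) := by
      rw [one_smul]; exact hd.hasFDerivAt
    exact this.comp_hasDerivAt (1 : ℝ) h1
  have h3 : HasDerivAt (fun t : ℝ => g (t • x)) (g x) 1 := by
    have h4 : HasDerivAt (fun t : ℝ => t * g x) (g x) 1 := by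
      simpa using (hasDerivAt_id (1 : ℝ)).mul_const (g x)
    refine h4.congr_of_eventuallyEq ?_
    filter_upwards [eventually_gt_nhds (zero_lt_one)] with t ht
    exact hg t ht.le x
  exact h2.unique h3

/-- A bound on the Hessian on the sphere gives the supporting hyperplane inequality for
`g + ε‖·‖`. -/
theorem support_ineq {m : ℕ} [NeZero m] {g : Euc (m + 1) → ℝ} {ε : ℝ}
    (hg : ∀ t : ℝ, 0 ≤ t → ∀ x, g (t • x) = t * g x)
    (hC : ∀ x, x ≠ 0 → ContDiffAt ℝ 2 g x)
    (hD : ∀ x, ‖x‖ = 1 → ‖iteratedFDeriv ℝ 2 g x‖ ≤ ε)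
    {z x : Euc (m + 1)} (hz : ‖z‖ = 1) (hx : ‖x‖ = 1) :
    fderiv ℝ g z x + ε * ⟪x, z⟫ ≤ g x + ε := by
  obtain ⟨b, θ, hb, hzb, hθ0, hθ1, hc, hxe⟩ := exists_polar hz hx
  set γ : ℝ → Euc (m + 1) := fun s => Real.cos s • z + Real.sin s • b with hγ
  set γ' : ℝ → Euc (m + 1) := fun s => -Real.sin s • z + Real.cos s • b with hγ'
  have hγn : ∀ s, ‖γ s‖ = 1 := by
    intro s
    have h1 := norm_add_sq_real (Real.cos s • z) (Real.sin s • b)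
    rw [inner_smul_left, inner_smul_right, hzb, norm_smul, norm_smul, hz, hb] at h1
    have h2 : ‖γ s‖ ^ 2 = 1 := by
      rw [hγ]; simp only; rw [h1]
      simp [Real.cos_sq_add_sin_sq]
    nlinarith [norm_nonneg (γ s)]
  have hγn' : ∀ s, ‖γ' s‖ = 1 := by
    intro s
    have h1 := norm_add_sq_real (-Real.sin s • z) (Real.cos s • b)
    rw [inner_smul_left, inner_smul_right, hzb, norm_smul, norm_smul, hz, hb] at h1
    have h2 : ‖γ' s‖ ^ 2 = 1 := by
      rw [hγ']; simp only; rw [h1]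
      simp [Real.sin_sq_add_cos_sq]
    nlinarith [norm_nonneg (γ' s)]
  have hγ0 : ∀ s, γ s ≠ 0 := fun s h => by
    have := hγn s; rw [h, norm_zero] at this; norm_num at this
  have d1 : ∀ s, HasDerivAt γ (γ' s) s := fun s =>
    ((Real.hasDerivAt_cos s).smul_const z).add ((Real.hasDerivAt_sin s).smul_const b)
  have d2 : ∀ s, HasDerivAt γ' (-γ s) s := fun s => by
    have := ((Real.hasDerivAt_sin s).neg.smul_const z).add
      ((Real.hasDerivAt_cos s).smul_const b)
    have h : -γ s = -Real.cos s • z + -Real.sin s • b := by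
      simp only [hγ, neg_add, neg_smul]
    rw [h]
    exact this
  have hgd : ∀ s, DifferentiableAt ℝ g (γ s) := fun s =>
    (hC _ (hγ0 s)).differentiableAt (by norm_num)
  have hgd' : ∀ s, DifferentiableAt ℝ (fderiv ℝ g) (γ s) := fun s =>
    ((hC _ (hγ0 s)).fderiv_right (m := 1) (by norm_num)).differentiableAt (by norm_num)
  have d3 : ∀ s, HasDerivAt (fun s => g (γ s)) (fderiv ℝ g (γ s) (γ' s)) s := fun s =>
    (hgd s).hasFDerivAt.comp_hasDerivAt s (d1 s)
  have d4 : ∀ s, HasDerivAt (fun s => fderiv ℝ g (γ s) (γ' s))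
      (fderiv ℝ (fderiv ℝ g) (γ s) (γ' s) (γ' s) + fderiv ℝ g (γ s) (-γ s)) s := fun s =>
    ((hgd' s).hasFDerivAt.comp_hasDerivAt s (d1 s)).clm_apply (d2 s)
  set B : ℝ → ℝ := fun s => fderiv ℝ g (γ s) (γ' s) * Real.sin (θ - s) +
    (g (γ s) + ε) * Real.cos (θ - s) with hB
  have e1 : ∀ s, HasDerivAt (fun s => Real.sin (θ - s)) (-Real.cos (θ - s)) s := fun s => by
    simpa using ((hasDerivAt_id s).const_sub θ).sin
  have e2 : ∀ s, HasDerivAt (fun s => Real.cos (θ - s)) (Real.sin (θ - s)) s := fun s => by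
    simpa using ((hasDerivAt_id s).const_sub θ).cos
  have hBd : ∀ s, HasDerivAt B
      ((fderiv ℝ (fderiv ℝ g) (γ s) (γ' s) (γ' s) + ε) * Real.sin (θ - s)) s := fun s => by
    have := ((d4 s).mul (e1 s)).add (((d3 s).add_const ε).mul (e2 s))
    rw [map_neg, euler_id hg (hgd s)] at this
    refine this.congr_deriv ?_
    ring
  have hH : ∀ s, 0 ≤ fderiv ℝ (fderiv ℝ g) (γ s) (γ' s) (γ' s) + ε := by
    intro s
    have h1 := (iteratedFDeriv ℝ 2 g (γ s)).le_opNorm ![γ' s, γ' s]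
    rw [iteratedFDeriv_two_apply] at h1
    simp only [Fin.prod_univ_two, Matrix.cons_val_zero, Matrix.cons_val_one, hγn', mul_one,
      Real.norm_eq_abs] at h1
    have h2 := hD _ (hγn s)
    have h3 := (abs_le.1 (h1.trans h2)).1
    linarith
  have hmono : MonotoneOn B (Icc 0 θ) := by
    refine monotoneOn_of_deriv_nonneg (convex_Icc _ _)
      (fun s _ => (hBd s).continuousAt.continuousWithinAt)
      (fun s _ => (hBd s).differentiableAt.differentiableWithinAt) ?_
    intro s hs
    rw [interior_Icc] at hs
    rw [(hBd s).deriv]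
    exact mul_nonneg (hH s) (Real.sin_nonneg_of_nonneg_of_le_pi (by linarith [hs.2])
      (by linarith [hs.1]))
  have hfin := hmono (left_mem_Icc.2 hθ0) (right_mem_Icc.2 hθ0) hθ0
  have hg0 : γ 0 = z := by simp [hγ]
  have hg0' : γ' 0 = b := by simp [hγ']
  have hgθ : γ θ = x := hxe.symm
  simp only [hB, hg0, hg0', hgθ, sub_self, sub_zero, Real.sin_zero, Real.cos_zero, mul_zero,
    zero_add, mul_one] at hfin
  have hz0 : z ≠ 0 := fun h => by rw [h, norm_zero] at hz; norm_num at hz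
  have hez := euler_id hg ((hC z hz0).differentiableAt (by norm_num))
  have hlin : fderiv ℝ g z x = Real.cos θ * g z + Real.sin θ * fderiv ℝ g z b := by
    conv_lhs => rw [hxe]
    rw [map_add, map_smul, map_smul, hez, smul_eq_mul, smul_eq_mul]
  rw [hlin, ← hc]
  linarith

/-- A homogeneous function whose Hessian is bounded by `ε` on the sphere becomes sublinear
after adding `ε‖·‖`. -/
theorem subl_of_hess {m : ℕ} [NeZero m] {g : Euc (m + 1) → ℝ} {ε : ℝ}
    (hg : ∀ t : ℝ, 0 ≤ t → ∀ x, g (t • x) = t * g x)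
    (hC : ∀ x, x ≠ 0 → ContDiffAt ℝ 2 g x)
    (hD : ∀ x, ‖x‖ = 1 → ‖iteratedFDeriv ℝ 2 g x‖ ≤ ε) :
    Subl (fun x => g x + ε * ‖x‖) := by
  have hg0 : g 0 = 0 := by simpa using hg 0 le_rfl 0
  have key : ∀ z x : Euc (m + 1), ‖z‖ = 1 →
      fderiv ℝ g z x + ε * ⟪x, z⟫ ≤ g x + ε * ‖x‖ := by
    intro z x hz
    by_cases hx : x = 0
    · simp [hx, hg0]
    · obtain ⟨u, hu, hxu⟩ := eq_smul_unit hx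
      have h1 := support_ineq hg hC hD hz hu
      have h2 := mul_le_mul_of_nonneg_left h1 (norm_nonneg x)
      have h3 : fderiv ℝ g z x = ‖x‖ * fderiv ℝ g z u := by
        conv_lhs => rw [hxu]
        rw [map_smul, smul_eq_mul]
      have h4 : ⟪x, z⟫ = ‖x‖ * ⟪u, z⟫ := by
        conv_lhs => rw [hxu]
        rw [inner_smul_left]; simp
      have h5 : g x = ‖x‖ * g u := by
        conv_lhs => rw [hxu]
        rw [hg _ (norm_nonneg _)]
      rw [h3, h4, h5]
      linarith
  have keyeq : ∀ z x : Euc (m + 1), ‖z‖ = 1 → x = ‖x‖ • z →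
      fderiv ℝ g z x + ε * ⟪x, z⟫ = g x + ε * ‖x‖ := by
    intro z x hz hx
    have hz0 : z ≠ 0 := fun h => by rw [h, norm_zero] at hz; norm_num at hz
    have h3 : fderiv ℝ g z x = ‖x‖ * g z := by
      conv_lhs => rw [hx]
      rw [map_smul, smul_eq_mul, euler_id hg ((hC z hz0).differentiableAt (by norm_num))]
    have h4 : ⟪x, z⟫ = ‖x‖ := by
      conv_lhs => rw [hx]
      rw [inner_smul_left, real_inner_self_eq_norm_sq, hz]; simp
    have h5 : g x = ‖x‖ * g z := by
      conv_lhs => rw [hx]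
      rw [hg _ (norm_nonneg _)]
    rw [h3, h4, h5]
  refine ⟨fun t ht x => ?_, fun x y => ?_⟩
  · simp only [hg t ht, norm_smul, Real.norm_eq_abs, abs_of_nonneg ht]; ring
  · by_cases hxy : x + y = 0
    · rw [hxy, hg0, norm_zero]
      by_cases hx : x = 0
      · have hy : y = 0 := by simpa [hx] using hxy
        simp [hx, hy, hg0]
      · obtain ⟨u, hu, hxu⟩ := eq_smul_unit hx
        have h1 := key u x hu
        have h2 := key u y hu
        have h3 : y = -x := (neg_eq_of_add_eq_zero_right hxy).symm
        rw [h3] at h2 ⊢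
        rw [map_neg, inner_neg_left] at h2
        linarith
    · obtain ⟨u, hu, hxu⟩ := eq_smul_unit hxy
      have h0 := keyeq u (x + y) hu hxu
      have h1 := key u x hu
      have h2 := key u y hu
      rw [map_add, inner_add_left] at h0
      linarith

theorem homExt_of_hom {n : ℕ} {h : Euc n → ℝ} (hh : Subl h) : homExt h = h := by
  funext x
  by_cases hx : x = 0
  · simp [homExt, hx, hh.zero]
  · rw [homExt, hh.smul _ (inv_nonneg.2 (norm_nonneg _)), mul_inv_cancel_left₀]
    exact norm_ne_zero_iff.2 hx

theorem homExt_sub_one {n : ℕ} {h : Euc n → ℝ} (hh : Subl h) :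
    homExt (fun x => h x - 1) = fun x => h x - ‖x‖ := by
  funext x
  have := congrFun (homExt_of_hom hh) x
  simp only [homExt] at this ⊢
  rw [mul_sub, this, mul_one]

/-- Every pointwise term is bounded by the `C²` norm. -/
theorem le_C2Norm {n : ℕ} {f : Euc n → ℝ} (hC : ∀ x, x ≠ 0 → ContDiffAt ℝ 2 (homExt f) x)
    {x : Euc n} (hx : ‖x‖ = 1) :
    |homExt f x| ≤ C2Norm f ∧ ‖iteratedFDeriv ℝ 2 (homExt f) x‖ ≤ C2Norm f := by
  have hcont : Continuous (fun x : Sp n => |homExt f (x : Euc n)| +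
      ‖fderiv ℝ (homExt f) (x : Euc n)‖ + ‖iteratedFDeriv ℝ 2 (homExt f) (x : Euc n)‖) := by
    rw [continuous_iff_continuousAt]
    intro x
    have hx0 : (x : Euc n) ≠ 0 := fun h => by
      have := Sp.norm_coe x; rw [h, norm_zero] at this; norm_num at this
    have hc := hC x hx0
    have h1 : ContinuousAt (fun y : Sp n => homExt f (y : Euc n)) x :=
      ContinuousAt.comp (f := ((↑) : Sp n → Euc n)) hc.continuousAt
        continuous_subtype_val.continuousAt
    have h2 : ContinuousAt (fun y : Sp n => fderiv ℝ (homExt f) (y : Euc n)) x :=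
      ContinuousAt.comp (f := ((↑) : Sp n → Euc n))
        (hc.fderiv_right (m := 0) (by norm_num)).continuousAt
        continuous_subtype_val.continuousAt
    have h3 : ContinuousAt (fun y : Sp n => iteratedFDeriv ℝ 2 (homExt f) (y : Euc n)) x :=
      ContinuousAt.comp (f := ((↑) : Sp n → Euc n))
        (hc.iteratedFDeriv_right (m := 0) (i := 2) (by norm_num)).continuousAt
        continuous_subtype_val.continuousAt
    exact (h1.abs.add h2.norm).add h3.norm
  have hb := (isCompact_range hcont).bddAbove
  have h1 := le_ciSup hb (⟨x, by simpa using hx⟩ : Sp n)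
  have h2 : |homExt f x| + ‖fderiv ℝ (homExt f) x‖ + ‖iteratedFDeriv ℝ 2 (homExt f) x‖ ≤
    C2Norm f := h1
  have h3 := norm_nonneg (fderiv ℝ (homExt f) x)
  have h4 := norm_nonneg (iteratedFDeriv ℝ 2 (homExt f) x)
  have h5 := abs_nonneg (homExt f x)
  constructor <;> linarith

/-- The `C²` hypothesis in the form used below: closeness to `1` on the sphere together with
semiconvexity. -/
theorem C2_close {m : ℕ} [NeZero m] {K : Set (Euc (m + 1))} (hK : CC K) (hC2 : C2Sph (suppFn K))
    {ε : ℝ} (φ : Euc (m + 1) ≃ₗ[ℝ] Euc (m + 1))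
    (hε : C2Norm (fun x => suppFn (⇑φ '' K) x - 1) ≤ ε) :
    Subl (fun x => suppFn (⇑φ '' K) x - (1 - ε) * ‖x‖) ∧
      ∀ u, ‖u‖ = 1 → |suppFn (⇑φ '' K) u - 1| ≤ ε := by
  have hφK : CC (⇑φ '' K) := hK.image (φ : Euc (m + 1) →ₗ[ℝ] Euc (m + 1))
  have hex := homExt_sub_one hφK.subl
  have hC : ∀ x, x ≠ 0 → ContDiffAt ℝ 2 (fun x => suppFn (⇑φ '' K) x - ‖x‖) x := by
    intro x hx
    refine ContDiffAt.sub ?_ (contDiffAt_norm ℝ hx)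
    set A := LinearMap.adjoint (φ : Euc (m + 1) →ₗ[ℝ] Euc (m + 1)) with hA
    have h1 : suppFn (⇑φ '' K) = fun x => suppFn K (A.toContinuousLinearMap x) := by
      funext y
      exact suppFn_image (φ : Euc (m + 1) →ₗ[ℝ] Euc (m + 1)) y
    rw [h1]
    have hAx : A x ≠ 0 := by
      intro h
      apply hx
      refine ext_inner_left ℝ fun v => ?_
      have h2 : ⟪φ.symm v, A x⟫ = ⟪v, x⟫ := by
        rw [hA, LinearMap.adjoint_inner_right]; simp
      rw [← h2, h, inner_zero_right, inner_zero_right]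
    have h3 : ContDiffAt ℝ 2 (suppFn K) (A x) := by
      rw [C2Sph, homExt_of_hom hK.subl] at hC2
      exact hC2.contDiffAt (isOpen_compl_singleton.mem_nhds hAx)
    exact ContDiffAt.comp (g := suppFn K) x h3 A.toContinuousLinearMap.contDiff.contDiffAt
  have hC' : ∀ x, x ≠ 0 → ContDiffAt ℝ 2 (homExt (fun x => suppFn (⇑φ '' K) x - 1)) x := by
    rw [hex]; exact hC
  constructor
  · have := subl_of_hess (g := fun x => suppFn (⇑φ '' K) x - ‖x‖) (ε := ε) ?_ hC ?_
    · convert this using 2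
      ring
    · intro t ht x
      simp only [hφK.subl.smul t ht, norm_smul, Real.norm_eq_abs, abs_of_nonneg ht]; ring
    · intro x hx
      have := (le_C2Norm hC' hx).2.trans hε
      rwa [hex] at this
  · intro u hu
    have := (le_C2Norm hC' hu).1.trans hε
    rw [hex] at this
    simpa [hu] using this

/-! ### One improvement step -/

/-- The triangle defect of the Euclidean norm transforms well under linear maps close to
isometries. -/
theorem subl_norm_comp {n : ℕ} (A : Euc n →ₗ[ℝ] Euc n) {α β : ℝ} (hα : 0 < α) (hβ : 0 < β)
    (h1 : ∀ x, α * ‖x‖ ≤ ‖A x‖) (h2 : ∀ x, ‖A x‖ ≤ β * ‖x‖) :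
    Subl (fun x => ‖A x‖ - α ^ 2 / β * ‖x‖) := by
  refine ⟨fun t ht x => ?_, fun x y => ?_⟩
  · simp only [map_smul, norm_smul, Real.norm_eq_abs, abs_of_nonneg ht]; ring
  by_cases hx : x = 0
  · simp [hx]
  by_cases hy : y = 0
  · simp [hy]
  have hx' := norm_pos_iff.2 hx
  have hy' := norm_pos_iff.2 hy
  have ha : 0 < ‖A x‖ := (mul_pos hα hx').trans_le (h1 x)
  have hb : 0 < ‖A y‖ := (mul_pos hα hy').trans_le (h1 y)
  have e1 := norm_add_sq_real x y
  have e2 := norm_add_sq_real (A x) (A y)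
  rw [← map_add] at e2
  have e3 := norm_sub_sq_real (‖A y‖ • A x) (‖A x‖ • A y)
  have e4 := norm_sub_sq_real (‖A y‖ • x) (‖A x‖ • y)
  rw [inner_smul_left, inner_smul_right, norm_smul, norm_smul, norm_norm, norm_norm] at e3 e4
  simp only [conj_trivial] at e3 e4
  rw [← map_smul, ← map_smul, ← map_sub] at e3
  have e5 := h1 (‖A y‖ • x - ‖A x‖ • y)
  have e6 : α ^ 2 * ‖‖A y‖ • x - ‖A x‖ • y‖ ^ 2 ≤ ‖A (‖A y‖ • x - ‖A x‖ • y)‖ ^ 2 := by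
    rw [← mul_pow]; gcongr
  rw [e3, e4] at e6
  have e7 : α ^ 2 * (‖x‖ * ‖y‖ - ⟪x, y⟫) ≤ ‖A x‖ * ‖A y‖ - ⟪A x, A y⟫ := by
    have hab := mul_pos ha hb
    refine le_of_mul_le_mul_left (a := ‖A x‖ * ‖A y‖) ?_ hab
    have : 0 ≤ α ^ 2 * (‖A y‖ * ‖x‖ - ‖A x‖ * ‖y‖) ^ 2 := by positivity
    nlinarith
  set D := ‖x‖ + ‖y‖ - ‖x + y‖ with hD
  set S := ‖x‖ + ‖y‖ + ‖x + y‖ with hS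
  set D' := ‖A x‖ + ‖A y‖ - ‖A (x + y)‖ with hD'
  set S' := ‖A x‖ + ‖A y‖ + ‖A (x + y)‖ with hS'
  have hD'0 : 0 ≤ D' := by
    have := norm_add_le (A x) (A y)
    rw [← map_add] at this
    linarith
  have hSp : 0 < S := by positivity
  have f1 : D * S = 2 * (‖x‖ * ‖y‖ - ⟪x, y⟫) := by
    rw [hD, hS]; linear_combination -e1
  have f2 : D' * S' = 2 * (‖A x‖ * ‖A y‖ - ⟪A x, A y⟫) := by
    rw [hD', hS']; linear_combination -e2
  have f3 : S' ≤ β * S := by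
    rw [hS', hS]
    linarith [h2 x, h2 y, h2 (x + y)]
  have f4 : α ^ 2 * D ≤ D' * β := by
    refine le_of_mul_le_mul_right (a := S) ?_ hSp
    have := mul_le_mul_of_nonneg_left f3 hD'0
    nlinarith
  have f5 : α ^ 2 / β * D ≤ D' := by
    rw [div_mul_eq_mul_div, div_le_iff₀ hβ]; exact f4
  rw [hD, hD'] at f5
  linarith

/-- A symmetric operator is bounded by its quadratic form. -/
theorem norm_le_of_quad {n : ℕ} {M : Euc n →ₗ[ℝ] Euc n} (hM : M.IsSymmetric) {k : ℝ}
    (hq : ∀ u, ‖u‖ = 1 → |⟪u, M u⟫| ≤ k) (x : Euc n) : ‖M x‖ ≤ k * ‖x‖ := by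
  have hq' : ∀ x, |⟪x, M x⟫| ≤ k * ‖x‖ ^ 2 := by
    intro x
    by_cases hx : x = 0
    · simp [hx]
    obtain ⟨u, hu, hxu⟩ := eq_smul_unit hx
    have h1 : ⟪x, M x⟫ = ‖x‖ ^ 2 * ⟪u, M u⟫ := by
      conv_lhs => rw [hxu]
      rw [map_smul, inner_smul_left, inner_smul_right]
      simp only [conj_trivial]; ring
    rw [h1, abs_mul, abs_of_nonneg (sq_nonneg _), mul_comm]
    exact mul_le_mul_of_nonneg_right (hq u hu) (sq_nonneg _)
  have key : ∀ u v : Euc n, ‖u‖ = 1 → ‖v‖ = 1 → ⟪v, M u⟫ ≤ k := by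
    intro u v hu hv
    have h1 := (abs_le.1 (hq' (v + u))).2
    have h2 := (abs_le.1 (hq' (v - u))).1
    have h3 := parallelogram_law_with_norm ℝ v u
    have h4 : ⟪u, M v⟫ = ⟪v, M u⟫ := by
      rw [← hM u v, real_inner_comm]
    simp only [map_add, map_sub, inner_add_left, inner_add_right, inner_sub_left,
      inner_sub_right] at h1 h2
    rw [hu, hv] at h3
    have h5 : k * ‖v + u‖ ^ 2 + k * ‖v - u‖ ^ 2 = 4 * k := by
      rw [← mul_add, sq, sq]
      rw [sq, sq] at h3
      rw [h3]
      ring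
    linarith
  by_cases hx : x = 0
  · simp [hx]
  obtain ⟨u, hu, hxu⟩ := eq_smul_unit hx
  have h1 : ‖M x‖ = ‖x‖ * ‖M u‖ := by
    conv_lhs => rw [hxu]
    rw [map_smul, norm_smul, norm_norm]
  have h2 : ‖M u‖ ≤ k := by
    by_cases h0 : M u = 0
    · rw [h0, norm_zero]
      exact (abs_nonneg _).trans (hq u hu)
    · obtain ⟨v, hv, hvu⟩ := eq_smul_unit h0
      have := key u v hu hv
      rw [hvu, inner_smul_right, real_inner_self_eq_norm_sq, hv] at this
      simpa using this
  rw [h1, mul_comm]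
  exact mul_le_mul_of_nonneg_right h2 (norm_nonneg _)

theorem norm_le_of_mem_Wb {n : ℕ} {h : Euc n → ℝ} {c : ℝ} (hc : 0 ≤ c)
    (hb : ∀ u, ‖u‖ = 1 → h u ≤ c) {p : Euc n} (hp : p ∈ Wb h) : ‖p‖ ≤ c := by
  by_cases h0 : p = 0
  · rw [h0, norm_zero]; exact hc
  · obtain ⟨v, hv, hvp⟩ := eq_smul_unit h0
    have h1 := (hp v).trans (hb v hv)
    rw [hvp, inner_smul_left, real_inner_self_eq_norm_sq, hv] at h1
    simpa using h1

/-- First-order expansion of a support function close to the norm, via subgradients. -/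
theorem first_order {n : ℕ} {h : Euc n → ℝ} (hh : Subl h) {δ : ℝ} (hδ : 0 < δ)
    (hδ1 : δ ≤ 1 / 832) (hb : ∀ u, ‖u‖ = 1 → |h u - 1| ≤ δ) {M : Euc n →ₗ[ℝ] Euc n}
    (hM : ∀ x, ‖M x‖ ≤ 2 * δ * ‖x‖) {x : Euc n} (hx : ‖x‖ = 1) :
    |h (x - M x) - h x + ⟪x, M x⟫| ≤ δ / 4 := by
  have hle : ∀ u, ‖u‖ = 1 → h u ≤ 1 + δ := fun u hu => by linarith [(abs_le.1 (hb u hu)).2]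
  have hMx := hM x
  rw [hx, mul_one] at hMx
  have hwb : ∀ p ∈ Wb h, ‖p‖ ≤ 1 + δ := fun p hp => norm_le_of_mem_Wb (by linarith) hle hp
  -- vectors of `Wb h` almost supporting in direction `x` are close to `x`
  have close : ∀ p ∈ Wb h, 1 - 5 * δ ≤ ⟪p, x⟫ → |⟪p, M x⟫ - ⟪x, M x⟫| ≤ δ / 4 := by
    intro p hp hpx
    have h1 := norm_sub_sq_real p x
    rw [hx] at h1
    have h2 := hwb p hp
    have h3 : ‖p - x‖ ≤ 1 / 8 := by
      have h4 : ‖p - x‖ ^ 2 ≤ (1 / 8) ^ 2 := by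
        have : ‖p‖ ^ 2 ≤ (1 + δ) ^ 2 := by gcongr
        nlinarith
      exact le_of_sq_le_sq h4 (by norm_num)
    rw [← inner_sub_left]
    refine (abs_real_inner_le_norm _ _).trans ?_
    have := mul_le_mul h3 hMx (norm_nonneg _) (by norm_num)
    linarith
  obtain ⟨p, hp, hpx⟩ := hh.exists_supp x
  obtain ⟨q, hq, hqy⟩ := hh.exists_supp (x - M x)
  have hx1 := abs_le.1 (hb x hx)
  have c1 := abs_le.1 (close p hp (by rw [hpx]; linarith [hx1.1]))
  have hy : 1 - 2 * δ ≤ ‖x - M x‖ := by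
    have := norm_sub_norm_le x (M x)
    rw [hx] at this; linarith
  have hy0 : x - M x ≠ 0 := by
    rw [← norm_pos_iff]; linarith
  have hhy : (1 - δ) * ‖x - M x‖ ≤ h (x - M x) := by
    obtain ⟨v, hv, hvy⟩ := eq_smul_unit hy0
    have h1 := (abs_le.1 (hb v hv)).1
    have h2 : h (x - M x) = ‖x - M x‖ * h v := by
      conv_lhs => rw [hvy]
      rw [hh.smul _ (norm_nonneg _)]
    rw [h2, mul_comm]
    exact mul_le_mul_of_nonneg_left (by linarith) (norm_nonneg _)
  have hqM : |⟪q, M x⟫| ≤ (1 + δ) * (2 * δ) :=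
    (abs_real_inner_le_norm _ _).trans
      (mul_le_mul (hwb q hq) hMx (norm_nonneg _) (by linarith))
  have hqx : ⟪q, x⟫ = h (x - M x) + ⟪q, M x⟫ := by
    rw [← hqy, inner_sub_right]; ring
  have c2 := abs_le.1 (close q hq (by
    rw [hqx]
    have := (abs_le.1 hqM).1
    nlinarith))
  have l1 := hp (x - M x)
  rw [inner_sub_right, hpx] at l1
  have l2 := hq x
  rw [hqx] at l2
  rw [abs_le]
  constructor <;> linarith [c1.1, c1.2, c2.1, c2.2]

/-- The factor `c` in the equation `Pop (Pop h) = c h` is close to `1`. -/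
theorem scal_bound {a C c δ η p r : ℝ} (hc : 0 < c) (hδ : 0 ≤ δ) (hC : 0 ≤ C)
    (hηδ : η * δ ≤ δ) (h11 : (a ^ 2 + C + 2) * δ ≤ 1)
    (h1 : -(C * (η * δ)) ≤ c * (1 + p) - 1 - a ^ 2 * r ∧
      c * (1 + p) - 1 - a ^ 2 * r ≤ C * (η * δ))
    (h2 : -δ ≤ r ∧ r ≤ δ) (h3 : -δ ≤ p ∧ p ≤ δ) : |c - 1| ≤ (a ^ 2 + C + 2) * δ := by
  have h4 : C * (η * δ) ≤ C * δ := mul_le_mul_of_nonneg_left hηδ hC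
  have h5 := mul_le_mul_of_nonneg_left h2.1 (sq_nonneg a)
  have h6 := mul_le_mul_of_nonneg_left h2.2 (sq_nonneg a)
  have h9 := mul_le_mul_of_nonneg_left h3.1 hc.le
  have h10 := mul_le_mul_of_nonneg_left h3.2 hc.le
  have h13 : 0 ≤ a ^ 2 * δ := by positivity
  have h14 : 0 ≤ C * δ := by positivity
  have h12 : c ≤ 2 := by
    by_contra hcon
    push Not at hcon
    nlinarith
  have h15 : c * δ ≤ 2 * δ := mul_le_mul_of_nonneg_right h12 hδ
  rw [abs_le]
  constructor <;> linarith

/-- A near-spherical solution of `Pop (Pop h) = c h` can be moved closer to the norm, by a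
definite factor, with a linear change of variables. -/
theorem improve {m : ℕ} [NeZero m] (hm : 2 ≤ m) : ∃ η₀ : ℝ, 0 < η₀ ∧
    ∀ (h : Euc (m + 1) → ℝ) (η δ c : ℝ), 0 < δ → δ ≤ η → η ≤ η₀ → 0 < c →
      Subl (fun x => h x - (1 - η) * ‖x‖) → Subl h → (∀ x, h (-x) = h x) →
      (∀ u, ‖u‖ = 1 → |h u - 1| ≤ δ) → (∀ x, Pop (Pop h) x = c * h x) →
      ∃ M : Euc (m + 1) →ₗ[ℝ] Euc (m + 1), (∀ x, ‖M x‖ ≤ 2 * δ * ‖x‖) ∧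
        ∀ u, ‖u‖ = 1 → |h (u - M u) - 1| ≤ δ / 2 := by
  obtain ⟨C, hC0, hC⟩ := spectral_stability hm
  have hC2 : 0 ≤ C2 m := by
    have := CB_nonneg m
    unfold C2; positivity
  have hC1 := C1_ge_one m
  set k : ℝ := (m : ℝ) ^ 2 + C2 m with hk
  have hk0 : 0 ≤ k := by positivity
  set C3 : ℝ := C * (k + 2 + C2 m) with hC3
  have hC30 : 0 ≤ C3 := by positivity
  set N : ℝ := 8 * C1 m + (k + 2) + 4 * C3 + 832 with hN
  have hN0 : 0 < N := by positivity
  refine ⟨1 / N, by positivity, ?_⟩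
  intro h η δ c hδ hδη hη hc hs hh he hb H
  have hη0 : 0 < η := hδ.trans_le hδη
  have hNη : N * η ≤ 1 := by
    rw [le_div_iff₀ hN0] at hη; linarith
  have g1 : C1 m * η ≤ 1 / 8 := by
    have : 0 ≤ ((k + 2) + 4 * C3 + 832) * η := by positivity
    rw [hN] at hNη; nlinarith
  have g2 : (k + 2) * η ≤ 1 := by
    have : 0 ≤ (8 * C1 m + 4 * C3 + 832) * η := by positivity
    rw [hN] at hNη; nlinarith
  have g3 : C3 * η ≤ 1 / 4 := by
    have : 0 ≤ (8 * C1 m + (k + 2) + 832) * η := by positivity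
    rw [hN] at hNη; nlinarith
  have g4 : η ≤ 1 / 832 := by
    have : 0 ≤ (8 * C1 m + (k + 2) + 4 * C3) * η := by positivity
    rw [hN] at hNη; nlinarith
  have hlin := Pop_Pop_linear hδ hδη g1 hs hh he hb
  set φ := devF hh with hφ
  have hφn : ‖φ‖ ≤ δ := by
    rw [ContinuousMap.norm_le _ hδ.le]
    intro u
    exact hb u u.norm_coe
  have hRR : ∀ u, |Rop (Rop φ) u| ≤ δ := by
    intro u
    refine (abs_Rop_le _ u).trans ?_
    rw [ContinuousMap.norm_le _ hδ.le]
    intro v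
    exact (abs_Rop_le φ v).trans hφn
  have hηδ : η * δ ≤ δ := by nlinarith
  have hcφ : ∀ u : Sp (m + 1), |c * (1 + φ u) - 1 - (m : ℝ) ^ 2 * Rop (Rop φ) u| ≤
      C2 m * (η * δ) := by
    intro u
    have := hlin u
    rw [H] at this
    rw [hφ, devF_apply]
    convert this using 4
    ring
  have hc1 : |c - 1| ≤ (k + 2) * δ := by
    have u : Sp (m + 1) := ⟨EuclideanSpace.single 0 1, by simp⟩
    have h1 := abs_le.1 (hcφ u)
    have h2 := abs_le.1 (hRR u)
    have h3 := abs_le.1 ((ContinuousMap.norm_coe_le_norm φ u).trans hφn)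
    exact scal_bound hc hδ.le hC2 hηδ (by nlinarith) h1 h2 h3
  obtain ⟨M, hMs, hM⟩ := hC φ (1 - c) ((k + 2 + C2 m) * (η * δ)) (by positivity)
    (fun x => by
      rw [hφ, devF_apply, devF_apply]
      have : ((-x : Sp (m + 1)) : Euc (m + 1)) = -(x : Euc (m + 1)) := rfl
      rw [this, he])
    (fun u => by
      have h1 := abs_le.1 (hcφ u)
      have h3 := (ContinuousMap.norm_coe_le_norm φ u).trans hφn
      rw [Real.norm_eq_abs] at h3
      have h4 : |(c - 1) * φ u| ≤ (k + 2) * (η * δ) := by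
        rw [abs_mul]
        calc |c - 1| * |φ u| ≤ ((k + 2) * δ) * δ :=
              mul_le_mul hc1 h3 (abs_nonneg _) (by positivity)
          _ ≤ (k + 2) * (η * δ) := by
              rw [mul_assoc]; gcongr
      have h5 := abs_le.1 h4
      rw [abs_le]
      constructor <;> linarith)
  have hM' : ∀ u, ‖u‖ = 1 → |h u - 1 - ⟪u, M u⟫| ≤ δ / 4 := by
    intro u hu
    refine (hM ⟨u, by simpa using hu⟩).trans ?_
    have : C * ((k + 2 + C2 m) * (η * δ)) = (C3 * η) * δ := by rw [hC3]; ring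
    rw [this]
    nlinarith
  have hMn : ∀ x, ‖M x‖ ≤ 2 * δ * ‖x‖ := by
    refine norm_le_of_quad hMs fun u hu => ?_
    have h1 := abs_le.1 (hM' u hu)
    have h2 := abs_le.1 (hb u hu)
    rw [abs_le]
    constructor <;> linarith [h1.1, h1.2, h2.1, h2.2]
  refine ⟨M, hMn, fun u hu => ?_⟩
  have h1 := abs_le.1 (first_order hh hδ (hδη.trans g4) hb hMn hu)
  have h2 := abs_le.1 (hM' u hu)
  rw [abs_le]
  constructor <;> linarith [h1.1, h1.2, h2.1, h2.2]

/-! ### Rigidity -/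

/-- The deviation of `h ∘ A` from `1` on the sphere, as a continuous function of `A`. -/
def devMap {n : ℕ} {h : Euc n → ℝ} (hh : Subl h) : C(Euc n →L[ℝ] Euc n, C(Sp n, ℝ)) :=
  ContinuousMap.curry
    ⟨fun p : (Euc n →L[ℝ] Euc n) × Sp n => h (p.1 (p.2 : Euc n)) - 1, by
      have := hh.continuous
      fun_prop⟩

theorem devMap_apply {n : ℕ} {h : Euc n → ℝ} (hh : Subl h) (A : Euc n →L[ℝ] Euc n) (u : Sp n) :
    devMap hh A u = h (A u) - 1 := rfl

theorem Subl.lower {n : ℕ} {h : Euc n → ℝ} (hh : Subl h) {c : ℝ}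
    (hc : ∀ u, ‖u‖ = 1 → c ≤ h u) (x : Euc n) : c * ‖x‖ ≤ h x := by
  by_cases hx : x = 0
  · simp [hx, hh.zero]
  · obtain ⟨u, hu, hxu⟩ := eq_smul_unit hx
    have h1 : h x = ‖x‖ * h u := by
      conv_lhs => rw [hxu]
      rw [hh.smul _ (norm_nonneg _)]
    rw [h1, mul_comm]
    exact mul_le_mul_of_nonneg_left (hc u hu) (norm_nonneg _)

/-- A linear map `A` for which `h ∘ A` is close to the norm is close to an isometry when `h`
is. -/
theorem near_isometry {n : ℕ} {h : Euc n → ℝ} (hh : Subl h) {ε : ℝ} (hε : 0 < ε)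
    (hε1 : ε ≤ 1 / 8) (hb : ∀ u, ‖u‖ = 1 → |h u - 1| ≤ ε) (A : Euc n →ₗ[ℝ] Euc n)
    (hA : ∀ u, ‖u‖ = 1 → |h (A u) - 1| ≤ ε) (x : Euc n) :
    (1 - 2 * ε) * ‖x‖ ≤ ‖A x‖ ∧ ‖A x‖ ≤ (1 + 3 * ε) * ‖x‖ := by
  have hup := hh.bound (C := 1 + ε) (fun u hu => by linarith [(abs_le.1 (hb u hu)).2])
  have hlo := hh.lower (c := 1 - ε) (fun u hu => by linarith [(abs_le.1 (hb u hu)).1])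
  have hAs := hh.comp A
  have hup' := hAs.bound (C := 1 + ε) (fun u hu => by linarith [(abs_le.1 (hA u hu)).2])
  have hlo' := hAs.lower (c := 1 - ε) (fun u hu => by linarith [(abs_le.1 (hA u hu)).1])
  have h1 := hup (A x)
  have h2 := hlo (A x)
  have h3 := hup' x
  have h4 := hlo' x
  have hx := norm_nonneg x
  have hAx := norm_nonneg (A x)
  constructor
  · refine le_of_mul_le_mul_left (a := 1 + ε) ?_ (by linarith)
    nlinarith [mul_nonneg hε.le hx, mul_nonneg (mul_nonneg hε.le hε.le) hx]
  · refine le_of_mul_le_mul_left (a := 1 - ε) ?_ (by linarith)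
    have : 0 ≤ ε * (1 - 3 * ε) * ‖x‖ :=
      mul_nonneg (mul_nonneg hε.le (by linarith)) hx
    nlinarith

/-- Rigidity: an even solution of `Pop (Pop h) = c h` which is close to the norm and
semiconvex is the norm up to a linear change of variables. -/
theorem rigidity {m : ℕ} [NeZero m] (hm : 2 ≤ m) : ∃ ε : ℝ, 0 < ε ∧
    ∀ (h : Euc (m + 1) → ℝ) (c : ℝ), 0 < c →
      Subl (fun x => h x - (1 - ε) * ‖x‖) → Subl h → (∀ x, h (-x) = h x) →
      (∀ u, ‖u‖ = 1 → |h u - 1| ≤ ε) → (∀ x, Pop (Pop h) x = c * h x) →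
      ∃ A : Euc (m + 1) ≃ₗ[ℝ] Euc (m + 1), ∀ x, h (A x) = ‖x‖ := by
  obtain ⟨η₀, hη₀, himp⟩ := improve hm
  refine ⟨min (1 / 16) (η₀ / 8), by positivity, ?_⟩
  set ε := min (1 / 16) (η₀ / 8) with hε
  have hε0 : 0 < ε := by positivity
  have hε1 : ε ≤ 1 / 16 := min_le_left _ _
  have hε2 : 8 * ε ≤ η₀ := by
    have := min_le_right (1 / 16 : ℝ) (η₀ / 8)
    rw [← hε] at this; linarith
  intro h c hc hs hh he hb H
  set F : (Euc (m + 1) →L[ℝ] Euc (m + 1)) → ℝ := fun A => ‖devMap hh A‖ with hF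
  have hFc : Continuous F := (devMap hh).continuous.norm
  have hFle : ∀ A d, 0 ≤ d → ((∀ u, ‖u‖ = 1 → |h (A u) - 1| ≤ d) ↔ F A ≤ d) := by
    intro A d hd
    rw [hF]
    simp only
    rw [ContinuousMap.norm_le _ hd]
    constructor
    · intro h1 u
      exact h1 u u.norm_coe
    · intro h1 u hu
      exact h1 ⟨u, by simpa using hu⟩
  obtain ⟨A, hAmem, hAmin⟩ :=
    (isCompact_closedBall (0 : Euc (m + 1) →L[ℝ] Euc (m + 1)) 2).exists_isMinOn
      ⟨0, by simp⟩ hFc.continuousOn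
  have hFA : F A ≤ ε := by
    have h1 : ContinuousLinearMap.id ℝ (Euc (m + 1)) ∈
        closedBall (0 : Euc (m + 1) →L[ℝ] Euc (m + 1)) 2 := by
      rw [mem_closedBall_zero_iff]
      exact ContinuousLinearMap.norm_id_le.trans (by norm_num)
    exact (hAmin h1).trans ((hFle _ ε hε0.le).1 hb)
  have hA := (hFle A ε hε0.le).2 hFA
  have hiso := near_isometry hh hε0 (by linarith) hb (A : Euc (m + 1) →ₗ[ℝ] Euc (m + 1)) hA
  have hinj : Function.Injective (A : Euc (m + 1) →ₗ[ℝ] Euc (m + 1)) := by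
    rw [injective_iff_map_eq_zero]
    intro x hx
    have := (hiso x).1
    rw [hx, norm_zero] at this
    by_contra hx0
    have := norm_pos_iff.2 hx0
    nlinarith
  set Ae := LinearEquiv.ofInjectiveEndo _ hinj with hAe
  have hAeA : ∀ x, Ae x = A x := fun x => rfl
  refine ⟨Ae, ?_⟩
  obtain ⟨c', hc', H'⟩ := Pop_Pop_comp hh Ae hc H
  have hhA : Subl (fun x => h (Ae x)) := hh.comp (A : Euc (m + 1) →ₗ[ℝ] Euc (m + 1))
  have hsA : Subl (fun x => h (Ae x) - (1 - 8 * ε) * ‖x‖) := by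
    have h1 := hs.comp (A : Euc (m + 1) →ₗ[ℝ] Euc (m + 1))
    have h2 := subl_norm_comp (A : Euc (m + 1) →ₗ[ℝ] Euc (m + 1)) (α := 1 - 2 * ε)
      (β := 1 + 3 * ε) (by linarith) (by linarith) (fun x => (hiso x).1) (fun x => (hiso x).2)
    have h3 := h1.sum (h2.const_mul (a := 1 - ε) (by linarith))
    have h4 : Subl (fun x => h (Ae x) -
        ((1 - ε) * ((1 - 2 * ε) ^ 2 / (1 + 3 * ε))) * ‖x‖) := by
      convert h3 using 2 with x
      rw [hAeA]
      simp only [ContinuousLinearMap.coe_coe]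
      ring
    refine h4.add_norm ?_
    rw [← mul_div_assoc, le_div_iff₀ (by linarith)]
    nlinarith [mul_pos hε0 hε0, mul_pos (mul_pos hε0 hε0) hε0]
  have hFnn : 0 ≤ F A := norm_nonneg _
  have hbA : ∀ u, ‖u‖ = 1 → |h (Ae u) - 1| ≤ F A := (hFle A _ hFnn).2 le_rfl
  rcases hFnn.eq_or_lt with h0 | hpos
  · intro x
    rw [← h0] at hbA
    by_cases hx : x = 0
    · simp [hx, hh.zero]
    · obtain ⟨u, hu, hxu⟩ := eq_smul_unit hx
      have h1 : h (Ae u) = 1 := by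
        have := abs_nonpos_iff.1 (hbA u hu)
        linarith
      have h2 := hhA.smul ‖x‖ (norm_nonneg x) u
      rw [← hxu] at h2
      rw [h2, h1, mul_one]
  · exfalso
    obtain ⟨M, hM1, hM2⟩ := himp (fun x => h (Ae x)) (8 * ε) (F A) c' hpos (by linarith) hε2 hc'
      hsA hhA (fun x => by rw [map_neg, he]) hbA H'
    set B : Euc (m + 1) →L[ℝ] Euc (m + 1) :=
      A.comp (ContinuousLinearMap.id ℝ _ - M.toContinuousLinearMap) with hB
    have hBapp : ∀ x, B x = Ae (x - M x) := fun x => rfl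
    have hBF : F B ≤ F A / 2 := by
      refine (hFle B _ (by linarith)).1 fun u hu => ?_
      rw [hBapp]
      exact hM2 u hu
    have hBmem : B ∈ closedBall (0 : Euc (m + 1) →L[ℝ] Euc (m + 1)) 2 := by
      rw [mem_closedBall_zero_iff]
      refine ContinuousLinearMap.opNorm_le_bound _ (by norm_num) fun x => ?_
      rw [hBapp]
      have h1 := (hiso (x - M x)).2
      have h2 := norm_sub_le x (M x)
      have h3 := hM1 x
      have hx := norm_nonneg x
      have h4 : 2 * F A * ‖x‖ ≤ 2 * ε * ‖x‖ := by gcongr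
      have h5 : ‖x - M x‖ ≤ (1 + 2 * ε) * ‖x‖ := by linarith
      calc ‖Ae (x - M x)‖ ≤ (1 + 3 * ε) * ‖x - M x‖ := h1
        _ ≤ (1 + 3 * ε) * ((1 + 2 * ε) * ‖x‖) :=
            mul_le_mul_of_nonneg_left h5 (by linarith)
        _ = ((1 + 3 * ε) * (1 + 2 * ε)) * ‖x‖ := by ring
        _ ≤ 2 * ‖x‖ := mul_le_mul_of_nonneg_right (by nlinarith) hx
    have h6 : F A ≤ F B := hAmin hBmem
    linarith

/-- For `n ≥ 3` there is `ε > 0` such that any convex body `K ⊆ ℝⁿ` with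
`C²` support function satisfying `Π²K = cK` for some `c > 0` and `‖h_{φK} - 1‖_{C²} ≤ ε` for
some `φ ∈ GLₙ(ℝ)` is an origin-centered ellipsoid. -/
theorem petty_local_uniqueness (n : ℕ) (hn : 3 ≤ n) :
    ∃ ε : ℝ, 0 < ε ∧
      ∀ K : Set (Euc n), IsConvexBody K → C2Sph (suppFn K) →
        (∃ c : ℝ, 0 < c ∧ projBody (projBody K) = c • K) →
        (∃ φ : Euc n ≃ₗ[ℝ] Euc n, C2Norm (fun x => suppFn (⇑φ '' K) x - 1) ≤ ε) →
        ∃ ψ : Euc n ≃ₗ[ℝ] Euc n, K = ⇑ψ '' closedBall (0 : Euc n) 1 := by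
  obtain ⟨m, rfl⟩ : ∃ m, n = m + 1 := ⟨n - 1, by omega⟩
  have hm : 2 ≤ m := by omega
  have : NeZero m := ⟨by omega⟩
  obtain ⟨ε, hε, hrig⟩ := rigidity hm
  refine ⟨ε, hε, ?_⟩
  rintro K ⟨hK1, hK2, hK3⟩ hC2 ⟨c, hc, hc2⟩ ⟨φ, hφ⟩
  have hK : CC K := ⟨hK1, hK2, hK3.mono interior_subset⟩
  have hφK : CC (⇑φ '' K) := hK.image (φ : Euc (m + 1) →ₗ[ℝ] Euc (m + 1))
  obtain ⟨hs, hb⟩ := C2_close hK hC2 φ hφ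
  obtain ⟨c₁, hc₁, H₁⟩ := Pop_of_projBody hK hc hc2
  obtain ⟨c₂, hc₂, H₂⟩ := Pop_Pop_comp hK.subl (invT φ).symm hc₁ H₁
  have hsupp : (fun x => suppFn K ((invT φ).symm x)) = suppFn (⇑φ '' K) := by
    funext x
    exact (suppFn_image (φ : Euc (m + 1) →ₗ[ℝ] Euc (m + 1)) x).symm
  have H₃ : ∀ x, Pop (Pop (suppFn (⇑φ '' K))) x = c₂ * suppFn (⇑φ '' K) x := by
    intro x
    have := H₂ x
    rw [hsupp] at this
    rw [this, ← hsupp]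
  have heven : ∀ x, suppFn (⇑φ '' K) (-x) = suppFn (⇑φ '' K) x := by
    intro x
    have h1 := H₃ (-x)
    rw [Pop_even, H₃ x] at h1
    exact (mul_left_cancel₀ hc₂.ne' h1).symm
  obtain ⟨A, hA⟩ := hrig _ c₂ hc₂ hs hφK.subl heven hb H₃
  have h4 : suppFn (⇑φ '' K) = fun x => ‖A.symm x‖ := by
    funext x
    rw [← hA, A.apply_symm_apply]
  have h5 : ⇑φ '' K = invT A '' closedBall (0 : Euc (m + 1)) 1 := by
    rw [← Wb_suppFn hφK, h4, Wb_comp (fun x => ‖x‖) A.symm, Wb_norm]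
    rfl
  refine ⟨(invT A).trans φ.symm, ?_⟩
  have h6 : K = ⇑φ.symm '' (⇑φ '' K) := by
    rw [image_image]; simp
  rw [h6, h5, image_image]
  rfl
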